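/- A sequence (μ̄_n)_n in 𝓜_Ω converges to μ̄ ∈ 𝓜_Ω with respect to the weak cut metric if and only if the random arrays A(μ̄_n) converge to A(μ̄) in distribution, i.e., for every k and all a_{ij}∈Ω, lim_n P[∀ i,j≤k: A_{ij}(μ̄_n)=a_{ij}] = P[∀ i,j≤k: A_{ij}(μ̄)=a_{ij}]. -/

import Mathlib

open MeasureTheory Set Filter Topology

noncomputable section

namespace Paper

/-- Lebesgue measure restricted to `[0,1)`, representing the unit interval. -/
def lam01 : Measure ℝ := volume.restrict (Set.Ico (0:ℝ) 1)

instance : IsProbabilityMeasure lam01 :=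
  ⟨by simp [lam01, Real.volume_Ico]⟩

variable (Ω : Type) [Fintype Ω]

/-- The simplex `P(Ω) ⊆ ℝ^Ω` of probability vectors. -/
def simplex : Set (Ω → ℝ) := {p | (∀ ω, 0 ≤ p ω) ∧ ∑ ω, p ω = 1}

/-- `Σ_Ω = L¹([0,1), P(Ω))`: elements of `L¹([0,1), ℝ^Ω)` taking values in the simplex a.e. -/
def SigmaSp := {f : MeasureTheory.Lp (Ω → ℝ) 1 lam01 // ∀ᵐ x ∂lam01, f x ∈ simplex Ω}

instance : TopologicalSpace (SigmaSp Ω) := by unfold SigmaSp; infer_instance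
instance : MeasurableSpace (SigmaSp Ω) := borel _
instance : BorelSpace (SigmaSp Ω) := ⟨rfl⟩

/-- Evaluation of (a representative of) an element of `Σ_Ω`. -/
def ev (f : SigmaSp Ω) (x : ℝ) : Ω → ℝ := f.1 x

/-- Probability measures on `Σ_Ω`. -/
abbrev PM := ProbabilityMeasure (SigmaSp Ω)

/-- `γ` is a coupling of `μ` and `ν`. -/
def IsCoupling (μ ν : PM Ω) (γ : Measure (SigmaSp Ω × SigmaSp Ω)) : Prop :=
  γ.map Prod.fst = (μ : Measure (SigmaSp Ω)) ∧ γ.map Prod.snd = (ν : Measure (SigmaSp Ω))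

/-- Total variation norm of a vector in `ℝ^Ω`. -/
def tv (v : Ω → ℝ) : ℝ := (∑ ω, |v ω|) / 2

/-- The inner `sup` of the cut metric, for a given coupling `γ` and rearrangement `s`. -/
def cutPair (γ : Measure (SigmaSp Ω × SigmaSp Ω)) (s : ℝ → ℝ) : ℝ :=
  ⨆ (B : Set (SigmaSp Ω × SigmaSp Ω)) (_ : MeasurableSet B) (U : Set ℝ) (_ : MeasurableSet U),
    tv Ω (fun ω => ∫ p in B, (∫ x in U, (ev Ω p.1 x ω - ev Ω p.2 (s x) ω) ∂lam01) ∂γ)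

/-- The strong cut metric `Cut□`. -/
def CutD (μ ν : PM Ω) : ℝ := ⨅ (γ : {γ // IsCoupling Ω μ ν γ}), cutPair Ω γ.1 id

/-- `S_{[0,1)}`: Lebesgue-measure-preserving measurable self-maps of `[0,1)`. -/
def IsMPS (s : ℝ → ℝ) : Prop :=
  MeasurePreserving s lam01 lam01 ∧ MapsTo s (Ico (0:ℝ) 1) (Ico (0:ℝ) 1)

/-- The weak cut metric `cut□`. -/
def cutd (μ ν : PM Ω) : ℝ :=
  ⨅ (γ : {γ // IsCoupling Ω μ ν γ}) (s : {s // IsMPS s}), cutPair Ω γ.1 s.1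


/-- The probability `P[∀ i,j ≤ k : A_{ij}(μ) = a_{ij}]` for the exchangeable random array
`A(μ)`: with `(Σ_i)_{i≤k}` i.i.d. from `μ`, `(x_j)_{j≤k}` i.i.d. uniform on `[0,1)`, and
`A_{ij}` drawn independently from `Σ_i(x_j) ∈ P(Ω)`, this probability equals
`E ∏_{i,j≤k} Σ_i(x_j)(a_{ij})`. -/
def arrayProb (μ : PM Ω) (kk : ℕ) (a : Fin kk → Fin kk → Ω) : ℝ :=
  ∫ f : Fin kk → SigmaSp Ω,
    (∫ x : Fin kk → ℝ, (∏ i, ∏ j, ev Ω (f i) (x j) (a i j))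
      ∂(Measure.pi fun _ : Fin kk => lam01))
    ∂(Measure.pi fun _ : Fin kk => (μ : Measure (SigmaSp Ω)))

variable {Ω}


/-! ### A jointly measurable version of evaluation -/

lemma ev_integrable (f : SigmaSp Ω) : Integrable (ev Ω f) lam01 := L1.integrable_coeFn f.1

lemma ev_integrable_apply (f : SigmaSp Ω) (ω : Ω) : Integrable (fun x => ev Ω f x ω) lam01 :=
  (ev_integrable f).eval ω

lemma measurable_setIntegral_ev (U : Set ℝ) (ω : Ω) :
    Measurable (fun f : SigmaSp Ω => ∫ y in U, ev Ω f y ω ∂lam01) := by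
  have h1 : Continuous (fun f : SigmaSp Ω => ∫ y in U, ev Ω f y ∂lam01) :=
    (continuous_setIntegral (μ := lam01) (E := Ω → ℝ) U).comp continuous_subtype_val
  have h2 : (fun f : SigmaSp Ω => ∫ y in U, ev Ω f y ω ∂lam01)
      = fun f => (∫ y in U, ev Ω f y ∂lam01) ω := by
    funext f
    rw [eval_integral]
    intro i
    exact (ev_integrable_apply f i).integrableOn
  rw [h2]
  exact ((continuous_apply ω).comp h1).measurable

/-- index of the cell containing `x`. -/
def cell (N : ℕ) (x : ℝ) : ℕ := ⌊((N : ℝ) + 1) * x⌋₊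

lemma measurable_cell (N : ℕ) : Measurable (cell N) :=
  Nat.measurable_floor.comp (measurable_id.const_mul _)

/-- average over a cell -/
def cellAvg (N : ℕ) (f : SigmaSp Ω) (b : ℕ) (ω : Ω) : ℝ :=
  ((N : ℝ) + 1) * ∫ y in Icc ((b : ℝ) / (N + 1)) (((b : ℝ) + 1) / (N + 1)), ev Ω f y ω ∂lam01

/-- cell approximation -/
def eN (N : ℕ) (f : SigmaSp Ω) (x : ℝ) (ω : Ω) : ℝ := cellAvg N f (cell N x) ω

lemma measurable_cellAvg (N b : ℕ) (ω : Ω) :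
    Measurable (fun f : SigmaSp Ω => cellAvg N f b ω) :=
  (measurable_setIntegral_ev _ ω).const_mul _

lemma measurable_eN (N : ℕ) (ω : Ω) :
    Measurable (fun p : SigmaSp Ω × ℝ => eN N p.1 p.2 ω) := by
  have h : Measurable (fun p : SigmaSp Ω × ℕ => cellAvg N p.1 p.2 ω) :=
    measurable_from_prod_countable_left (fun b => measurable_cellAvg N b ω)
  have h2 : Measurable (fun p : SigmaSp Ω × ℝ => ((p.1, cell N p.2) : SigmaSp Ω × ℕ)) :=
    measurable_fst.prodMk ((measurable_cell N).comp measurable_snd)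
  have h3 := h.comp h2
  simp only [Function.comp_def] at h3
  simp only [eN]
  exact h3

lemma cell_mem {N : ℕ} {x : ℝ} (h0 : 0 ≤ x) :
    ((cell N x : ℝ)) ≤ (N + 1) * x ∧ ((N : ℝ) + 1) * x < cell N x + 1 := by
  constructor
  · exact Nat.floor_le (by positivity)
  · exact Nat.lt_floor_add_one _

lemma eN_tendsto (f : SigmaSp Ω) :
    ∀ᵐ x ∂lam01, ∀ ω, Tendsto (fun N => eN N f x ω) atTop (𝓝 (ev Ω f x ω)) := by
  rw [ae_all_iff]
  intro ω
  set g : ℝ → ℝ := (Ico (0:ℝ) 1).indicator (fun x => ev Ω f x ω) with hg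
  have hgi : Integrable g volume :=
    (integrable_indicator_iff measurableSet_Ico).2 (ev_integrable_apply f ω)
  have key := IsUnifLocDoublingMeasure.ae_tendsto_average (μ := (volume : Measure ℝ))
    hgi.locallyIntegrable 1
  have h2 := ae_restrict_of_ae (s := Ico (0:ℝ) 1) key
  have h3 : ∀ᵐ x ∂lam01, x ∈ Ico (0:ℝ) 1 := ae_restrict_mem measurableSet_Ico
  filter_upwards [h2, h3] with x hx hx3
  have := hx (l := atTop) (fun N : ℕ => ((cell N x : ℝ) + 1/2) / (N + 1))
    (fun N : ℕ => (1/2) / ((N:ℝ) + 1)) ?_ ?_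
  · have hgx : g x = ev Ω f x ω := by simp [hg, hx3]
    rw [hgx] at this
    refine this.congr fun N => ?_
    have hN : (0:ℝ) < N + 1 := by positivity
    have hball : Metric.closedBall (((cell N x : ℝ) + 1/2) / (N + 1)) ((1/2) / ((N:ℝ) + 1))
        = Icc ((cell N x : ℝ) / (N + 1)) (((cell N x : ℝ) + 1) / (N + 1)) := by
      rw [Real.closedBall_eq_Icc]
      congr 1 <;> (field_simp; try ring)
    rw [hball, setAverage_eq]
    simp only [Measure.real, Real.volume_Icc, smul_eq_mul]
    have hlen : ((cell N x : ℝ) + 1) / (N + 1) - (cell N x : ℝ) / (N + 1) = 1 / (N+1) := by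
      field_simp; ring
    rw [hlen, ENNReal.toReal_ofReal (by positivity)]
    unfold eN cellAvg
    congr 1
    · field_simp
    · rw [hg, setIntegral_indicator measurableSet_Ico, lam01, Measure.restrict_restrict measurableSet_Icc]
  · rw [tendsto_nhdsWithin_iff]
    constructor
    · have := tendsto_one_div_add_atTop_nhds_zero_nat (𝕜 := ℝ)
      have h := this.const_mul (1/2)
      simp only [mul_zero] at h
      refine h.congr fun n => by ring
    · filter_upwards with n
      simp only [mem_Ioi]; positivity
  · filter_upwards with N
    obtain ⟨h4, h5⟩ := cell_mem (N := N) hx3.1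
    have hN : (0:ℝ) < N + 1 := by positivity
    rw [Real.closedBall_eq_Icc, one_mul]
    constructor
    · rw [← sub_div, div_le_iff₀ hN]; linarith
    · rw [← add_div, le_div_iff₀ hN]; linarith

lemma lam01_ne_zero : (lam01 : Measure ℝ) ≠ 0 := IsProbabilityMeasure.ne_zero _

lemma nonempty_of_SigmaSp (f : SigmaSp Ω) : Nonempty Ω := by
  obtain ⟨x, hx⟩ := f.2.exists
  by_contra h
  rw [not_nonempty_iff] at h
  have := hx.2
  simp at this

open Classical in
/-- jointly measurable version of evaluation -/
def e (f : SigmaSp Ω) (x : ℝ) : Ω → ℝ :=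
  if (fun ω => limsup (fun N => eN N f x ω) atTop) ∈ simplex Ω then
    (fun ω => limsup (fun N => eN N f x ω) atTop)
  else fun ω => if ω = (nonempty_of_SigmaSp f).some then 1 else 0

lemma measurableSet_simplex : MeasurableSet (simplex Ω) := by
  have : simplex Ω = (⋂ ω, {p | 0 ≤ p ω}) ∩ {p | ∑ ω, p ω = 1} := by
    ext p; simp [simplex]
  rw [this]
  refine MeasurableSet.inter (MeasurableSet.iInter fun ω => ?_) ?_
  · exact measurableSet_le measurable_const (measurable_pi_apply ω)
  · exact measurableSet_eq_fun (Finset.measurable_sum _ fun ω _ => measurable_pi_apply ω)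
      measurable_const

lemma e_mem (f : SigmaSp Ω) (x : ℝ) : e f x ∈ simplex Ω := by
  classical
  unfold e
  split_ifs with h
  · exact h
  · constructor
    · intro ω; dsimp only; split_ifs <;> norm_num
    · simp

lemma e_nonneg (f : SigmaSp Ω) (x : ℝ) (ω : Ω) : 0 ≤ e f x ω := (e_mem f x).1 ω
lemma e_sum (f : SigmaSp Ω) (x : ℝ) : ∑ ω, e f x ω = 1 := (e_mem f x).2
lemma e_le_one (f : SigmaSp Ω) (x : ℝ) (ω : Ω) : e f x ω ≤ 1 := by
  rw [← e_sum f x]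
  exact Finset.single_le_sum (fun i _ => e_nonneg f x i) (Finset.mem_univ ω)

lemma measurable_e : Measurable (fun p : SigmaSp Ω × ℝ => e p.1 p.2) := by
  classical
  rcases isEmpty_or_nonempty Ω with h | h
  · have : IsEmpty (SigmaSp Ω) := ⟨fun f => h.elim (nonempty_of_SigmaSp f).some⟩
    exact measurable_of_empty _
  have hm : Measurable (fun p : SigmaSp Ω × ℝ => fun ω => limsup (fun N => eN N p.1 p.2 ω) atTop) :=
    measurable_pi_lambda _ fun ω => Measurable.limsup fun N => measurable_eN N ω
  have he : (fun p : SigmaSp Ω × ℝ => e p.1 p.2) = fun p =>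
      if p ∈ (fun p : SigmaSp Ω × ℝ => fun ω => limsup (fun N => eN N p.1 p.2 ω) atTop) ⁻¹' simplex Ω
      then (fun ω => limsup (fun N => eN N p.1 p.2 ω) atTop)
      else (fun ω => if ω = h.some then 1 else 0) := by
    funext p
    simp only [e, mem_preimage]
  rw [he]
  exact Measurable.ite (hm measurableSet_simplex) hm measurable_const

lemma e_ae (f : SigmaSp Ω) : ∀ᵐ x ∂lam01, e f x = ev Ω f x := by
  filter_upwards [eN_tendsto f, f.2] with x hx h2
  have : (fun ω => limsup (fun N => eN N f x ω) atTop) = ev Ω f x := by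
    funext ω
    exact (hx ω).limsup_eq
  unfold e
  rw [this, if_pos]
  exact h2

lemma eN_tendsto_e (f : SigmaSp Ω) :
    ∀ᵐ x ∂lam01, ∀ ω, Tendsto (fun N => eN N f x ω) atTop (𝓝 (e f x ω)) := by
  filter_upwards [eN_tendsto f, e_ae f] with x hx h2
  rw [h2]; exact hx

lemma volume_cell_le (N b : ℕ) :
    lam01.real (Icc ((b : ℝ) / (N + 1)) (((b : ℝ) + 1) / (N + 1))) ≤ 1 / (N + 1) := by
  unfold Measure.real lam01
  have hlen : ((b : ℝ) + 1) / (N + 1) - (b : ℝ) / (N + 1) = 1 / (N+1) := by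
    field_simp; ring
  refine ENNReal.toReal_le_of_le_ofReal (by positivity) ?_
  refine (Measure.restrict_apply_le _ _).trans ?_
  rw [Real.volume_Icc, hlen]

lemma cellAvg_eq (N : ℕ) (f : SigmaSp Ω) (b : ℕ) (ω : Ω) : cellAvg N f b ω =
    ((N : ℝ) + 1) * ∫ y in Icc ((b : ℝ) / (N + 1)) (((b : ℝ) + 1) / (N + 1)), e f y ω ∂lam01 := by
  unfold cellAvg
  congr 1
  refine integral_congr_ae (ae_restrict_of_ae ?_)
  filter_upwards [e_ae f] with x hx
  rw [hx]

lemma cellAvg_nonneg (N : ℕ) (f : SigmaSp Ω) (b : ℕ) (ω : Ω) : 0 ≤ cellAvg N f b ω := by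
  rw [cellAvg_eq]
  exact mul_nonneg (by positivity) (integral_nonneg fun x => e_nonneg f x ω)

lemma cellAvg_le_one (N : ℕ) (f : SigmaSp Ω) (b : ℕ) (ω : Ω) : cellAvg N f b ω ≤ 1 := by
  rw [cellAvg_eq]
  have h := norm_setIntegral_le_of_norm_le_const (μ := lam01) (C := 1)
    (s := Icc ((b : ℝ) / (N + 1)) (((b : ℝ) + 1) / (N + 1))) (f := fun y => e f y ω)
    (measure_lt_top _ _) (fun x _ => by
      rw [Real.norm_eq_abs, abs_of_nonneg (e_nonneg f x ω)]; exact e_le_one f x ω)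
  have h2 := volume_cell_le N b
  have h3 := (le_abs_self _).trans h
  have hN : (0:ℝ) < N + 1 := by positivity
  calc _ ≤ ((N:ℝ)+1) * (1 / (N+1)) := by
        refine mul_le_mul_of_nonneg_left ?_ hN.le
        linarith
    _ = 1 := by field_simp



/-! ### Generalities -/

lemma intB {α : Type*} [MeasurableSpace α] {μ : Measure α} [IsFiniteMeasure μ] {f : α → ℝ}
    (hf : Measurable f) (C : ℝ) (hC : ∀ x, |f x| ≤ C) : Integrable f μ :=
  Integrable.of_bound hf.aestronglyMeasurable C (Eventually.of_forall hC)

lemma abs_integral_le {α : Type*} [MeasurableSpace α] {μ : Measure α} [IsProbabilityMeasure μ]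
    {f : α → ℝ} {C : ℝ} (hC : ∀ x, |f x| ≤ C) : |∫ x, f x ∂μ| ≤ C := by
  have := norm_integral_le_of_norm_le_const (μ := μ) (f := f) (C := C)
    (Eventually.of_forall hC)
  simpa using this

lemma mp_update {ι α : Type*} [Fintype ι] [DecidableEq ι] [MeasurableSpace α]
    (μ : Measure α) [IsProbabilityMeasure μ] (i : ι) :
    MeasurePreserving (fun q : (ι → α) × α => Function.update q.1 i q.2)
      ((Measure.pi fun _ : ι => μ).prod μ) (Measure.pi fun _ : ι => μ) := by
  have hm : Measurable (fun q : (ι → α) × α => Function.update q.1 i q.2) := by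
    refine measurable_pi_lambda _ fun l => ?_
    by_cases h : l = i
    · subst h; simpa using measurable_snd
    · simp only [Function.update_of_ne h]; exact (measurable_pi_apply l).comp measurable_fst
  refine ⟨hm, ?_⟩
  refine (Measure.pi_eq fun s hs => ?_).symm
  rw [Measure.map_apply hm (MeasurableSet.univ_pi hs)]
  have : (fun q : (ι → α) × α => Function.update q.1 i q.2) ⁻¹' (Set.univ.pi s)
      = (Set.univ.pi (Function.update s i Set.univ)) ×ˢ (s i) := by
    ext q
    simp only [mem_preimage, Set.mem_pi, mem_univ, true_imp_iff, mem_prod]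
    constructor
    · intro h
      refine ⟨fun l => ?_, by simpa using h i⟩
      by_cases hl : l = i
      · subst hl; simp
      · simpa [Function.update_of_ne hl] using h l
    · rintro ⟨h1, h2⟩ l
      by_cases hl : l = i
      · subst hl; simpa using h2
      · simpa [Function.update_of_ne hl] using h1 l
  rw [this, Measure.prod_prod, Measure.pi_pi]
  rw [← Finset.mul_prod_erase Finset.univ (fun l => μ (s l)) (Finset.mem_univ i),
    ← Finset.mul_prod_erase Finset.univ (fun l => μ (Function.update s i Set.univ l)) (Finset.mem_univ i)]
  simp only [Function.update_self, measure_univ, one_mul]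
  rw [mul_comm]
  congr 1
  refine Finset.prod_congr rfl fun l hl => ?_
  rw [Function.update_of_ne (Finset.ne_of_mem_erase hl)]

section bil0
variable {P X : Type*} [MeasurableSpace P] [MeasurableSpace X]
  {γ : Measure P} {lam : Measure X} [SFinite γ] [SFinite lam]

lemma meas_int_right {D : P → X → ℝ} (hD : Measurable (fun q : P × X => D q.1 q.2)) :
    Measurable (fun p => ∫ x, D p x ∂lam) :=
  (hD.stronglyMeasurable.integral_prod_right (ν := lam)).measurable

lemma meas_int_left {D : P → X → ℝ} (hD : Measurable (fun q : P × X => D q.1 q.2)) :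
    Measurable (fun x => ∫ p, D p x ∂γ) :=
  (hD.stronglyMeasurable.integral_prod_left' (μ := γ)).measurable

end bil0
section bil
variable {P X : Type*} [MeasurableSpace P] [MeasurableSpace X]
  {γ : Measure P} {lam : Measure X} [IsProbabilityMeasure γ] [IsProbabilityMeasure lam]

lemma mul_le_pos_part {a f : ℝ} (h0 : 0 ≤ f) (h1 : f ≤ 1) : f * a ≤ {r : ℝ | 0 < r}.indicator id a := by
  by_cases h : 0 < a
  · simp only [mem_ofPred_eq, h, indicator_of_mem, id]; nlinarith
  · rw [indicator_of_notMem (by simpa using h)]; push Not at h; nlinarith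

lemma bil_le {D : P → X → ℝ} (hD : Measurable (fun q : P × X => D q.1 q.2))
    (hb : ∀ p x, |D p x| ≤ 1) {c : ℝ}
    (hc : ∀ B U, MeasurableSet B → MeasurableSet U → (∫ p in B, ∫ x in U, D p x ∂lam ∂γ) ≤ c)
    {F : P → ℝ} {G : X → ℝ} (hF : Measurable F) (hG : Measurable G)
    (hF0 : ∀ p, 0 ≤ F p) (hF1 : ∀ p, F p ≤ 1) (hG0 : ∀ x, 0 ≤ G x) (hG1 : ∀ x, G x ≤ 1) :
    (∫ p, ∫ x, F p * G x * D p x ∂lam ∂γ) ≤ c := by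
  have hGD : ∀ p x, |G x * D p x| ≤ 1 := fun p x => by
    rw [abs_mul, abs_of_nonneg (hG0 x)]
    exact mul_le_one₀ (hG1 x) (abs_nonneg _) (hb p x)
  have hGDm : Measurable (fun q : P × X => G q.2 * D q.1 q.2) := (hG.comp measurable_snd).mul hD
  set d : P → ℝ := fun p => ∫ x, G x * D p x ∂lam with hd
  have hdm : Measurable d := meas_int_right (D := fun p x => G x * D p x) hGDm
  have hdb : ∀ p, |d p| ≤ 1 := fun p => abs_integral_le (hGD p)
  set B : Set P := {p | 0 < d p} with hB
  have hBm : MeasurableSet B := measurableSet_lt measurable_const hdm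
  set g : X → ℝ := fun x => ∫ p in B, D p x ∂γ with hg
  have hgm : Measurable g := meas_int_left hD
  have hgb : ∀ x, |g x| ≤ 1 := fun x => by
    have := norm_setIntegral_le_of_norm_le_const (μ := γ) (s := B) (C := 1) (f := fun p => D p x)
      (measure_lt_top _ _) (fun p _ => hb p x)
    refine this.trans ?_
    rw [one_mul]; exact measureReal_le_one
  set U : Set X := {x | 0 < g x} with hU
  have hUm : MeasurableSet U := measurableSet_lt measurable_const hgm
  have h1 : (∫ p, ∫ x, F p * G x * D p x ∂lam ∂γ) = ∫ p, F p * d p ∂γ := by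
    refine integral_congr_ae (Eventually.of_forall fun p => ?_)
    simp only [hd, mul_assoc]
    rw [integral_const_mul]
  have h2 : (∫ p, F p * d p ∂γ) ≤ ∫ p in B, d p ∂γ := by
    rw [← integral_indicator hBm]
    refine integral_mono (intB (hF.mul hdm) 1 fun p => ?_)
      ((intB hdm 1 hdb).indicator hBm) fun p => ?_
    · rw [abs_mul, abs_of_nonneg (hF0 p)]
      exact mul_le_one₀ (hF1 p) (abs_nonneg _) (hdb p)
    · exact mul_le_pos_part (hF0 p) (hF1 p)
  have h3 : (∫ p in B, d p ∂γ) = ∫ x, G x * g x ∂lam := by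
    simp only [hd]
    rw [integral_integral_swap (f := fun p x => G x * D p x) (intB hGDm 1 (fun q => hGD q.1 q.2))]
    refine integral_congr_ae (Eventually.of_forall fun x => ?_)
    simp only [hg]
    rw [integral_const_mul]
  have h4 : (∫ x, G x * g x ∂lam) ≤ ∫ x in U, g x ∂lam := by
    rw [← integral_indicator hUm]
    refine integral_mono (intB (hG.mul hgm) 1 fun p => ?_)
      ((intB hgm 1 hgb).indicator hUm) fun p => ?_
    · rw [abs_mul, abs_of_nonneg (hG0 p)]
      exact mul_le_one₀ (hG1 p) (abs_nonneg _) (hgb p)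
    · exact mul_le_pos_part (hG0 p) (hG1 p)
  have h5 : (∫ x in U, g x ∂lam) = ∫ p in B, ∫ x in U, D p x ∂lam ∂γ := by
    simp only [hg]
    rw [integral_integral_swap]
    exact intB (hD.comp measurable_swap) 1 (fun q => hb q.2 q.1)
  rw [h1]
  linarith [hc B U hBm hUm]

lemma abs_bil_le {D : P → X → ℝ} (hD : Measurable (fun q : P × X => D q.1 q.2))
    (hb : ∀ p x, |D p x| ≤ 1) {c : ℝ}
    (hc : ∀ B U, MeasurableSet B → MeasurableSet U → |∫ p in B, ∫ x in U, D p x ∂lam ∂γ| ≤ c)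
    {F : P → ℝ} {G : X → ℝ} (hF : Measurable F) (hG : Measurable G)
    (hF0 : ∀ p, 0 ≤ F p) (hF1 : ∀ p, F p ≤ 1) (hG0 : ∀ x, 0 ≤ G x) (hG1 : ∀ x, G x ≤ 1) :
    |∫ p, ∫ x, F p * G x * D p x ∂lam ∂γ| ≤ c := by
  rw [abs_le']
  refine ⟨bil_le hD hb (fun B U h1 h2 => (abs_le'.1 (hc B U h1 h2)).1) hF hG hF0 hF1 hG0 hG1, ?_⟩
  have := bil_le (γ := γ) (lam := lam) (D := fun p x => - D p x) hD.neg (fun p x => by rw [abs_neg]; exact hb p x)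
    (c := c) (fun B U h1 h2 => by
      simp only [integral_neg]; exact (abs_le'.1 (hc B U h1 h2)).2) hF hG hF0 hF1 hG0 hG1
  simpa only [mul_neg, integral_neg] using this

end bil


/-! ### Rewriting the cut metric with the measurable version -/

/-- the difference kernel -/
def Dk (s : ℝ → ℝ) (ω : Ω) (p : SigmaSp Ω × SigmaSp Ω) (x : ℝ) : ℝ := e p.1 x ω - e p.2 (s x) ω

lemma abs_sub_le_one {a b : ℝ} (ha : 0 ≤ a) (ha1 : a ≤ 1) (hb : 0 ≤ b) (hb1 : b ≤ 1) :
    |a - b| ≤ 1 := by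
  rw [abs_le]; constructor <;> linarith

lemma abs_Dk_le (s : ℝ → ℝ) (ω : Ω) (p : SigmaSp Ω × SigmaSp Ω) (x : ℝ) : |Dk s ω p x| ≤ 1 :=
  abs_sub_le_one (e_nonneg _ _ _) (e_le_one _ _ _) (e_nonneg _ _ _) (e_le_one _ _ _)

lemma measurable_e_apply (ω : Ω) : Measurable (fun p : SigmaSp Ω × ℝ => e p.1 p.2 ω) :=
  (measurable_pi_apply ω).comp measurable_e

lemma measurable_e_comp {α : Type*} [MeasurableSpace α] {f : α → SigmaSp Ω} {x : α → ℝ}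
    (hf : Measurable f) (hx : Measurable x) (ω : Ω) : Measurable (fun z => e (f z) (x z) ω) := by
  have h := (measurable_e_apply ω).comp (hf.prodMk hx)
  simp only [Function.comp_def] at h
  exact h

lemma measurable_Dk {s : ℝ → ℝ} (hs : Measurable s) (ω : Ω) :
    Measurable (fun q : (SigmaSp Ω × SigmaSp Ω) × ℝ => Dk s ω q.1 q.2) :=
  (measurable_e_comp (measurable_fst.comp measurable_fst) measurable_snd ω).sub
    (measurable_e_comp (measurable_snd.comp measurable_fst) (hs.comp measurable_snd) ω)

lemma IsCoupling.prob {μ ν : PM Ω} {γ : Measure (SigmaSp Ω × SigmaSp Ω)} (h : IsCoupling Ω μ ν γ) :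
    IsProbabilityMeasure γ := by
  have := h.1
  constructor
  have h2 : (γ.map Prod.fst) univ = 1 := by rw [this]; simp
  rwa [Measure.map_apply measurable_fst MeasurableSet.univ, preimage_univ] at h2

lemma cut_term_eq {s : ℝ → ℝ} (hs : MeasurePreserving s lam01 lam01)
    (γ : Measure (SigmaSp Ω × SigmaSp Ω)) (B : Set (SigmaSp Ω × SigmaSp Ω)) (U : Set ℝ) (ω : Ω) :
    (∫ p in B, (∫ x in U, (ev Ω p.1 x ω - ev Ω p.2 (s x) ω) ∂lam01) ∂γ)
      = ∫ p in B, (∫ x in U, Dk s ω p x ∂lam01) ∂γ := by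
  refine integral_congr_ae (Eventually.of_forall fun p => ?_)
  refine integral_congr_ae (ae_restrict_of_ae ?_)
  filter_upwards [e_ae p.1, hs.quasiMeasurePreserving.ae (e_ae p.2)] with x h1 h2
  simp only [Dk]
  rw [h1, h2]

lemma abs_cut_term_le (s : ℝ → ℝ) 
    (γ : Measure (SigmaSp Ω × SigmaSp Ω)) [IsProbabilityMeasure γ]
    (B : Set (SigmaSp Ω × SigmaSp Ω)) (U : Set ℝ) (ω : Ω) :
    |∫ p in B, (∫ x in U, Dk s ω p x ∂lam01) ∂γ| ≤ 1 := by
  have h1 : ∀ p, |∫ x in U, Dk s ω p x ∂lam01| ≤ 1 := fun p => by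
    have := norm_setIntegral_le_of_norm_le_const (μ := lam01) (s := U) (C := 1) (f := Dk s ω p)
      (measure_lt_top _ _) (fun x _ => abs_Dk_le s ω p x)
    refine this.trans ?_
    rw [one_mul]; exact measureReal_le_one
  have := norm_setIntegral_le_of_norm_le_const (μ := γ) (s := B) (C := 1)
      (f := fun p => ∫ x in U, Dk s ω p x ∂lam01)
      (measure_lt_top _ _) (fun x _ => h1 x)
  refine this.trans ?_
  rw [one_mul]; exact measureReal_le_one

lemma tv_nonneg (v : Ω → ℝ) : 0 ≤ tv Ω v :=
  div_nonneg (Finset.sum_nonneg fun _ _ => abs_nonneg _) (by norm_num)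

lemma cutPair_le {s : ℝ → ℝ} (hs : MeasurePreserving s lam01 lam01)
    (γ : Measure (SigmaSp Ω × SigmaSp Ω)) {c : ℝ} (hc0 : 0 ≤ c)
    (hc : ∀ B U, MeasurableSet B → MeasurableSet U →
      tv Ω (fun ω => ∫ p in B, (∫ x in U, Dk s ω p x ∂lam01) ∂γ) ≤ c) : cutPair Ω γ s ≤ c := by
  unfold cutPair
  refine Real.iSup_le (fun B => Real.iSup_le (fun hB => Real.iSup_le (fun U =>
    Real.iSup_le (fun hU => ?_) hc0) hc0) hc0) hc0
  simp only [cut_term_eq hs]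
  exact hc B U hB hU

lemma cutPair_nonneg (s : ℝ → ℝ) (γ : Measure (SigmaSp Ω × SigmaSp Ω)) : 0 ≤ cutPair Ω γ s := 
  Real.iSup_nonneg fun _ => Real.iSup_nonneg fun _ => Real.iSup_nonneg fun _ =>
    Real.iSup_nonneg fun _ => tv_nonneg _

lemma le_cutPair {s : ℝ → ℝ} (hs : MeasurePreserving s lam01 lam01)
    (γ : Measure (SigmaSp Ω × SigmaSp Ω)) [IsProbabilityMeasure γ]
    {B : Set (SigmaSp Ω × SigmaSp Ω)} {U : Set ℝ} (hB : MeasurableSet B) (hU : MeasurableSet U) :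
    tv Ω (fun ω => ∫ p in B, (∫ x in U, Dk s ω p x ∂lam01) ∂γ) ≤ cutPair Ω γ s := by
  set K : ℝ := (Fintype.card Ω : ℝ) / 2 with hK
  have hK0 : 0 ≤ K := by positivity
  have hb : ∀ B U, tv Ω (fun ω => ∫ p in B, (∫ x in U, Dk s ω p x ∂lam01) ∂γ) ≤ K := by
    intro B U
    unfold tv
    rw [hK]
    gcongr
    refine (Finset.sum_le_sum fun ω _ => abs_cut_term_le s γ B U ω).trans ?_
    simp
  unfold cutPair
  simp only [cut_term_eq hs]
  refine le_trans ?_ (le_ciSup (f := fun B => ⨆ (_ : MeasurableSet B) (U : Set ℝ) (_ : MeasurableSet U), tv Ω (fun ω => ∫ p in B, (∫ x in U, Dk s ω p x ∂lam01) ∂γ)) ⟨K, ?_⟩ B)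
  · refine le_trans ?_ (le_ciSup (f := fun _ : MeasurableSet B => ⨆ (U : Set ℝ) (_ : MeasurableSet U), tv Ω (fun ω => ∫ p in B, (∫ x in U, Dk s ω p x ∂lam01) ∂γ)) ⟨K, ?_⟩ hB)
    · refine le_trans ?_ (le_ciSup (f := fun U : Set ℝ => ⨆ (_ : MeasurableSet U), tv Ω (fun ω => ∫ p in B, (∫ x in U, Dk s ω p x ∂lam01) ∂γ)) ⟨K, ?_⟩ U)
      · exact (le_ciSup (f := fun _ : MeasurableSet U => tv Ω (fun ω => ∫ p in B, (∫ x in U, Dk s ω p x ∂lam01) ∂γ)) ⟨K, by rintro _ ⟨_, rfl⟩; exact hb _ _⟩ hU)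
      · rintro _ ⟨_, rfl⟩
        exact Real.iSup_le (fun _ => hb _ _) hK0
    · rintro _ ⟨_, rfl⟩
      exact Real.iSup_le (fun _ => Real.iSup_le (fun _ => hb _ _) hK0) hK0
  · rintro _ ⟨_, rfl⟩
    exact Real.iSup_le (fun _ => Real.iSup_le (fun _ => Real.iSup_le (fun _ => hb _ _) hK0) hK0) hK0

lemma abs_le_two_tv (v : Ω → ℝ) (ω : Ω) : |v ω| ≤ 2 * tv Ω v := by
  unfold tv
  have := Finset.single_le_sum (f := fun ω => |v ω|) (fun i _ => abs_nonneg _) (Finset.mem_univ ω)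
  linarith

lemma cutd_nonneg (μ ν : PM Ω) : 0 ≤ cutd Ω μ ν :=
  Real.iInf_nonneg fun _ => Real.iInf_nonneg fun _ => cutPair_nonneg _ _

lemma cutd_le {μ ν : PM Ω} {γ : Measure (SigmaSp Ω × SigmaSp Ω)} {s : ℝ → ℝ}
    (hγ : IsCoupling Ω μ ν γ) (hs : IsMPS s) : cutd Ω μ ν ≤ cutPair Ω γ s := by
  unfold cutd
  refine (ciInf_le ⟨0, ?_⟩ (⟨γ, hγ⟩ : {γ // IsCoupling Ω μ ν γ})).trans ?_
  · rintro _ ⟨_, rfl⟩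
    exact Real.iInf_nonneg fun _ => cutPair_nonneg _ _
  · refine ciInf_le (f := fun s : {s // IsMPS s} => cutPair Ω γ s.1) ⟨0, ?_⟩ ⟨s, hs⟩
    rintro _ ⟨_, rfl⟩
    exact cutPair_nonneg _ _

lemma IsMPS_id : IsMPS id := ⟨MeasurePreserving.id _, fun _ h => h⟩

lemma IsCoupling_prod (μ ν : PM Ω) : IsCoupling Ω μ ν ((μ : Measure (SigmaSp Ω)).prod ν) := by
  constructor
  · simpa using Measure.map_fst_prod (μ := (μ : Measure (SigmaSp Ω))) (ν := (ν : Measure (SigmaSp Ω)))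
  · simpa using Measure.map_snd_prod (μ := (μ : Measure (SigmaSp Ω))) (ν := (ν : Measure (SigmaSp Ω)))

lemma exists_cutPair_lt {μ ν : PM Ω} {c : ℝ} (h : cutd Ω μ ν < c) :
    ∃ γ s, IsCoupling Ω μ ν γ ∧ IsMPS s ∧ cutPair Ω γ s < c := by
  unfold cutd at h
  haveI : Nonempty {γ // IsCoupling Ω μ ν γ} := ⟨⟨_, IsCoupling_prod μ ν⟩⟩
  haveI : Nonempty {s // IsMPS s} := ⟨⟨id, IsMPS_id⟩⟩
  obtain ⟨γ, hγ⟩ := exists_lt_of_ciInf_lt h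
  obtain ⟨s, hs⟩ := exists_lt_of_ciInf_lt hγ
  exact ⟨γ.1, s.1, γ.2, s.2, hs⟩

lemma arrayProb_eq (μ : PM Ω) (kk : ℕ) (a : Fin kk → Fin kk → Ω) :
    arrayProb Ω μ kk a = ∫ f : Fin kk → SigmaSp Ω,
    (∫ x : Fin kk → ℝ, (∏ i, ∏ j, e (f i) (x j) (a i j))
      ∂(Measure.pi fun _ : Fin kk => lam01))
    ∂(Measure.pi fun _ : Fin kk => (μ : Measure (SigmaSp Ω))) := by
  unfold arrayProb
  refine integral_congr_ae (Eventually.of_forall fun f => ?_)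
  refine integral_congr_ae ?_
  have : ∀ i j, ∀ᵐ x ∂(Measure.pi fun _ : Fin kk => lam01), e (f i) (x j) = ev Ω (f i) (x j) :=
    fun i j => (measurePreserving_eval (fun _ : Fin kk => lam01) j).quasiMeasurePreserving.ae
      (e_ae (f i))
  have h2 := ae_all_iff.2 fun i => ae_all_iff.2 fun j => this i j
  filter_upwards [h2] with x hx
  simp only [hx]



/-! ### Counting direction -/

lemma mp_shuffle {A B C D : Type*} [MeasurableSpace A] [MeasurableSpace B] [MeasurableSpace C]
    [MeasurableSpace D] (a : Measure A) (b : Measure B) (c : Measure C) (d : Measure D)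
    [IsProbabilityMeasure a] [IsProbabilityMeasure b] [IsProbabilityMeasure c]
    [IsProbabilityMeasure d] :
    MeasurePreserving (fun z : (A × B) × (C × D) => ((z.1.1, z.2.1), (z.1.2, z.2.2)))
      ((a.prod b).prod (c.prod d)) ((a.prod c).prod (b.prod d)) := by
  have hm : Measurable (fun z : (A × B) × (C × D) => ((z.1.1, z.2.1), (z.1.2, z.2.2))) := by
    fun_prop
  refine ⟨hm, ?_⟩
  symm
  refine Measure.prod_eq_generateFrom generateFrom_prod generateFrom_prod isPiSystem_prod
    isPiSystem_prod (a.toFiniteSpanningSetsIn.prod c.toFiniteSpanningSetsIn)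
    (b.toFiniteSpanningSetsIn.prod d.toFiniteSpanningSetsIn) ?_
  · rintro _ ⟨s, hs, t, ht, rfl⟩ _ ⟨u, hu, v, hv, rfl⟩
    simp only [mem_ofPred_eq] at hs ht hu hv
    rw [Measure.map_apply hm ((hs.prod ht).prod (hu.prod hv))]
    have : (fun z : (A × B) × (C × D) => ((z.1.1, z.2.1), (z.1.2, z.2.2))) ⁻¹' ((s ×ˢ t) ×ˢ (u ×ˢ v))
      = (s ×ˢ u) ×ˢ (t ×ˢ v) := by
      ext z; simp only [mem_preimage, mem_prod]; tauto
    simp only [this, Measure.prod_prod]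
    ring

/-- hybrid factor -/
def fac (s : ℝ → ℝ) {k : ℕ} (a : Fin k → Fin k → Ω) (Q : Finset (Fin k × Fin k)) (q : Fin k × Fin k)
    (F : Fin k → SigmaSp Ω × SigmaSp Ω) (X : Fin k → ℝ) : ℝ :=
  if q ∈ Q then e (F q.1).2 (s (X q.2)) (a q.1 q.2) else e (F q.1).1 (X q.2) (a q.1 q.2)

lemma fac_nonneg (s : ℝ → ℝ) {k : ℕ} (a : Fin k → Fin k → Ω) (Q : Finset (Fin k × Fin k)) (q : Fin k × Fin k)
    (F : Fin k → SigmaSp Ω × SigmaSp Ω) (X : Fin k → ℝ) : 0 ≤ fac s a Q q F X := by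
  unfold fac; split_ifs <;> exact e_nonneg _ _ _
lemma fac_le (s : ℝ → ℝ) {k : ℕ} (a : Fin k → Fin k → Ω) (Q : Finset (Fin k × Fin k)) (q : Fin k × Fin k)
    (F : Fin k → SigmaSp Ω × SigmaSp Ω) (X : Fin k → ℝ) : fac s a Q q F X ≤ 1 := by
  unfold fac; split_ifs <;> exact e_le_one _ _ _

lemma measurable_fac {s : ℝ → ℝ} (hs : Measurable s) {k : ℕ} (a : Fin k → Fin k → Ω)
    (Q : Finset (Fin k × Fin k)) (q : Fin k × Fin k) :
    Measurable (fun z : (Fin k → SigmaSp Ω × SigmaSp Ω) × (Fin k → ℝ) => fac s a Q q z.1 z.2) := by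
  unfold fac
  split_ifs
  · exact measurable_e_comp (measurable_snd.comp ((measurable_pi_apply q.1).comp measurable_fst))
      (hs.comp ((measurable_pi_apply q.2).comp measurable_snd)) _
  · exact measurable_e_comp (measurable_fst.comp ((measurable_pi_apply q.1).comp measurable_fst))
      (((measurable_pi_apply q.2).comp measurable_snd)) _

lemma prod_fac_nonneg (s : ℝ → ℝ) {k : ℕ} (a : Fin k → Fin k → Ω) (Q T : Finset (Fin k × Fin k)) 
    (F : Fin k → SigmaSp Ω × SigmaSp Ω) (X : Fin k → ℝ) : 0 ≤ ∏ q ∈ T, fac s a Q q F X := 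
  Finset.prod_nonneg fun _ _ => fac_nonneg _ _ _ _ _ _
lemma prod_fac_le (s : ℝ → ℝ) {k : ℕ} (a : Fin k → Fin k → Ω) (Q T : Finset (Fin k × Fin k)) 
    (F : Fin k → SigmaSp Ω × SigmaSp Ω) (X : Fin k → ℝ) : ∏ q ∈ T, fac s a Q q F X ≤ 1 := 
  Finset.prod_le_one (fun _ _ => fac_nonneg _ _ _ _ _ _) (fun _ _ => fac_le _ _ _ _ _ _)
lemma measurable_prod_fac {s : ℝ → ℝ} (hs : Measurable s) {k : ℕ} (a : Fin k → Fin k → Ω)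
    (Q T : Finset (Fin k × Fin k)) :
    Measurable (fun z : (Fin k → SigmaSp Ω × SigmaSp Ω) × (Fin k → ℝ) => ∏ q ∈ T, fac s a Q q z.1 z.2) :=
  Finset.measurable_prod _ fun q _ => measurable_fac hs a Q q

section
variable {γ : Measure (SigmaSp Ω × SigmaSp Ω)} [IsProbabilityMeasure γ] {s : ℝ → ℝ}

/-- hybrid integral -/
def hyb (γ : Measure (SigmaSp Ω × SigmaSp Ω)) (s : ℝ → ℝ) {k : ℕ} (a : Fin k → Fin k → Ω)
    (Q : Finset (Fin k × Fin k)) : ℝ :=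
  ∫ z, ∏ q, fac s a Q q z.1 z.2 ∂((Measure.pi fun _ : Fin k => γ).prod (Measure.pi fun _ : Fin k => lam01))

lemma hyb_step (hs : Measurable s) {c : ℝ}
    (hc : ∀ ω : Ω, ∀ B U, MeasurableSet B → MeasurableSet U → |∫ p in B, ∫ x in U, Dk s ω p x ∂lam01 ∂γ| ≤ c)
    {k : ℕ} (a : Fin k → Fin k → Ω)
    (Q : Finset (Fin k × Fin k)) (q : Fin k × Fin k) (hq : q ∉ Q) :
    |hyb γ s a (insert q Q) - hyb γ s a Q| ≤ c := by
  classical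
  obtain ⟨i, j⟩ := q
  set T := Finset.univ.erase (i, j) with hT
  have hIntg : ∀ Q, Integrable (fun z : (Fin k → SigmaSp Ω × SigmaSp Ω) × (Fin k → ℝ) =>
      ∏ q, fac s a Q q z.1 z.2) ((Measure.pi fun _ : Fin k => γ).prod (Measure.pi fun _ : Fin k => lam01)) :=
    fun Q => intB (measurable_prod_fac hs a Q _) 1 fun z => by
      rw [abs_of_nonneg (prod_fac_nonneg _ _ _ _ _ _)]; exact prod_fac_le _ _ _ _ _ _
  have hD : ∀ F X, (∏ q, fac s a Q q F X) - ∏ q, fac s a (insert (i,j) Q) q F X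
      = (∏ q ∈ T, fac s a Q q F X) * Dk s (a i j) (F i) (X j) := by
    intro F X
    rw [← Finset.mul_prod_erase Finset.univ (fun q => fac s a Q q F X) (Finset.mem_univ (i,j)),
      ← Finset.mul_prod_erase Finset.univ (fun q => fac s a (insert (i,j) Q) q F X) (Finset.mem_univ (i,j))]
    have : ∏ q ∈ T, fac s a (insert (i,j) Q) q F X = ∏ q ∈ T, fac s a Q q F X := by
      refine Finset.prod_congr rfl fun q hq => ?_
      have : q ≠ (i,j) := Finset.ne_of_mem_erase hq
      simp [fac, this]
    rw [this]
    simp only [fac, Dk, hq, if_false, Finset.mem_insert_self, if_true]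
    ring
  set g : (Fin k → SigmaSp Ω × SigmaSp Ω) × (Fin k → ℝ) → ℝ := fun z =>
    (∏ q ∈ T, fac s a Q q z.1 z.2) * Dk s (a i j) (z.1 i) (z.2 j) with hg
  have hgm : Measurable g := by
    refine (measurable_prod_fac hs a Q T).mul ?_
    have := (measurable_Dk hs (a i j)).comp (((measurable_pi_apply i).comp measurable_fst).prodMk
      ((measurable_pi_apply j).comp measurable_snd) : Measurable
      (fun z : (Fin k → SigmaSp Ω × SigmaSp Ω) × (Fin k → ℝ) => (z.1 i, z.2 j)))
    simp only [Function.comp_def] at this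
    exact this
  have hgb : ∀ z, |g z| ≤ 1 := fun z => by
    rw [hg, abs_mul, abs_of_nonneg (prod_fac_nonneg _ _ _ _ _ _)]
    exact mul_le_one₀ (prod_fac_le _ _ _ _ _ _) (abs_nonneg _) (abs_Dk_le _ _ _ _)
  rw [abs_sub_comm]
  unfold hyb
  rw [← integral_sub (hIntg _) (hIntg _)]
  simp only [hD]
  change |∫ z, g z ∂_| ≤ c
  have hmp : MeasurePreserving (fun w : ((Fin k → SigmaSp Ω × SigmaSp Ω) × (Fin k → ℝ)) × ((SigmaSp Ω × SigmaSp Ω) × ℝ) =>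
      (Function.update w.1.1 i w.2.1, Function.update w.1.2 j w.2.2))
      ((((Measure.pi fun _ : Fin k => γ).prod (Measure.pi fun _ : Fin k => lam01))).prod (γ.prod lam01))
      ((Measure.pi fun _ : Fin k => γ).prod (Measure.pi fun _ : Fin k => lam01)) :=
    ((mp_update γ i).prod (mp_update lam01 j)).comp (mp_shuffle _ _ _ _)
  have e1 : ∫ z, g z ∂((Measure.pi fun _ : Fin k => γ).prod (Measure.pi fun _ : Fin k => lam01))
      = ∫ w, g (Function.update w.1.1 i w.2.1, Function.update w.1.2 j w.2.2) ∂((((Measure.pi fun _ : Fin k => γ).prod (Measure.pi fun _ : Fin k => lam01))).prod (γ.prod lam01)) := by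
    conv_lhs => rw [← hmp.map_eq]
    rw [integral_map hmp.measurable.aemeasurable hgm.aestronglyMeasurable]
  have hgi := intB (μ := ((((Measure.pi fun _ : Fin k => γ).prod (Measure.pi fun _ : Fin k => lam01))).prod (γ.prod lam01))) (hgm.comp hmp.measurable) 1 (fun z => hgb _)
  simp only [Function.comp_def] at hgi
  rw [e1, integral_prod _ hgi]
  refine abs_integral_le fun z => ?_
  obtain ⟨F, X⟩ := z
  simp only
  have hm2 : Measurable (fun w : (SigmaSp Ω × SigmaSp Ω) × ℝ => g (Function.update F i w.1, Function.update X j w.2)) := by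
    have := (hgm.comp hmp.measurable).comp (measurable_prodMk_left (x := (F, X)) (β := (SigmaSp Ω × SigmaSp Ω) × ℝ))
    simp only [Function.comp_def] at this
    exact this
  rw [integral_prod _ (intB hm2 1 fun z => hgb _)]
  set Fp : SigmaSp Ω × SigmaSp Ω → ℝ := fun p => ∏ q ∈ T with q.1 = i, fac s a Q q (Function.update F i p) X with hFp
  set Gx : ℝ → ℝ := fun x => ∏ q ∈ T with ¬ q.1 = i, fac s a Q q F (Function.update X j x) with hGx
  have hsplit : ∀ p x, g (Function.update F i p, Function.update X j x) = Fp p * Gx x * Dk s (a i j) p x := by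
    intro p x
    simp only [hg, Function.update_self]
    congr 1
    rw [← Finset.prod_filter_mul_prod_filter_not T (fun q => q.1 = i)]
    congr 1
    · refine Finset.prod_congr rfl fun q hq => ?_
      rw [Finset.mem_filter, hT, Finset.mem_erase] at hq
      have : q.2 ≠ j := fun h => hq.1.1 (Prod.ext hq.2 h)
      simp [fac, Function.update_of_ne this]
    · refine Finset.prod_congr rfl fun q hq => ?_
      rw [Finset.mem_filter] at hq
      simp [fac, Function.update_of_ne hq.2]
  simp only [hsplit]
  have hu1 : Measurable (fun p : SigmaSp Ω × SigmaSp Ω => (Function.update F i p, X)) :=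
    (measurable_update F).prodMk measurable_const
  have hu2 : Measurable (fun x : ℝ => (F, Function.update X j x)) :=
    measurable_const.prodMk (measurable_update X)
  refine abs_bil_le (measurable_Dk hs (a i j)) (abs_Dk_le s (a i j)) (hc (a i j)) ?_ ?_ ?_ ?_ ?_ ?_
  · have := (measurable_prod_fac hs a Q (T.filter (fun q => q.1 = i))).comp hu1
    simp only [Function.comp_def] at this; exact this
  · have := (measurable_prod_fac hs a Q (T.filter (fun q => ¬ q.1 = i))).comp hu2
    simp only [Function.comp_def] at this; exact this
  · exact fun p => prod_fac_nonneg _ _ _ _ _ _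
  · exact fun p => prod_fac_le _ _ _ _ _ _
  · exact fun p => prod_fac_nonneg _ _ _ _ _ _
  · exact fun p => prod_fac_le _ _ _ _ _ _

lemma hyb_le (hs : Measurable s) {c : ℝ}
    (hc : ∀ ω : Ω, ∀ B U, MeasurableSet B → MeasurableSet U → |∫ p in B, ∫ x in U, Dk s ω p x ∂lam01 ∂γ| ≤ c)
    {k : ℕ} (a : Fin k → Fin k → Ω)
    (Q : Finset (Fin k × Fin k)) : |hyb γ s a Q - hyb γ s a ∅| ≤ Q.card * c := by
  classical
  induction Q using Finset.induction_on with
  | empty => simp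
  | insert q Q hq ih =>
    have := hyb_step hs hc a Q q hq
    rw [Finset.card_insert_of_notMem hq]
    push_cast
    have h3 := abs_sub_le (hyb γ s a (insert q Q)) (hyb γ s a Q) (hyb γ s a ∅)
    linarith
end

lemma int_map_prod {A A' B B' : Type*} [MeasurableSpace A] [MeasurableSpace A'] [MeasurableSpace B] [MeasurableSpace B']
    {a : Measure A} {a' : Measure A'} {b : Measure B} {b' : Measure B'} [IsProbabilityMeasure a]
    [IsProbabilityMeasure a'] [IsProbabilityMeasure b] [IsProbabilityMeasure b']
    {f : A → A'} {g : B → B'} (hf : MeasurePreserving f a a') (hg : MeasurePreserving g b b')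
    {h : A' → B' → ℝ} (hh : Measurable (fun z : A' × B' => h z.1 z.2)) (C : ℝ) (hb : ∀ x y, |h x y| ≤ C) :
    ∫ z, h (f z.1) (g z.2) ∂(a.prod b) = ∫ x, ∫ y, h x y ∂b' ∂a' := by
  rw [← integral_prod (fun z : A' × B' => h z.1 z.2) (intB hh C fun z => hb _ _)]
  have := (hf.prod hg)
  rw [← this.map_eq, integral_map this.measurable.aemeasurable hh.aestronglyMeasurable]
  rfl

lemma measurable_arr {k : ℕ} (a : Fin k → Fin k → Ω) :
    Measurable (fun z : (Fin k → SigmaSp Ω) × (Fin k → ℝ) => ∏ i, ∏ j, e (z.1 i) (z.2 j) (a i j)) :=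
  Finset.measurable_prod _ fun i _ => Finset.measurable_prod _ fun j _ => 
    measurable_e_comp ((measurable_pi_apply i).comp measurable_fst) ((measurable_pi_apply j).comp measurable_snd) _

lemma arr_bound {k : ℕ} (a : Fin k → Fin k → Ω) (f : Fin k → SigmaSp Ω) (x : Fin k → ℝ) :
    |∏ i, ∏ j, e (f i) (x j) (a i j)| ≤ 1 := by
  rw [abs_of_nonneg (Finset.prod_nonneg fun i _ => Finset.prod_nonneg fun j _ => e_nonneg _ _ _)]
  exact Finset.prod_le_one (fun i _ => Finset.prod_nonneg fun j _ => e_nonneg _ _ _) fun i _ =>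
    Finset.prod_le_one (fun j _ => e_nonneg _ _ _) fun j _ => e_le_one _ _ _

lemma counting {μ ν : PM Ω} {γ : Measure (SigmaSp Ω × SigmaSp Ω)} {s : ℝ → ℝ}
    (hγ : IsCoupling Ω μ ν γ) (hs : IsMPS s) {k : ℕ} (a : Fin k → Fin k → Ω) :
    |arrayProb Ω ν k a - arrayProb Ω μ k a| ≤ (k * k : ℕ) * (2 * cutPair Ω γ s) := by
  have := hγ.prob
  have hc : ∀ ω : Ω, ∀ B U, MeasurableSet B → MeasurableSet U →
      |∫ p in B, ∫ x in U, Dk s ω p x ∂lam01 ∂γ| ≤ 2 * cutPair Ω γ s := fun ω B U hB hU =>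
    (abs_le_two_tv (fun ω => ∫ p in B, ∫ x in U, Dk s ω p x ∂lam01 ∂γ) ω).trans
      (by have := le_cutPair hs.1 γ hB hU; linarith)
  have h1 := hyb_le hs.1.measurable hc a Finset.univ
  have e1 : hyb γ s a ∅ = arrayProb Ω μ k a := by
    rw [arrayProb_eq]
    have hm : MeasurePreserving (fun p : SigmaSp Ω × SigmaSp Ω => p.1) γ (μ : Measure (SigmaSp Ω)) :=
      ⟨measurable_fst, hγ.1⟩
    rw [← int_map_prod (measurePreserving_pi (fun _ : Fin k => γ) (fun _ => (μ : Measure (SigmaSp Ω))) (fun _ => hm))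
      (MeasurePreserving.id _) (measurable_arr a) 1 (arr_bound a)]
    unfold hyb fac
    simp only [Finset.notMem_empty, if_false, Fintype.prod_prod_type, id]
  have e2 : hyb γ s a Finset.univ = arrayProb Ω ν k a := by
    rw [arrayProb_eq]
    have hm : MeasurePreserving (fun p : SigmaSp Ω × SigmaSp Ω => p.2) γ (ν : Measure (SigmaSp Ω)) :=
      ⟨measurable_snd, hγ.2⟩
    rw [← int_map_prod (measurePreserving_pi (fun _ : Fin k => γ) (fun _ => (ν : Measure (SigmaSp Ω))) (fun _ => hm))
      (measurePreserving_pi (fun _ : Fin k => lam01) (fun _ => lam01) (fun _ => hs.1)) (measurable_arr a) 1 (arr_bound a)]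
    unfold hyb fac
    simp only [Finset.mem_univ, if_true, Fintype.prod_prod_type]
  rw [e1, e2] at h1
  simpa using h1

lemma forward (μn : ℕ → PM Ω) (μ : PM Ω) (h : Tendsto (fun n => cutd Ω (μn n) μ) atTop (nhds 0))
    (kk : ℕ) (a : Fin kk → Fin kk → Ω) :
    Tendsto (fun n => arrayProb Ω (μn n) kk a) atTop (nhds (arrayProb Ω μ kk a)) := by
  rw [tendsto_iff_dist_tendsto_zero]
  have hb : ∀ n, dist (arrayProb Ω (μn n) kk a) (arrayProb Ω μ kk a) ≤ (kk * kk : ℕ) * (2 * cutd Ω (μn n) μ) := by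
    intro n
    refine le_of_forall_pos_le_add fun ε hε => ?_
    set δ := ε / (2 * (kk * kk : ℕ) + 1) with hδ
    have hδ0 : 0 < δ := by positivity
    obtain ⟨γ, s, hγ, hs, hlt⟩ := exists_cutPair_lt (show cutd Ω (μn n) μ < cutd Ω (μn n) μ + δ by linarith)
    have h1 := counting hγ hs a
    rw [Real.dist_eq, abs_sub_comm]
    refine h1.trans ?_
    have h2 : (2 * (kk * kk : ℕ) + 1) * δ = ε := by rw [hδ]; field_simp
    have h3 : (0:ℝ) ≤ ((kk * kk : ℕ) : ℝ) := by positivity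
    nlinarith
  have h2 := (h.const_mul 2).const_mul ((kk * kk : ℕ) : ℝ)
  simp only [mul_zero] at h2
  exact squeeze_zero (fun _ => dist_nonneg) hb h2



/-! ### Fuzzy partitions and couplings -/

/-- fuzzy partition -/
structure FP {X U : Type*} [MeasurableSpace X] [Fintype U] (a : U → X → ℝ) : Prop where
  meas : ∀ u, Measurable (a u)
  nonneg : ∀ u x, 0 ≤ a u x
  sum_one : ∀ x, ∑ u, a u x = 1

lemma FP.le_one {X U : Type*} [MeasurableSpace X] [Fintype U] {a : U → X → ℝ} (h : FP a) (u : U) (x : X) :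
    a u x ≤ 1 := by
  rw [← h.sum_one x]
  exact Finset.single_le_sum (f := fun u => a u x) (fun i _ => h.nonneg i x) (Finset.mem_univ u)

lemma FP.abs_le {X U : Type*} [MeasurableSpace X] [Fintype U] {a : U → X → ℝ} (h : FP a) (u : U) (x : X) :
    |a u x| ≤ 1 := by
  rw [abs_of_nonneg (h.nonneg _ _)]; exact h.le_one _ _

section
variable {X U : Type*} [MeasurableSpace X] [Fintype U]

/-- coupling density -/
def dens (a a' : U → X → ℝ) (G : U → U → ℝ) (p : X × X) : ℝ :=
  ∑ i : U × U, a i.1 p.1 * a' i.2 p.2 * G i.1 i.2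

lemma dens_nonneg {a a' : U → X → ℝ} (ha : FP a) (ha' : FP a') {G : U → U → ℝ} (hG : ∀ u v, 0 ≤ G u v)
    (p : X × X) : 0 ≤ dens a a' G p :=
  Finset.sum_nonneg fun i _ => mul_nonneg (mul_nonneg (ha.nonneg _ _) (ha'.nonneg _ _)) (hG _ _)

lemma measurable_dens {a a' : U → X → ℝ} (ha : FP a) (ha' : FP a') (G : U → U → ℝ) :
    Measurable (dens a a' G) :=
  Finset.measurable_sum _ fun i _ =>
    (((ha.meas i.1).comp measurable_fst).mul ((ha'.meas i.2).comp measurable_snd)).mul_const _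

lemma dens_bound {a a' : U → X → ℝ} (ha : FP a) (ha' : FP a') (G : U → U → ℝ) (p : X × X) :
    |dens a a' G p| ≤ ∑ i : U × U, |G i.1 i.2| := by
  refine (Finset.abs_sum_le_sum_abs _ _).trans (Finset.sum_le_sum fun i _ => ?_)
  rw [abs_mul, abs_mul]
  have := mul_le_one₀ (ha.abs_le i.1 p.1) (abs_nonneg _) (ha'.abs_le i.2 p.2)
  exact mul_le_of_le_one_left (abs_nonneg _) this

/-- coupling measure -/
def cpl (α α' : Measure X) (a a' : U → X → ℝ) (G : U → U → ℝ) : Measure (X × X) :=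
  (α.prod α').withDensity (fun p => ENNReal.ofReal (dens a a' G p))

lemma integral_cpl (α α' : Measure X) [IsProbabilityMeasure α] [IsProbabilityMeasure α']
    {a a' : U → X → ℝ} (ha : FP a) (ha' : FP a') {G : U → U → ℝ} (hG : ∀ u v, 0 ≤ G u v)
    (F : X × X → ℝ) :
    ∫ p, F p ∂(cpl α α' a a' G) = ∫ p, dens a a' G p * F p ∂(α.prod α') := by
  unfold cpl
  rw [integral_withDensity_eq_integral_toReal_smul (measurable_dens ha ha' G).ennreal_ofReal
    (Eventually.of_forall fun _ => ENNReal.ofReal_lt_top)]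
  simp only [ENNReal.toReal_ofReal (dens_nonneg ha ha' hG _), smul_eq_mul]

lemma dens_integral_right (α' : Measure X) [IsProbabilityMeasure α']
    {a a' : U → X → ℝ} (ha' : FP a') (G : U → U → ℝ) (x : X) :
    ∫ y, dens a a' G (x, y) ∂α' = ∑ u, a u x * ∑ v, (∫ y, a' v y ∂α') * G u v := by
  unfold dens
  simp only
  rw [integral_finsetSum _ fun i _ => (((intB (ha'.meas i.2) 1 (ha'.abs_le _)).const_mul _).mul_const _)]
  rw [Fintype.sum_prod_type]
  refine Finset.sum_congr rfl fun u _ => ?_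
  rw [Finset.mul_sum]
  refine Finset.sum_congr rfl fun v _ => ?_
  rw [integral_mul_const, integral_const_mul]
  ring

lemma dens_integral_left (α : Measure X) [IsProbabilityMeasure α]
    {a a' : U → X → ℝ} (ha : FP a) (G : U → U → ℝ) (y : X) :
    ∫ x, dens a a' G (x, y) ∂α = ∑ v, a' v y * ∑ u, (∫ x, a u x ∂α) * G u v := by
  unfold dens
  simp only
  rw [integral_finsetSum _ fun i _ => (((intB (ha.meas i.1) 1 (ha.abs_le _)).mul_const _).mul_const _)]
  rw [Fintype.sum_prod_type_right]
  refine Finset.sum_congr rfl fun u _ => ?_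
  rw [Finset.mul_sum]
  refine Finset.sum_congr rfl fun v _ => ?_
  rw [integral_mul_const, integral_mul_const]
  ring

lemma wd_map_fst (α α' : Measure X) [IsProbabilityMeasure α] [IsProbabilityMeasure α']
    {h : X × X → ENNReal} (hm : Measurable h) (h1 : ∀ᵐ x ∂α, ∫⁻ y, h (x, y) ∂α' = 1) :
    ((α.prod α').withDensity h).map Prod.fst = α := by
  ext E hE
  rw [Measure.map_apply measurable_fst hE, withDensity_apply _ (measurable_fst hE)]
  have : (Prod.fst ⁻¹' E : Set (X × X)) = E ×ˢ univ := by ext; simp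
  rw [this, ← Measure.prod_restrict, Measure.restrict_univ, lintegral_prod _ hm.aemeasurable,
    lintegral_congr_ae (ae_restrict_of_ae h1)]
  simp

lemma wd_map_snd (α α' : Measure X) [IsProbabilityMeasure α] [IsProbabilityMeasure α']
    {h : X × X → ENNReal} (hm : Measurable h) (h1 : ∀ᵐ y ∂α', ∫⁻ x, h (x, y) ∂α = 1) :
    ((α.prod α').withDensity h).map Prod.snd = α' := by
  ext E hE
  rw [Measure.map_apply measurable_snd hE, withDensity_apply _ (measurable_snd hE)]
  have : (Prod.snd ⁻¹' E : Set (X × X)) = univ ×ˢ E := by ext; simp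
  rw [this, ← Measure.prod_restrict, Measure.restrict_univ, lintegral_prod_symm _ hm.aemeasurable,
    lintegral_congr_ae (ae_restrict_of_ae h1)]
  simp

/-! the matrix -/
open Classical in
/-- scale -/
def cc (p p' : U → ℝ) : ℝ := 1 - ∑ t, if 0 < p' t then |p t - p' t| / p' t else 0
open Classical in
/-- ratio -/
def rr (p p' : U → ℝ) (t : U) : ℝ := if 0 < p' t then cc p p' / p t else 0
open Classical in
/-- coupling matrix -/
def HH (p p' : U → ℝ) (t v : U) : ℝ := (if t = v then rr p p' t else 0) + (1 - rr p p' t * p' t)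

lemma cc_le {p p' : U → ℝ} {t : U} (ht : 0 < p' t) :
    cc p p' * p' t ≤ p t := by
  classical
  have h1 : |p t - p' t| / p' t ≤ ∑ t, if 0 < p' t then |p t - p' t| / p' t else 0 := by
    have := Finset.single_le_sum (f := fun t => if 0 < p' t then |p t - p' t| / p' t else 0)
      (s := Finset.univ) (fun i _ => by
        split_ifs with h
        · exact div_nonneg (abs_nonneg _) h.le
        · exact le_rfl) (Finset.mem_univ t)
    simpa [ht] using this
  have h2 : cc p p' ≤ 1 - |p t - p' t| / p' t := by unfold cc; linarith
  have h3 : (1 - |p t - p' t| / p' t) * p' t = p' t - |p t - p' t| := by field_simp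
  have h4 := mul_le_mul_of_nonneg_right h2 ht.le
  have h5 := neg_abs_le (p t - p' t)
  linarith

lemma p_pos {p p' : U → ℝ} (hc : 0 < cc p p') {t : U} (ht : 0 < p' t) : 0 < p t :=
  lt_of_lt_of_le (mul_pos hc ht) (cc_le ht)

lemma rr_nonneg {p p' : U → ℝ} (hc : 0 < cc p p') (t : U) : 0 ≤ rr p p' t := by
  unfold rr
  split_ifs with h
  · exact div_nonneg hc.le (p_pos hc h).le
  · rfl

lemma rr_mul_le {p p' : U → ℝ} (hc : 0 < cc p p') (t : U) : rr p p' t * p' t ≤ 1 := by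
  unfold rr
  split_ifs with h
  · rw [div_mul_eq_mul_div, div_le_one (p_pos hc h)]; exact cc_le h
  · simp

lemma HH_nonneg {p p' : U → ℝ} (hc : 0 < cc p p') (t v : U) : 0 ≤ HH p p' t v := by
  unfold HH
  have h1 := rr_nonneg hc t
  have h2 := rr_mul_le hc t
  split_ifs <;> linarith

lemma HH_row {p p' : U → ℝ} (hs : ∑ t, p' t = 1) (t : U) : ∑ v, p' v * HH p p' t v = 1 := by
  classical
  unfold HH
  simp only [mul_add, Finset.sum_add_distrib, mul_ite, mul_zero]
  rw [← Finset.sum_mul, hs]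
  simp
  ring

lemma HH_col {p p' : U → ℝ} (hc : 0 < cc p p') (hp' : ∀ t, 0 ≤ p' t) (hs : ∑ t, p' t = 1)
    (hs1 : ∑ t, p t = 1) {v : U} (hv : 0 < p' v) : ∑ t, p t * HH p p' t v = 1 := by
  classical
  have h0 : ∀ t, p t * (rr p p' t * p' t) = cc p p' * p' t := by
    intro t
    unfold rr
    split_ifs with h
    · have := (p_pos hc h).ne'
      field_simp
    · have : p' t = 0 := le_antisymm (not_lt.1 h) (hp' t)
      simp [this]
  unfold HH
  simp only [mul_add, mul_sub, Finset.sum_add_distrib, mul_ite, mul_zero, Finset.sum_sub_distrib, h0]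
  rw [← Finset.mul_sum, hs]
  simp only [mul_one, hs1]
  rw [Finset.sum_ite_eq' Finset.univ v]
  simp only [Finset.mem_univ, if_true]
  have : p v * rr p p' v = cc p p' := by
    unfold rr
    rw [if_pos hv]
    have := (p_pos hc hv).ne'
    field_simp
  linarith

lemma cc_tendsto {pn : ℕ → U → ℝ} {p' : U → ℝ} (h : ∀ t, Tendsto (fun n => pn n t) atTop (𝓝 (p' t))) :
    Tendsto (fun n => cc (pn n) p') atTop (𝓝 (cc p' p')) := by
  unfold cc
  refine tendsto_const_nhds.sub (tendsto_finsetSum _ fun t _ => ?_)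
  split_ifs
  · exact (((h t).sub_const _).abs).div_const _
  · exact tendsto_const_nhds

lemma cc_self (p' : U → ℝ) : cc p' p' = 1 := by simp [cc]

lemma HH_tendsto {pn : ℕ → U → ℝ} {p' : U → ℝ} (h : ∀ t, Tendsto (fun n => pn n t) atTop (𝓝 (p' t))) (t v : U) :
    Tendsto (fun n => HH (pn n) p' t v) atTop (𝓝 (HH p' p' t v)) := by
  have hr : Tendsto (fun n => rr (pn n) p' t) atTop (𝓝 (rr p' p' t)) := by
    unfold rr
    split_ifs with h0
    · exact (cc_tendsto h).div (h t) h0.ne'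
    · exact tendsto_const_nhds
  unfold HH
  refine Tendsto.add ?_ (tendsto_const_nhds.sub (hr.mul_const _))
  split_ifs
  · exact hr
  · exact tendsto_const_nhds

variable (α α' : Measure X) [IsProbabilityMeasure α] [IsProbabilityMeasure α']
    {a a' : U → X → ℝ} 

/-- masses -/
def mass (α : Measure X) (a : U → X → ℝ) (u : U) : ℝ := ∫ x, a u x ∂α

lemma mass_nonneg (ha : FP a) (u : U) : 0 ≤ mass α a u := integral_nonneg fun x => ha.nonneg u x
lemma mass_sum (ha : FP a) : ∑ u, mass α a u = 1 := by
  unfold mass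
  rw [← integral_finsetSum _ fun u _ => intB (ha.meas u) 1 (ha.abs_le u)]
  simp [ha.sum_one]

lemma mass_zero (ha : FP a) {u : U} (h : mass α a u = 0) : ∀ᵐ x ∂α, a u x = 0 :=
  (integral_eq_zero_iff_of_nonneg (fun x => ha.nonneg u x) (intB (ha.meas u) 1 (ha.abs_le u))).1 h

/-- the coupling -/
def cpH (a a' : U → X → ℝ) : Measure (X × X) := cpl α α' a a' (HH (mass α a) (mass α' a'))

lemma cpH_fst (ha : FP a) (ha' : FP a') (hc : 0 < cc (mass α a) (mass α' a')) :
    (cpH α α' a a').map Prod.fst = α := by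
  refine wd_map_fst _ _ (measurable_dens ha ha' _).ennreal_ofReal (Eventually.of_forall fun x => ?_)
  have hn := dens_nonneg ha ha' (HH_nonneg hc)
  have hm : Measurable (fun y => dens a a' (HH (mass α a) (mass α' a')) (x, y)) :=
    (measurable_dens ha ha' _).comp measurable_prodMk_left
  rw [← ofReal_integral_eq_lintegral_ofReal (intB hm _ fun y => dens_bound ha ha' _ _)
    (Eventually.of_forall fun y => hn _), dens_integral_right _ ha']
  change ENNReal.ofReal (∑ u, a u x * ∑ v, mass α' a' v * HH (mass α a) (mass α' a') u v) = 1
  simp only [HH_row (mass_sum α' ha'), mul_one, ha.sum_one, ENNReal.ofReal_one]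

lemma cpH_snd (ha : FP a) (ha' : FP a') (hc : 0 < cc (mass α a) (mass α' a')) :
    (cpH α α' a a').map Prod.snd = α' := by
  have hz : ∀ᵐ y ∂α', ∀ u, mass α' a' u = 0 → a' u y = 0 := by
    rw [ae_all_iff]
    intro u
    by_cases h : mass α' a' u = 0
    · filter_upwards [mass_zero α' ha' h] with y hy _ using hy
    · exact Eventually.of_forall fun y h2 => absurd h2 h
  refine wd_map_snd _ _ (measurable_dens ha ha' _).ennreal_ofReal ?_
  filter_upwards [hz] with y hy
  have hn := dens_nonneg ha ha' (HH_nonneg hc)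
  have hm : Measurable (fun x => dens a a' (HH (mass α a) (mass α' a')) (x, y)) :=
    (measurable_dens ha ha' _).comp measurable_prodMk_right
  rw [← ofReal_integral_eq_lintegral_ofReal (intB hm _ fun y => dens_bound ha ha' _ _)
    (Eventually.of_forall fun y => hn _), dens_integral_left _ ha]
  change ENNReal.ofReal (∑ v, a' v y * ∑ u, mass α a u * HH (mass α a) (mass α' a') u v) = 1
  have : ∀ v, a' v y * ∑ u, mass α a u * HH (mass α a) (mass α' a') u v = a' v y := by
    intro v
    by_cases h : mass α' a' v = 0
    · rw [hy v h, zero_mul]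
    · rw [HH_col hc (mass_nonneg α' ha') (mass_sum α' ha') (mass_sum α ha)
        (lt_of_le_of_ne (mass_nonneg α' ha' v) (Ne.symm h)), mul_one]
  simp only [this, ha'.sum_one, ENNReal.ofReal_one]

lemma cpH_prob (ha : FP a) (ha' : FP a') (hc : 0 < cc (mass α a) (mass α' a')) :
    IsProbabilityMeasure (cpH α α' a a') := by
  have h := cpH_fst α α' ha ha' hc
  constructor
  have h2 : ((cpH α α' a a').map Prod.fst) univ = 1 := by rw [h]; simp
  rwa [Measure.map_apply measurable_fst MeasurableSet.univ, preimage_univ] at h2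

/-- self-coupling estimate -/
lemma self_est (ha : FP a) {F : X → ℝ} (hF : Measurable F) (hF1 : ∀ x, |F x| ≤ 1)
    (g : U → ℝ) :
    ∫ q, |F q.1 - F q.2| ∂(cpH α α a a) ≤ 2 * ∑ u, ∫ x, a u x * |F x - g u| ∂α := by
  classical
  have hc : 0 < cc (mass α a) (mass α a) := by rw [cc_self]; norm_num
  have hz : ∀ᵐ y ∂α, ∀ u, mass α a u = 0 → a u y = 0 := by
    rw [ae_all_iff]
    intro u
    by_cases h : mass α a u = 0
    · filter_upwards [mass_zero α ha h] with y hy _ using hy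
    · exact Eventually.of_forall fun y h2 => absurd h2 h
  have hz1 : ∀ᵐ p ∂(α.prod α), ∀ u, mass α a u = 0 → a u p.1 = 0 :=
    Measure.quasiMeasurePreserving_fst.ae hz
  unfold cpH
  rw [integral_cpl α α ha ha (HH_nonneg hc)]
  set R : U → ℝ := rr (mass α a) (mass α a) with hR
  have e1 : ∀ᵐ p ∂(α.prod α), dens a a (HH (mass α a) (mass α a)) p = ∑ u, R u * (a u p.1 * a u p.2) := by
    filter_upwards [hz1] with p hp
    unfold dens
    rw [Fintype.sum_prod_type]
    refine Finset.sum_congr rfl fun u _ => ?_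
    simp only [HH]
    by_cases h : mass α a u = 0
    · simp [hp u h]
    · have hpos : 0 < mass α a u := lt_of_le_of_ne (mass_nonneg α ha u) (Ne.symm h)
      have : 1 - rr (mass α a) (mass α a) u * mass α a u = 0 := by
        simp only [rr, hpos, if_true, cc_self]; field_simp; ring
      simp only [this, add_zero, mul_ite, mul_zero]
      rw [Finset.sum_ite_eq Finset.univ u]
      simp only [Finset.mem_univ, if_true, hR]
      ring
  have hR0 : ∀ u, 0 ≤ R u := rr_nonneg hc
  set f : U → X → ℝ := fun u x => a u x * |F x - g u| with hf
  have hfm : ∀ u, Measurable (f u) := fun u => (ha.meas u).mul ((hF.sub_const _).abs)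
  have hfb : ∀ u x, |f u x| ≤ 1 + |g u| := fun u x => by
    simp only [hf, abs_mul, abs_abs]
    have h1 := ha.abs_le u x
    have h2 := abs_sub (F x) (g u)
    have h3 := hF1 x
    calc _ ≤ 1 * (1 + |g u|) := mul_le_mul h1 (by linarith) (abs_nonneg _) (by norm_num)
      _ = _ := one_mul _
  have hfi : ∀ u, Integrable (f u) α := fun u => intB (hfm u) _ (hfb u)
  have hai : ∀ u, Integrable (a u) α := fun u => intB (ha.meas u) 1 (ha.abs_le u)
  have hi1 : ∀ u, Integrable (fun p : X × X => f u p.1 * a u p.2) (α.prod α) := fun u => (hfi u).mul_prod (hai u)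
  have hi2 : ∀ u, Integrable (fun p : X × X => a u p.1 * f u p.2) (α.prod α) := fun u => (hai u).mul_prod (hfi u)
  calc ∫ p, dens a a (HH (mass α a) (mass α a)) p * |F p.1 - F p.2| ∂(α.prod α)
      ≤ ∫ p, ∑ u, R u * (f u p.1 * a u p.2 + a u p.1 * f u p.2) ∂(α.prod α) := by
        refine integral_mono_ae ?_ (integrable_finsetSum _ fun u _ => ((hi1 u).add (hi2 u)).const_mul _) ?_
        · refine intB ((measurable_dens ha ha _).mul (((hF.comp measurable_fst).sub (hF.comp measurable_snd)).abs)) ((∑ i : U × U, |HH (mass α a) (mass α a) i.1 i.2|) * 2) fun p => ?_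
          rw [abs_mul, abs_abs]
          refine mul_le_mul (dens_bound ha ha _ _) ?_ (abs_nonneg _) (Finset.sum_nonneg fun _ _ => abs_nonneg _)
          have := abs_sub (F p.1) (F p.2)
          linarith [hF1 p.1, hF1 p.2]
        · filter_upwards [e1] with p hp
          rw [hp, Finset.sum_mul]
          refine Finset.sum_le_sum fun u _ => ?_
          rw [mul_assoc]
          refine mul_le_mul_of_nonneg_left ?_ (hR0 u)
          have h1 : |F p.1 - F p.2| ≤ |F p.1 - g u| + |F p.2 - g u| := by
            have := abs_sub_le (F p.1) (g u) (F p.2)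
            rwa [abs_sub_comm (g u)] at this
          have h2 := mul_nonneg (ha.nonneg u p.1) (ha.nonneg u p.2)
          have := mul_le_mul_of_nonneg_left h1 h2
          simp only [hf]
          linarith
    _ = ∑ u, R u * (2 * ((∫ x, f u x ∂α) * mass α a u)) := by
        have hi3 : ∀ u, Integrable (fun p : X × X => R u * (f u p.1 * a u p.2 + a u p.1 * f u p.2)) (α.prod α) :=
          fun u => ((hi1 u).add (hi2 u)).const_mul _
        rw [integral_finsetSum _ fun u _ => hi3 u]
        refine Finset.sum_congr rfl fun u _ => ?_
        rw [integral_const_mul]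
        congr 1
        rw [integral_add (hi1 u) (hi2 u), integral_prod_mul, integral_prod_mul]
        unfold mass
        ring
    _ ≤ _ := by
        rw [Finset.mul_sum]
        refine Finset.sum_le_sum fun u _ => ?_
        have h1 := rr_mul_le hc u
        have h2 : 0 ≤ ∫ x, f u x ∂α := integral_nonneg fun x => mul_nonneg (ha.nonneg _ _) (abs_nonneg _)
        have h3 := mul_le_mul_of_nonneg_left h1 h2
        simp only [hR]
        linarith

end


/-! ### The four-cycle functional -/
section
variable {R C U T : Type*} [MeasurableSpace R] [MeasurableSpace C] [Fintype U] [Fintype T]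

/-- difference -/
def Dq (W : R → C → ℝ) (p : R × R) (q : C × C) : ℝ := W p.1 q.1 - W p.2 q.2

/-- four-cycle functional -/
def Zq (W : R → C → ℝ) (γ : Measure (R × R)) (π : Measure (C × C)) : ℝ :=
  ∫ z, Dq W z.1.1 z.2.1 * Dq W z.1.1 z.2.2 * (Dq W z.1.2 z.2.1 * Dq W z.1.2 z.2.2)
    ∂((γ.prod γ).prod (π.prod π))

/-- optional factor -/
def wb (b : Bool) (w : ℝ) : ℝ := if b then w else 1
/-- sign -/
def sg (b : Bool) : ℝ := if b then 1 else -1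

lemma sub_eq_sum_wb (w w' : ℝ) : w - w' = ∑ b : Bool, sg b * (wb b w * wb (!b) w') := by
  simp [wb, sg]; ring

/-- index for one side -/
abbrev Idx (U T : Type*) := (U × U) × (T × T) × ((Bool × Bool) × (Bool × Bool))

/-- integrand for one side -/
def momf (a : U → R → ℝ) (φ : T → C → ℝ) (W : R → C → ℝ) (i : Idx U T) (z : (R × R) × (C × C)) : ℝ :=
  (a i.1.1 z.1.1 * a i.1.2 z.1.2) * (φ i.2.1.1 z.2.1 * φ i.2.1.2 z.2.2) *
    ((wb i.2.2.1.1 (W z.1.1 z.2.1) * wb i.2.2.1.2 (W z.1.1 z.2.2)) *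
      (wb i.2.2.2.1 (W z.1.2 z.2.1) * wb i.2.2.2.2 (W z.1.2 z.2.2)))

/-- moment for one side -/
def mom (ρ : Measure R) (κ : Measure C) (a : U → R → ℝ) (φ : T → C → ℝ) (W : R → C → ℝ) (i : Idx U T) : ℝ :=
  ∫ z, momf a φ W i z ∂((ρ.prod ρ).prod (κ.prod κ))

/-- joint index -/
abbrev JIdx (U T : Type*) := (((U × U) × (U × U)) × ((T × T) × (T × T))) × ((Bool × Bool) × (Bool × Bool))

/-- first side -/
def pk1 (j : JIdx U T) : Idx U T :=
  ((j.1.1.1.1, j.1.1.2.1), (j.1.2.1.1, j.1.2.2.1), j.2)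
/-- second side -/
def pk2 (j : JIdx U T) : Idx U T :=
  ((j.1.1.1.2, j.1.1.2.2), (j.1.2.1.2, j.1.2.2.2), ((!j.2.1.1, !j.2.1.2), (!j.2.2.1, !j.2.2.2)))
/-- coefficient -/
def coef (G : U → U → ℝ) (H : T → T → ℝ) (j : JIdx U T) : ℝ :=
  (G j.1.1.1.1 j.1.1.1.2 * G j.1.1.2.1 j.1.1.2.2) * (H j.1.2.1.1 j.1.2.1.2 * H j.1.2.2.1 j.1.2.2.2) *
    ((sg j.2.1.1 * sg j.2.1.2) * (sg j.2.2.1 * sg j.2.2.2))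

lemma sum_mul_sum_pair {I J : Type*} [Fintype I] [Fintype J] (A : I → ℝ) (B : J → ℝ) :
    (∑ i, A i) * (∑ j, B j) = ∑ x : I × J, A x.1 * B x.2 := by
  rw [Fintype.sum_mul_sum, Fintype.sum_prod_type]

lemma integrand_expand (a a' : U → R → ℝ) (φ φ' : T → C → ℝ) (W : R → C → ℝ) (G : U → U → ℝ) (H : T → T → ℝ)
    (p1 p2 : R × R) (q1 q2 : C × C) :
    (dens a a' G p1 * dens a a' G p2) * (dens φ φ' H q1 * dens φ φ' H q2) *
      ((Dq W p1 q1 * Dq W p1 q2) * (Dq W p2 q1 * Dq W p2 q2)) =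
    ∑ j : JIdx U T, coef G H j * (momf a φ W (pk1 j) ((p1.1, p2.1), (q1.1, q2.1)) *
      momf a' φ' W (pk2 j) ((p1.2, p2.2), (q1.2, q2.2))) := by
  unfold dens Dq
  simp only [sub_eq_sum_wb]
  simp only [sum_mul_sum_pair]
  refine Finset.sum_congr rfl fun j _ => ?_
  simp only [coef, momf, pk1, pk2]
  ring

lemma abs_wb_le (b : Bool) {w : ℝ} (h : |w| ≤ 1) : |wb b w| ≤ 1 := by
  unfold wb; split_ifs <;> simp [h]

lemma abs_mul_le_one {x y : ℝ} (hx : |x| ≤ 1) (hy : |y| ≤ 1) : |x * y| ≤ 1 := by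
  rw [abs_mul]; exact mul_le_one₀ hx (abs_nonneg _) hy

lemma momf_bound {a : U → R → ℝ} {φ : T → C → ℝ} (ha : FP a) (hφ : FP φ) {W : R → C → ℝ} (hW : ∀ r c, |W r c| ≤ 1)
    (i : Idx U T) (z : (R × R) × (C × C)) : |momf a φ W i z| ≤ 1 := by
  unfold momf
  refine abs_mul_le_one (abs_mul_le_one (abs_mul_le_one (ha.abs_le _ _) (ha.abs_le _ _))
    (abs_mul_le_one (hφ.abs_le _ _) (hφ.abs_le _ _))) (abs_mul_le_one (abs_mul_le_one ?_ ?_) (abs_mul_le_one ?_ ?_)) <;>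
  exact abs_wb_le _ (hW _ _)

lemma measurable_wb {α : Type*} [MeasurableSpace α] (b : Bool) {f : α → ℝ} (hf : Measurable f) :
    Measurable (fun x => wb b (f x)) := by
  unfold wb; split_ifs
  · exact hf
  · exact measurable_const

lemma meas_W {W : R → C → ℝ} (hW : Measurable (fun z : R × C => W z.1 z.2)) {α : Type*} [MeasurableSpace α]
    {f : α → R} {g : α → C} (hf : Measurable f) (hg : Measurable g) : Measurable (fun z => W (f z) (g z)) := by
  have := hW.comp (hf.prodMk hg)
  simpa only [Function.comp_def] using this

lemma measurable_momf {a : U → R → ℝ} {φ : T → C → ℝ} (ha : FP a) (hφ : FP φ) {W : R → C → ℝ}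
    (hW : Measurable (fun z : R × C => W z.1 z.2)) (i : Idx U T) : Measurable (momf a φ W i) := by
  unfold momf
  have m11 : Measurable (fun z : (R × R) × (C × C) => z.1.1) := by fun_prop
  have m12 : Measurable (fun z : (R × R) × (C × C) => z.1.2) := by fun_prop
  have m21 : Measurable (fun z : (R × R) × (C × C) => z.2.1) := by fun_prop
  have m22 : Measurable (fun z : (R × R) × (C × C) => z.2.2) := by fun_prop
  refine Measurable.mul (Measurable.mul (Measurable.mul ((ha.meas _).comp m11) ((ha.meas _).comp m12))
    (Measurable.mul ((hφ.meas _).comp m21) ((hφ.meas _).comp m22))) (Measurable.mul (Measurable.mul ?_ ?_) (Measurable.mul ?_ ?_))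
  · exact measurable_wb _ (meas_W hW m11 m21)
  · exact measurable_wb _ (meas_W hW m11 m22)
  · exact measurable_wb _ (meas_W hW m12 m21)
  · exact measurable_wb _ (meas_W hW m12 m22)

variable {ρ ρ' : Measure R} {κ κ' : Measure C} [IsProbabilityMeasure ρ] [IsProbabilityMeasure ρ']
  [IsProbabilityMeasure κ] [IsProbabilityMeasure κ']

lemma Zq_expand {a a' : U → R → ℝ} {φ φ' : T → C → ℝ} (ha : FP a) (ha' : FP a') (hφ : FP φ) (hφ' : FP φ')
    {W : R → C → ℝ} (hW : Measurable (fun z : R × C => W z.1 z.2)) (hWb : ∀ r c, |W r c| ≤ 1)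
    {G : U → U → ℝ} {H : T → T → ℝ} (hG : ∀ u v, 0 ≤ G u v) (hH : ∀ u v, 0 ≤ H u v) :
    Zq W (cpl ρ ρ' a a' G) (cpl κ κ' φ φ' H) =
      ∑ j : JIdx U T, coef G H j * (mom ρ κ a φ W (pk1 j) * mom ρ' κ' a' φ' W (pk2 j)) := by
  unfold Zq cpl
  have mG := (measurable_dens ha ha' G).ennreal_ofReal
  have mH := (measurable_dens hφ hφ' H).ennreal_ofReal
  have mG2 : Measurable (fun z : (R × R) × (R × R) => ENNReal.ofReal (dens a a' G z.1) * ENNReal.ofReal (dens a a' G z.2)) :=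
    (mG.comp measurable_fst).mul (mG.comp measurable_snd)
  have mH2 : Measurable (fun z : (C × C) × (C × C) => ENNReal.ofReal (dens φ φ' H z.1) * ENNReal.ofReal (dens φ φ' H z.2)) :=
    (mH.comp measurable_fst).mul (mH.comp measurable_snd)
  rw [prod_withDensity mG mG, prod_withDensity mH mH, prod_withDensity mG2 mH2]
  have m4 : Measurable (fun z : ((R × R) × (R × R)) × ((C × C) × (C × C)) =>
      ENNReal.ofReal (dens a a' G z.1.1) * ENNReal.ofReal (dens a a' G z.1.2) *
          (ENNReal.ofReal (dens φ φ' H z.2.1) * ENNReal.ofReal (dens φ φ' H z.2.2))) :=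
    (mG2.comp measurable_fst).mul (mH2.comp measurable_snd)
  rw [integral_withDensity_eq_integral_toReal_smul m4
    (Eventually.of_forall fun _ => by finiteness)]
  simp only [ENNReal.toReal_mul, ENNReal.toReal_ofReal (dens_nonneg ha ha' hG _),
    ENNReal.toReal_ofReal (dens_nonneg hφ hφ' hH _), smul_eq_mul, integrand_expand]
  have hmp : MeasurePreserving (fun z : ((R × R) × (R × R)) × ((C × C) × (C × C)) =>
      (((z.1.1.1, z.1.2.1), (z.2.1.1, z.2.2.1)), ((z.1.1.2, z.1.2.2), (z.2.1.2, z.2.2.2))))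
      (((ρ.prod ρ').prod (ρ.prod ρ')).prod ((κ.prod κ').prod (κ.prod κ')))
      (((ρ.prod ρ).prod (κ.prod κ)).prod ((ρ'.prod ρ').prod (κ'.prod κ'))) :=
    (mp_shuffle (ρ.prod ρ) (ρ'.prod ρ') (κ.prod κ) (κ'.prod κ')).comp
      ((mp_shuffle ρ ρ' ρ ρ').prod (mp_shuffle κ κ' κ κ'))
  have hmeas : ∀ j : JIdx U T, Measurable (fun z : ((R × R) × (C × C)) × ((R × R) × (C × C)) => momf a φ W (pk1 j) z.1 * momf a' φ' W (pk2 j) z.2) := fun j =>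
    ((measurable_momf ha hφ hW _).comp measurable_fst).mul ((measurable_momf ha' hφ' hW _).comp measurable_snd)
  rw [integral_finsetSum]
  · refine Finset.sum_congr rfl fun j _ => ?_
    rw [integral_const_mul]
    congr 1
    unfold mom
    rw [← integral_prod_mul, ← hmp.map_eq, integral_map hmp.measurable.aemeasurable (hmeas j).aestronglyMeasurable]
  · intro j _
    have h := (intB (μ := (((ρ.prod ρ').prod (ρ.prod ρ')).prod ((κ.prod κ').prod (κ.prod κ')))) ((hmeas j).comp hmp.measurable) 1
      (fun z => abs_mul_le_one (momf_bound ha hφ hWb _ _) (momf_bound ha' hφ' hWb _ _))).const_mul (coef G H j)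
    exact h

lemma abs_Dq_le {W : R → C → ℝ} (hW0 : ∀ r c, 0 ≤ W r c) (hW1 : ∀ r c, W r c ≤ 1) (p : R × R) (q : C × C) :
    |Dq W p q| ≤ 1 := abs_sub_le_one (hW0 _ _) (hW1 _ _) (hW0 _ _) (hW1 _ _)

lemma measurable_Dq {W : R → C → ℝ} (hW : Measurable (fun z : R × C => W z.1 z.2)) :
    Measurable (fun z : (R × R) × (C × C) => Dq W z.1 z.2) :=
  (meas_W hW (by fun_prop) (by fun_prop)).sub (meas_W hW (by fun_prop) (by fun_prop))

lemma meas_Dq {W : R → C → ℝ} (hW : Measurable (fun z : R × C => W z.1 z.2)) {α : Type*} [MeasurableSpace α]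
    {f : α → R × R} {g : α → C × C} (hf : Measurable f) (hg : Measurable g) : Measurable (fun z => Dq W (f z) (g z)) := by
  have := (measurable_Dq hW).comp (hf.prodMk hg)
  simpa only [Function.comp_def] using this

/-- the correlation kernel -/
def Kq (W : R → C → ℝ) (π : Measure (C × C)) (p : (R × R) × (R × R)) : ℝ := ∫ q, Dq W p.1 q * Dq W p.2 q ∂π

lemma Zq_eq {W : R → C → ℝ} (hW : Measurable (fun z : R × C => W z.1 z.2))
    (hW0 : ∀ r c, 0 ≤ W r c) (hW1 : ∀ r c, W r c ≤ 1) 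
    (γ : Measure (R × R)) (π : Measure (C × C)) [IsProbabilityMeasure γ] [IsProbabilityMeasure π] :
    Zq W γ π = ∫ p, (Kq W π p) ^ 2 ∂(γ.prod γ) := by
  have hD := abs_Dq_le hW0 hW1
  unfold Zq
  rw [integral_prod]
  · refine integral_congr_ae (Eventually.of_forall fun p => ?_)
    simp only [Kq, sq]
    rw [← integral_prod_mul]
    refine integral_congr_ae (Eventually.of_forall fun q => ?_)
    simp only
    ring
  · refine intB (Measurable.mul (Measurable.mul ?_ ?_) (Measurable.mul ?_ ?_)) 1 fun z => abs_mul_le_one (abs_mul_le_one (hD _ _) (hD _ _))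
      (abs_mul_le_one (hD _ _) (hD _ _)) <;>
    exact meas_Dq hW (by fun_prop) (by fun_prop)

/-- trivial upper bound by the L1 distance -/
lemma Zq_le_L1 {W : R → C → ℝ} (hW : Measurable (fun z : R × C => W z.1 z.2))
    (hW0 : ∀ r c, 0 ≤ W r c) (hW1 : ∀ r c, W r c ≤ 1) 
    (γ : Measure (R × R)) (π : Measure (C × C)) [IsProbabilityMeasure γ] [IsProbabilityMeasure π] :
    Zq W γ π ≤ ∫ p, ∫ q, |Dq W p q| ∂π ∂γ := by
  have hD := abs_Dq_le hW0 hW1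
  have hm : Measurable (fun z : ((R × R) × (R × R)) × (C × C) => Dq W z.1.1 z.2 * Dq W z.1.2 z.2) :=
    (meas_Dq hW (by fun_prop) (by fun_prop)).mul (meas_Dq hW (by fun_prop) (by fun_prop))
  have hKm : Measurable (Kq W π) := meas_int_right (D := fun (p : (R × R) × (R × R)) q => Dq W p.1 q * Dq W p.2 q) hm
  have hm1 : Measurable (fun p : R × R => ∫ q, |Dq W p q| ∂π) :=
    meas_int_right (D := fun p q => |Dq W p q|) (measurable_Dq hW).abs
  have hKb : ∀ p, |Kq W π p| ≤ 1 := fun p => abs_integral_le fun q => abs_mul_le_one (hD _ _) (hD _ _)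
  have hb1 : ∀ p : R × R, |∫ q, |Dq W p q| ∂π| ≤ 1 := fun p => abs_integral_le fun q => by rw [abs_abs]; exact hD _ _
  rw [Zq_eq hW hW0 hW1]
  have h1 : ∀ p, (Kq W π p) ^ 2 ≤ ∫ q, |Dq W p.1 q| ∂π := by
    intro p
    have h2 : |Kq W π p| ≤ ∫ q, |Dq W p.1 q| ∂π := by
      refine (abs_integral_le_integral_abs).trans (integral_mono ?_ ?_ fun q => ?_)
      · exact (intB ((meas_Dq hW measurable_const measurable_id).mul (meas_Dq hW measurable_const measurable_id)) 1
          fun q => abs_mul_le_one (hD _ _) (hD _ _)).abs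
      · exact (intB (meas_Dq hW measurable_const measurable_id) 1 fun q => hD _ _).abs
      · simp only [abs_mul]
        exact mul_le_of_le_one_right (abs_nonneg _) (hD _ _)
    rw [← sq_abs]
    have := hKb p
    nlinarith [abs_nonneg (Kq W π p)]
  calc ∫ p, (Kq W π p) ^ 2 ∂(γ.prod γ) ≤ ∫ p, (∫ q, |Dq W p.1 q| ∂π) ∂(γ.prod γ) := by
        refine integral_mono (intB (hKm.pow_const 2) 1 fun p => ?_) (intB (hm1.comp measurable_fst) 1 fun p => hb1 _) h1
        rw [sq]; exact abs_mul_le_one (hKb p) (hKb p)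
    _ = _ := by
        have hi : Integrable (fun p : (R × R) × (R × R) => ∫ q, |Dq W p.1 q| ∂π) (γ.prod γ) :=
          intB (hm1.comp measurable_fst) 1 fun p => hb1 _
        rw [integral_prod _ hi]
        simp

lemma sq_integral_le {α : Type*} [MeasurableSpace α] {μ : Measure α} [IsProbabilityMeasure μ] {f : α → ℝ}
    (hf : Measurable f) {C : ℝ} (hC : ∀ x, |f x| ≤ C) : (∫ x, f x ∂μ) ^ 2 ≤ ∫ x, f x ^ 2 ∂μ := by
  set m := ∫ x, f x ∂μ with hm
  have hi := intB (μ := μ) hf C hC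
  have hi2 : Integrable (fun x => f x ^ 2) μ := intB (hf.pow_const 2) (C ^ 2) fun x => by
    rw [abs_pow]; exact pow_le_pow_left₀ (abs_nonneg _) (hC x) 2
  have : 0 ≤ ∫ x, (f x - m) ^ 2 ∂μ := integral_nonneg fun x => sq_nonneg _
  have h2 : ∫ x, (f x - m) ^ 2 ∂μ = (∫ x, f x ^ 2 ∂μ) - m ^ 2 := by
    have : ∀ x, (f x - m) ^ 2 = (f x ^ 2 - 2 * m * f x) + m ^ 2 := fun x => by ring
    simp only [this]
    have hi3 : Integrable (fun x => f x ^ 2 - 2 * m * f x) μ := hi2.sub (hi.const_mul _)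
    rw [integral_add hi3 (integrable_const _), integral_sub hi2 (hi.const_mul _), integral_const_mul]
    simp [← hm]
    ring
  linarith

/-- cut norm is controlled by the four-cycle functional -/
lemma cut_le_Z {W : R → C → ℝ} (hW : Measurable (fun z : R × C => W z.1 z.2))
    (hW0 : ∀ r c, 0 ≤ W r c) (hW1 : ∀ r c, W r c ≤ 1) 
    (γ : Measure (R × R)) (π : Measure (C × C)) [IsProbabilityMeasure γ] [IsProbabilityMeasure π]
    {B : Set (R × R)} {V : Set (C × C)} (hB : MeasurableSet B) (hV : MeasurableSet V) :
    (∫ p in B, ∫ q in V, Dq W p q ∂π ∂γ) ^ 4 ≤ Zq W γ π := by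
  classical
  have hD := abs_Dq_le hW0 hW1
  set b : R × R → ℝ := B.indicator 1 with hb
  set v : C × C → ℝ := V.indicator 1 with hv
  have hbm : Measurable b := measurable_const.indicator hB
  have hvm : Measurable v := measurable_const.indicator hV
  have hb1 : ∀ p, |b p| ≤ 1 := fun p => by by_cases h : p ∈ B <;> simp [hb, h]
  have hv1 : ∀ p, |v p| ≤ 1 := fun p => by by_cases h : p ∈ V <;> simp [hv, h]
  have e1 : (∫ p in B, ∫ q in V, Dq W p q ∂π ∂γ) = ∫ q, v q * ∫ p, b p * Dq W p q ∂γ ∂π := by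
    rw [← integral_indicator hB]
    have : ∀ p, B.indicator (fun p => ∫ q in V, Dq W p q ∂π) p = ∫ q, v q * (b p * Dq W p q) ∂π := by
      intro p
      by_cases h : p ∈ B
      · rw [indicator_of_mem h, ← integral_indicator hV]
        refine integral_congr_ae (Eventually.of_forall fun q => ?_)
        by_cases h' : q ∈ V <;> simp [hb, hv, h, h']
      · simp [h, hb]
    simp only [this]
    rw [integral_integral_swap (f := fun p q => v q * (b p * Dq W p q))]
    · simp only [integral_const_mul]
    · exact intB ((hvm.comp measurable_snd).mul ((hbm.comp measurable_fst).mul (measurable_Dq hW))) 1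
        fun z => abs_mul_le_one (hv1 _) (abs_mul_le_one (hb1 _) (hD _ _))
  set g : C × C → ℝ := fun q => ∫ p, b p * Dq W p q ∂γ with hg
  have hbD : Measurable (fun z : (R × R) × (C × C) => b z.1 * Dq W z.1 z.2) := (hbm.comp measurable_fst).mul (measurable_Dq hW)
  have hgm : Measurable g := meas_int_left (D := fun p q => b p * Dq W p q) hbD
  have hg1 : ∀ q, |g q| ≤ 1 := fun q => abs_integral_le fun p => abs_mul_le_one (hb1 _) (hD _ _)
  have hm : Measurable (fun z : ((R × R) × (R × R)) × (C × C) => Dq W z.1.1 z.2 * Dq W z.1.2 z.2) :=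
    (meas_Dq hW (by fun_prop) (by fun_prop)).mul (meas_Dq hW (by fun_prop) (by fun_prop))
  have hKm : Measurable (Kq W π) := meas_int_right (D := fun (p : (R × R) × (R × R)) q => Dq W p.1 q * Dq W p.2 q) hm
  have hKb : ∀ p, |Kq W π p| ≤ 1 := fun p => abs_integral_le fun q => abs_mul_le_one (hD _ _) (hD _ _)
  have e2 : (∫ q, v q * g q ∂π) ^ 2 ≤ ∫ q, g q ^ 2 ∂π := by
    refine (sq_integral_le (hvm.mul hgm) (C := 1) fun q => abs_mul_le_one (hv1 _) (hg1 _)).trans ?_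
    refine integral_mono (intB ((hvm.mul hgm).pow_const 2) 1 fun q => ?_) (intB (hgm.pow_const 2) 1 fun q => ?_) fun q => ?_
    · rw [sq]; exact abs_mul_le_one (abs_mul_le_one (hv1 _) (hg1 _)) (abs_mul_le_one (hv1 _) (hg1 _))
    · rw [sq]; exact abs_mul_le_one (hg1 _) (hg1 _)
    · show (v q * g q) ^ 2 ≤ g q ^ 2
      rw [mul_pow]
      refine mul_le_of_le_one_left (sq_nonneg _) ?_
      rw [← sq_abs]; exact pow_le_one₀ (abs_nonneg _) (hv1 q)
  have e3 : ∫ q, g q ^ 2 ∂π = ∫ p, b p.1 * b p.2 * Kq W π p ∂(γ.prod γ) := by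
    have : ∀ q, g q ^ 2 = ∫ p, b p.1 * b p.2 * (Dq W p.1 q * Dq W p.2 q) ∂(γ.prod γ) := by
      intro q
      simp only [hg, sq]
      rw [← integral_prod_mul]
      refine integral_congr_ae (Eventually.of_forall fun p => ?_)
      simp only; ring
    simp only [this]
    rw [integral_integral_swap (f := fun q (p : (R × R) × (R × R)) => b p.1 * b p.2 * (Dq W p.1 q * Dq W p.2 q))]
    · simp only [integral_const_mul, Kq]
    · refine intB (Measurable.mul (Measurable.mul (hbm.comp (by fun_prop)) (hbm.comp (by fun_prop))) (hm.comp measurable_swap)) 1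
        fun z => abs_mul_le_one (abs_mul_le_one (hb1 _) (hb1 _)) (abs_mul_le_one (hD _ _) (hD _ _))
  have e4 : (∫ p, b p.1 * b p.2 * Kq W π p ∂(γ.prod γ)) ^ 2 ≤ ∫ p, (Kq W π p) ^ 2 ∂(γ.prod γ) := by
    have hmm : Measurable (fun p : (R × R) × (R × R) => b p.1 * b p.2 * Kq W π p) :=
      ((hbm.comp measurable_fst).mul (hbm.comp measurable_snd)).mul hKm
    have hbb : ∀ p : (R × R) × (R × R), |b p.1 * b p.2| ≤ 1 := fun p => abs_mul_le_one (hb1 _) (hb1 _)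
    refine (sq_integral_le hmm (C := 1) fun q => abs_mul_le_one (hbb _) (hKb _)).trans ?_
    refine integral_mono (intB (hmm.pow_const 2) 1 fun q => ?_) (intB (hKm.pow_const 2) 1 fun q => ?_) fun q => ?_
    · rw [sq]; exact abs_mul_le_one (abs_mul_le_one (hbb _) (hKb _)) (abs_mul_le_one (hbb _) (hKb _))
    · rw [sq]; exact abs_mul_le_one (hKb _) (hKb _)
    · simp only
      rw [mul_pow]
      refine mul_le_of_le_one_left (sq_nonneg _) ?_
      rw [← sq_abs]; exact pow_le_one₀ (abs_nonneg _) (hbb q)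
  rw [e1, Zq_eq hW hW0 hW1]
  calc (∫ q, v q * g q ∂π) ^ 4 = ((∫ q, v q * g q ∂π) ^ 2) ^ 2 := by ring
    _ ≤ (∫ q, g q ^ 2 ∂π) ^ 2 := pow_le_pow_left₀ (sq_nonneg _) e2 2
    _ ≤ _ := by rw [e3]; exact e4

end


/-! ### Selecting good samples -/
section
variable {Θ Ξ : Type} [MeasurableSpace Θ] [Fintype Ξ]

lemma poly_conv {P : Measure Θ} {Pn : ℕ → Measure Θ} [IsProbabilityMeasure P] [∀ n, IsProbabilityMeasure (Pn n)]
    {V : Θ → Ξ → ℝ} {Vn : ℕ → Θ → Ξ → ℝ} (hV : ∀ ξ, Measurable fun θ => V θ ξ) (hVn : ∀ n ξ, Measurable fun θ => Vn n θ ξ)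
    (h1 : ∀ θ ξ, |V θ ξ| ≤ 1) (h1n : ∀ n θ ξ, |Vn n θ ξ| ≤ 1)
    (hconv : ∀ (L : Type) [Fintype L] (w : L → Ξ),
      Tendsto (fun n => ∫ θ, ∏ l, Vn n θ (w l) ∂(Pn n)) atTop (𝓝 (∫ θ, ∏ l, V θ (w l) ∂P)))
    (p : MvPolynomial Ξ ℝ) :
    Tendsto (fun n => ∫ θ, MvPolynomial.eval (Vn n θ) p ∂(Pn n)) atTop (𝓝 (∫ θ, MvPolynomial.eval (V θ) p ∂P)) := by
  have key : ∀ (Q : Measure Θ) [IsProbabilityMeasure Q] (Y : Θ → Ξ → ℝ), (∀ ξ, Measurable fun θ => Y θ ξ) → (∀ θ ξ, |Y θ ξ| ≤ 1) →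
      ∫ θ, MvPolynomial.eval (Y θ) p ∂Q = ∑ d ∈ p.support, p.coeff d * ∫ θ, ∏ l : (Σ ξ, Fin (d ξ)), Y θ l.1 ∂Q := by
    intro Q _ Y hY hb
    simp only [MvPolynomial.eval_eq']
    rw [integral_finsetSum]
    · refine Finset.sum_congr rfl fun d _ => ?_
      rw [integral_const_mul]
      congr 1
      refine integral_congr_ae (Eventually.of_forall fun θ => ?_)
      simp only [Fintype.prod_sigma, Finset.prod_const, Finset.card_univ, Fintype.card_fin]
    · intro d _
      refine Integrable.const_mul ?_ _
      refine intB (Finset.measurable_fun_prod _ fun ξ _ => (hY ξ).pow_const _) 1 fun θ => ?_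
      rw [Finset.abs_prod]
      refine Finset.prod_le_one (fun _ _ => abs_nonneg _) fun ξ _ => ?_
      rw [abs_pow]
      exact pow_le_one₀ (abs_nonneg _) (hb _ _)
  rw [key P V hV h1]
  have : (fun n => ∫ θ, MvPolynomial.eval (Vn n θ) p ∂(Pn n)) =
      fun n => ∑ d ∈ p.support, p.coeff d * ∫ θ, ∏ l : (Σ ξ, Fin (d ξ)), Vn n θ l.1 ∂(Pn n) := by
    funext n; exact key (Pn n) (Vn n) (hVn n) (h1n n)
  rw [this]
  refine tendsto_finsetSum _ fun d _ => (hconv _ _).const_mul _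

/-- squared distance -/
def hd (v y : Ξ → ℝ) : ℝ := ∑ ξ, (y ξ - v ξ) ^ 2

lemma hd_nonneg (v y : Ξ → ℝ) : 0 ≤ hd v y := Finset.sum_nonneg fun _ _ => sq_nonneg _

lemma hd_le {v y : Ξ → ℝ} (hv : ∀ ξ, |v ξ| ≤ 1) (hy : ∀ ξ, |y ξ| ≤ 1) : hd v y ≤ 4 * Fintype.card Ξ := by
  unfold hd
  calc ∑ ξ, (y ξ - v ξ) ^ 2 ≤ ∑ ξ : Ξ, (4:ℝ) := by
        refine Finset.sum_le_sum fun ξ _ => ?_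
        have := abs_le.1 (hv ξ); have := abs_le.1 (hy ξ); nlinarith
    _ = _ := by simp [mul_comm]

/-- continuity of `hd` -/
lemma continuous_hd (v : Ξ → ℝ) : Continuous (hd v) := by unfold hd; fun_prop

lemma near {P : Measure Θ} {Pn : ℕ → Measure Θ} [IsProbabilityMeasure P] [∀ n, IsProbabilityMeasure (Pn n)]
    {V : Θ → Ξ → ℝ} {Vn : ℕ → Θ → Ξ → ℝ} (hV : ∀ ξ, Measurable fun θ => V θ ξ) (hVn : ∀ n ξ, Measurable fun θ => Vn n θ ξ)
    (h1 : ∀ θ ξ, |V θ ξ| ≤ 1) (h1n : ∀ n θ ξ, |Vn n θ ξ| ≤ 1)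
    (hconv : ∀ (L : Type) [Fintype L] (w : L → Ξ),
      Tendsto (fun n => ∫ θ, ∏ l, Vn n θ (w l) ∂(Pn n)) atTop (𝓝 (∫ θ, ∏ l, V θ (w l) ∂P)))
    {v : Ξ → ℝ} (hv : ∀ ξ, |v ξ| ≤ 1) (hpos : ∀ δ > 0, 0 < P.real {θ | hd v (V θ) < δ}) {δ : ℝ} (hδ : 0 < δ) :
    ∀ᶠ n in atTop, ∃ θ, hd v (Vn n θ) < δ := by
  by_contra hcon
  have hfr : ∃ᶠ n in atTop, ∀ θ, δ ≤ hd v (Vn n θ) := by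
    simpa [Filter.Frequently, not_exists, not_lt] using hcon
  set d : ℝ := 4 * Fintype.card Ξ + δ + 1 with hd_def
  have hd0 : 0 < d := by positivity
  have hcard : (0:ℝ) ≤ 4 * Fintype.card Ξ := by positivity
  set q : ℝ := 1 - δ / d with hq
  set q' : ℝ := 1 - δ / 2 / d with hq'
  have hδd : δ / d < 1 := by rw [div_lt_one hd0]; linarith
  have hδd0 : 0 < δ / d := by positivity
  have hq0 : 0 < q := by rw [hq]; linarith
  have hqq : q < q' := by rw [hq, hq', div_right_comm]; linarith
  have hq'0 : 0 < q' := hq0.trans hqq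
  have hVm : Measurable fun θ => hd v (V θ) := by
    unfold hd; exact Finset.measurable_fun_sum _ fun ξ _ => ((hV ξ).sub_const _).pow_const _
  have hVnm : ∀ n, Measurable fun θ => hd v (Vn n θ) := fun n => by
    unfold hd; exact Finset.measurable_fun_sum _ fun ξ _ => ((hVn n ξ).sub_const _).pow_const _
  have hrange : ∀ y : Ξ → ℝ, (∀ ξ, |y ξ| ≤ 1) → 0 ≤ 1 - hd v y / d ∧ 1 - hd v y / d ≤ 1 := by
    intro y hy
    have a := hd_le hv hy
    have b := hd_nonneg v y
    have : hd v y / d ≤ 1 := by rw [div_le_one hd0]; linarith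
    have : 0 ≤ hd v y / d := by positivity
    constructor <;> linarith
  have hbd : ∀ m : ℕ, P.real {θ | hd v (V θ) < δ / 2} * q' ^ m ≤ q ^ m := by
    intro m
    let p : MvPolynomial Ξ ℝ := (1 - MvPolynomial.C d⁻¹ * ∑ ξ, (MvPolynomial.X ξ - MvPolynomial.C (v ξ)) ^ 2) ^ m
    have hp : ∀ y : Ξ → ℝ, MvPolynomial.eval y p = (1 - hd v y / d) ^ m := by
      intro y
      simp [p, hd, div_eq_inv_mul]
    have ht := poly_conv hV hVn h1 h1n hconv p
    simp only [hp] at ht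
    have up : ∫ θ, (1 - hd v (V θ) / d) ^ m ∂P ≤ q ^ m := by
      refine le_of_tendsto_of_frequently ht (hfr.mono fun n hn => ?_)
      calc ∫ θ, (1 - hd v (Vn n θ) / d) ^ m ∂(Pn n) ≤ ∫ θ, q ^ m ∂(Pn n) := by
            refine integral_mono (intB (((hVnm n).div_const d).const_sub 1 |>.pow_const m) 1 fun θ => ?_) (integrable_const _) fun θ => ?_
            · rw [abs_of_nonneg (pow_nonneg (hrange _ (h1n n θ)).1 _)]
              exact pow_le_one₀ (hrange _ (h1n n θ)).1 (hrange _ (h1n n θ)).2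
            · refine pow_le_pow_left₀ (hrange _ (h1n n θ)).1 ?_ m
              rw [hq]
              have := div_le_div_of_nonneg_right (hn θ) hd0.le
              linarith
        _ = q ^ m := by simp
    have hS : MeasurableSet {θ | hd v (V θ) < δ / 2} := measurableSet_lt hVm measurable_const
    have lo : P.real {θ | hd v (V θ) < δ / 2} * q' ^ m ≤ ∫ θ, (1 - hd v (V θ) / d) ^ m ∂P := by
      calc P.real {θ | hd v (V θ) < δ / 2} * q' ^ m = ∫ θ, {θ | hd v (V θ) < δ / 2}.indicator (fun _ => q' ^ m) θ ∂P := by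
            rw [integral_indicator_const _ hS, smul_eq_mul]
        _ ≤ _ := by
            refine integral_mono ((integrable_const _).indicator hS) (intB ((hVm.div_const d).const_sub 1 |>.pow_const m) 1 fun θ => ?_) fun θ => ?_
            · rw [abs_of_nonneg (pow_nonneg (hrange _ (h1 θ)).1 _)]
              exact pow_le_one₀ (hrange _ (h1 θ)).1 (hrange _ (h1 θ)).2
            · by_cases h : θ ∈ {θ | hd v (V θ) < δ / 2}
              · rw [indicator_of_mem h]
                refine pow_le_pow_left₀ hq'0.le ?_ m
                rw [hq']
                have := div_le_div_of_nonneg_right (le_of_lt h) hd0.le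
                linarith
              · rw [indicator_of_notMem h]
                exact pow_nonneg (hrange _ (h1 θ)).1 _
    exact lo.trans up
  have hb2 : ∀ m : ℕ, P.real {θ | hd v (V θ) < δ / 2} ≤ (q / q') ^ m := by
    intro m
    rw [div_pow, le_div_iff₀ (pow_pos hq'0 m)]
    exact hbd m
  have h0 := tendsto_pow_atTop_nhds_zero_of_lt_one (div_nonneg hq0.le hq'0.le) ((div_lt_one hq'0).2 hqq)
  have := ge_of_tendsto' h0 hb2
  have := hpos (δ / 2) (by positivity)
  linarith

lemma selection {P : Measure Θ} {Pn : ℕ → Measure Θ} [IsProbabilityMeasure P] [∀ n, IsProbabilityMeasure (Pn n)]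
    {V : Θ → Ξ → ℝ} {Vn : ℕ → Θ → Ξ → ℝ} (hV : ∀ ξ, Measurable fun θ => V θ ξ) (hVn : ∀ n ξ, Measurable fun θ => Vn n θ ξ)
    (h1 : ∀ θ ξ, |V θ ξ| ≤ 1) (h1n : ∀ n θ ξ, |Vn n θ ξ| ≤ 1)
    (hconv : ∀ (L : Type) [Fintype L] (w : L → Ξ),
      Tendsto (fun n => ∫ θ, ∏ l, Vn n θ (w l) ∂(Pn n)) atTop (𝓝 (∫ θ, ∏ l, V θ (w l) ∂P)))
    {G : Set Θ} (hG : P G ≠ 0) :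
    ∃ θ ∈ G, ∃ θn : ℕ → Θ, ∀ ξ, Tendsto (fun n => Vn n (θn n) ξ) atTop (𝓝 (V θ ξ)) := by
  have hVm : Measurable V := measurable_pi_iff.2 hV
  have hne : P.map V (V '' G) ≠ 0 := by
    have : P (V ⁻¹' (V '' G)) ≤ P.map V (V '' G) := Measure.le_map_apply hVm.aemeasurable _
    intro h
    rw [h] at this
    exact hG (measure_mono_null (subset_preimage_image V G) (le_antisymm this bot_le))
  obtain ⟨v, ⟨θ, hθ, rfl⟩, hv⟩ := exists_mem_forall_mem_nhdsWithin_pos_measure hne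
  refine ⟨θ, hθ, ?_⟩
  have hpos : ∀ δ > 0, 0 < P.real {θ' | hd (V θ) (V θ') < δ} := by
    intro δ hδ
    have ho : IsOpen {y | hd (V θ) y < δ} := isOpen_lt (continuous_hd _) continuous_const
    have := hv _ (mem_nhdsWithin_of_mem_nhds (ho.mem_nhds (show hd (V θ) (V θ) < δ by simpa [hd] using hδ)))
    rw [Measure.map_apply hVm ho.measurableSet] at this
    exact ENNReal.toReal_pos this.ne' (measure_ne_top _ _)
  have hnear := fun δ (hδ : (0:ℝ) < δ) => near hV hVn h1 h1n hconv (h1 θ) hpos hδ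
  have hch : ∀ n : ℕ, ∃ θ', ∀ θ'', hd (V θ) (Vn n θ') < hd (V θ) (Vn n θ'') + 1 / ((n:ℝ) + 1) := by
    intro n
    have hne : Nonempty Θ := ⟨θ⟩
    have hbb : BddBelow (range fun θ' => hd (V θ) (Vn n θ')) := ⟨0, by rintro _ ⟨θ', rfl⟩; exact hd_nonneg _ _⟩
    obtain ⟨θ', h⟩ := exists_lt_of_ciInf_lt (show (⨅ θ', hd (V θ) (Vn n θ')) < (⨅ θ', hd (V θ) (Vn n θ')) + 1 / ((n:ℝ) + 1) from
      lt_add_of_pos_right _ (by positivity))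
    exact ⟨θ', fun θ'' => h.trans_le (by gcongr; exact ciInf_le hbb θ'')⟩
  choose θn hθn using hch
  refine ⟨θn, ?_⟩
  have hlim : Tendsto (fun n => hd (V θ) (Vn n (θn n))) atTop (𝓝 0) := by
    rw [Metric.tendsto_atTop']
    intro ε hε
    obtain ⟨N, hN⟩ := eventually_atTop.1 (hnear (ε / 2) (by positivity))
    obtain ⟨M, hM⟩ := exists_nat_one_div_lt (show 0 < ε / 2 by positivity)
    refine ⟨max N M, fun n hn => ?_⟩
    obtain ⟨θ', h'⟩ := hN n ((le_max_left _ _).trans hn.le)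
    have h2 := hθn n θ'
    have h3 : 1 / ((n:ℝ) + 1) ≤ 1 / ((M:ℝ) + 1) := by
      have : (M:ℝ) ≤ n := by exact_mod_cast (le_max_right _ _).trans hn.le
      gcongr
    rw [Real.dist_eq, sub_zero, abs_of_nonneg (hd_nonneg _ _)]
    linarith
  intro ξ
  have hsq : Tendsto (fun n => (Vn n (θn n) ξ - V θ ξ) ^ 2) atTop (𝓝 0) := by
    refine squeeze_zero (fun n => sq_nonneg _) (fun n => ?_) hlim
    exact Finset.single_le_sum (f := fun ξ => (Vn n (θn n) ξ - V θ ξ) ^ 2) (fun _ _ => sq_nonneg _) (Finset.mem_univ ξ)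
  have habs : Tendsto (fun n => |Vn n (θn n) ξ - V θ ξ|) atTop (𝓝 0) := by
    have := hsq.sqrt
    simpa [Real.sqrt_sq_eq_abs] using this
  rw [tendsto_iff_dist_tendsto_zero]
  simpa [Real.dist_eq] using habs

end


/-! ### Sampled partitions and moments -/

/-- probability-vector-valued kernel -/
structure KW {A B : Type*} [MeasurableSpace A] [MeasurableSpace B] (W : A → B → Ω → ℝ) : Prop where
  meas : ∀ ω, Measurable (fun z : A × B => W z.1 z.2 ω)
  nonneg : ∀ x y ω, 0 ≤ W x y ω
  sum_one : ∀ x y, ∑ ω, W x y ω = 1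

lemma KW.le_one {A B : Type*} [MeasurableSpace A] [MeasurableSpace B] {W : A → B → Ω → ℝ} (h : KW W) (x : A) (y : B) (ω : Ω) :
    W x y ω ≤ 1 := by
  rw [← h.sum_one x y]
  exact Finset.single_le_sum (f := fun ω => W x y ω) (fun i _ => h.nonneg x y i) (Finset.mem_univ ω)

lemma KW.abs_le {A B : Type*} [MeasurableSpace A] [MeasurableSpace B] {W : A → B → Ω → ℝ} (h : KW W) (x : A) (y : B) (ω : Ω) :
    |W x y ω| ≤ 1 := by
  rw [abs_of_nonneg (h.nonneg _ _ _)]; exact h.le_one _ _ _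

lemma KW.meas_comp {A B α : Type*} [MeasurableSpace A] [MeasurableSpace B] [MeasurableSpace α] {W : A → B → Ω → ℝ} (h : KW W)
    {f : α → A} {g : α → B} (hf : Measurable f) (hg : Measurable g) (ω : Ω) : Measurable (fun z => W (f z) (g z) ω) := by
  have := (h.meas ω).comp (hf.prodMk hg)
  simpa only [Function.comp_def] using this

lemma KW_e : KW (fun (σ : SigmaSp Ω) (x : ℝ) => e σ x) :=
  ⟨fun ω => measurable_e_apply ω, e_nonneg, e_sum⟩

lemma KW_e_swap : KW (fun (x : ℝ) (σ : SigmaSp Ω) => e σ x) :=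
  ⟨fun ω => measurable_e_comp measurable_snd measurable_fst ω, fun x y => e_nonneg y x, fun x y => e_sum y x⟩

/-- partition of `B` obtained by sampling `k` points of `A` -/
def SP {A B : Type*} (W : A → B → Ω → ℝ) {k : ℕ} (ρ : Fin k → A) (t : Fin k → Ω) (x : B) : ℝ :=
  ∏ i, W (ρ i) x (t i)

lemma FP_SP {A B : Type*} [MeasurableSpace A] [MeasurableSpace B] {W : A → B → Ω → ℝ} (h : KW W) {k : ℕ} (ρ : Fin k → A) :
    FP (SP W ρ) := by
  classical
  refine ⟨fun u => Finset.measurable_fun_prod _ fun i _ => h.meas_comp measurable_const measurable_id _,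
    fun u x => Finset.prod_nonneg fun i _ => h.nonneg _ _ _, fun x => ?_⟩
  unfold SP
  have := Finset.prod_univ_sum (fun _ : Fin k => (Finset.univ : Finset Ω)) (fun i ω => W (ρ i) x ω)
  rw [Fintype.piFinset_univ] at this
  rw [← this]
  simp [h.sum_one]

/-- optional evaluation -/
def we (o : Option Ω) (σ : SigmaSp Ω) (x : ℝ) : ℝ := o.elim 1 (fun ω => e σ x ω)

/-- pattern moments -/
def mon (μ : PM Ω) (I : Type) [Fintype I] (a : I → I → Option Ω) : ℝ :=
  ∫ f : I → SigmaSp Ω × ℝ, ∏ i, ∏ j, we (a i j) (f i).1 (f j).2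
    ∂(Measure.pi fun _ : I => (μ : Measure (SigmaSp Ω)).prod lam01)

lemma mp_reindex (μ : PM Ω) (I : Type) [Fintype I] :
    MeasurePreserving (fun z : (Fin (Fintype.card I) → SigmaSp Ω) × (Fin (Fintype.card I) → ℝ) =>
      (fun i : I => (z.1 (Fintype.equivFin I i), z.2 (Fintype.equivFin I i))))
      ((Measure.pi fun _ => (μ : Measure (SigmaSp Ω))).prod (Measure.pi fun _ => lam01))
      (Measure.pi fun _ : I => (μ : Measure (SigmaSp Ω)).prod lam01) := by
  have h1 := (measurePreserving_arrowProdEquivProdArrow (SigmaSp Ω) ℝ (Fin (Fintype.card I))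
    (fun _ => (μ : Measure (SigmaSp Ω))) (fun _ => lam01)).symm
  have h2 := measurePreserving_piCongrLeft (α := fun _ : I => SigmaSp Ω × ℝ)
    (fun _ => (μ : Measure (SigmaSp Ω)).prod lam01) (Fintype.equivFin I).symm
  have h3 := h2.comp h1
  convert h3 using 1
  funext z i
  simp only [Function.comp_def]
  obtain ⟨j, rfl⟩ := (Fintype.equivFin I).symm.surjective i
  rw [MeasurableEquiv.coe_piCongrLeft, Equiv.piCongrLeft_apply_apply]
  simp [MeasurableEquiv.arrowProdEquivProdArrow, Equiv.arrowProdEquivProdArrow]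

lemma mon_full (μ : PM Ω) (I : Type) [Fintype I] (c : I → I → Ω) :
    ∫ f : I → SigmaSp Ω × ℝ, ∏ i, ∏ j, e (f i).1 (f j).2 (c i j)
    ∂(Measure.pi fun _ : I => (μ : Measure (SigmaSp Ω)).prod lam01) =
    arrayProb Ω μ (Fintype.card I) (fun i j => c ((Fintype.equivFin I).symm i) ((Fintype.equivFin I).symm j)) := by
  have hm : Measurable (fun f : I → SigmaSp Ω × ℝ => ∏ i, ∏ j, e (f i).1 (f j).2 (c i j)) :=
    Finset.measurable_fun_prod _ fun i _ => Finset.measurable_fun_prod _ fun j _ =>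
      measurable_e_comp (measurable_fst.comp (measurable_pi_apply i)) (measurable_snd.comp (measurable_pi_apply j)) _
  rw [← (mp_reindex μ I).map_eq, integral_map (mp_reindex μ I).measurable.aemeasurable hm.aestronglyMeasurable, arrayProb_eq]
  have hi : Integrable (fun z : (Fin (Fintype.card I) → SigmaSp Ω) × (Fin (Fintype.card I) → ℝ) =>
    ∏ i, ∏ j, e (z.1 i) (z.2 j) (c ((Fintype.equivFin I).symm i) ((Fintype.equivFin I).symm j)))
      ((Measure.pi fun _ => (μ : Measure (SigmaSp Ω))).prod (Measure.pi fun _ => lam01)) :=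
    intB (measurable_arr _) 1 fun z => arr_bound _ _ _
  rw [← integral_prod _ hi]
  refine integral_congr_ae (Eventually.of_forall fun z => ?_)
  simp only
  rw [← (Fintype.equivFin I).prod_comp]
  refine Finset.prod_congr rfl fun i _ => ?_
  rw [← (Fintype.equivFin I).prod_comp]
  simp

/-- allowed values -/
def optS (o : Option Ω) : Finset Ω := o.elim Finset.univ (fun ω => {ω})

lemma we_eq (o : Option Ω) (σ : SigmaSp Ω) (x : ℝ) : we o σ x = ∑ ω ∈ optS o, e σ x ω := by
  cases o <;> simp [we, optS, e_sum]

lemma mon_eq (μ : PM Ω) (I : Type) [Fintype I] [DecidableEq I] (a : I → I → Option Ω) :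
    mon μ I a = ∑ c ∈ Fintype.piFinset (fun p : I × I => optS (a p.1 p.2)),
      arrayProb Ω μ (Fintype.card I) (fun i j => c ((Fintype.equivFin I).symm i, (Fintype.equivFin I).symm j)) := by
  unfold mon
  have h : ∀ f : I → SigmaSp Ω × ℝ, ∏ i, ∏ j, we (a i j) (f i).1 (f j).2 =
      ∑ c ∈ Fintype.piFinset (fun p : I × I => optS (a p.1 p.2)), ∏ i, ∏ j, e (f i).1 (f j).2 (c (i, j)) := by
    intro f
    rw [← Fintype.prod_prod_type' (fun i j => we (a i j) (f i).1 (f j).2)]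
    simp only [we_eq]
    rw [Finset.prod_univ_sum]
    simp only [Fintype.prod_prod_type]
  simp only [h]
  rw [integral_finsetSum]
  · exact Finset.sum_congr rfl fun c _ => mon_full μ I (fun i j => c (i, j))
  · intro c _
    refine intB (Finset.measurable_fun_prod _ fun i _ => Finset.measurable_fun_prod _ fun j _ =>
      measurable_e_comp (measurable_fst.comp (measurable_pi_apply i)) (measurable_snd.comp (measurable_pi_apply j)) _) 1 fun f => ?_
    rw [Finset.abs_prod]
    refine Finset.prod_le_one (fun _ _ => abs_nonneg _) fun i _ => ?_
    rw [Finset.abs_prod]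
    exact Finset.prod_le_one (fun _ _ => abs_nonneg _) fun j _ => KW_e.abs_le _ _ _

lemma mon_conv {μn : ℕ → PM Ω} {μ : PM Ω}
    (H : ∀ (k : ℕ) (a : Fin k → Fin k → Ω), Tendsto (fun n => arrayProb Ω (μn n) k a) atTop (𝓝 (arrayProb Ω μ k a)))
    (I : Type) [Fintype I] (a : I → I → Option Ω) :
    Tendsto (fun n => mon (μn n) I a) atTop (𝓝 (mon μ I a)) := by
  classical
  simp only [mon_eq]
  exact tendsto_finsetSum _ fun c _ => H _ _

/-- assemble samples -/
lemma mp_assemble {X : Type*} [MeasurableSpace X] (ν : Measure X) [IsProbabilityMeasure ν] (k : ℕ) (L : Type) [Fintype L] :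
    MeasurePreserving (fun z : (Fin k → X) × (L → X × X) =>
      (Sum.elim z.1 (fun p : L × Bool => if p.2 then (z.2 p.1).1 else (z.2 p.1).2) : Fin k ⊕ L × Bool → X))
      ((Measure.pi fun _ => ν).prod (Measure.pi fun _ => ν.prod ν)) (Measure.pi fun _ => ν) := by
  have hm : Measurable (fun z : (Fin k → X) × (L → X × X) =>
      (Sum.elim z.1 (fun p : L × Bool => if p.2 then (z.2 p.1).1 else (z.2 p.1).2) : Fin k ⊕ L × Bool → X)) := by
    refine measurable_pi_iff.2 ?_
    rintro (i | ⟨l, b⟩)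
    · simp only [Sum.elim_inl]; fun_prop
    · cases b <;> simp only [Sum.elim_inr] <;> simp <;> fun_prop
  refine ⟨hm, (Measure.pi_eq fun s hs => ?_).symm⟩
  rw [Measure.map_apply hm (MeasurableSet.univ_pi hs)]
  have : (fun z : (Fin k → X) × (L → X × X) =>
      (Sum.elim z.1 (fun p : L × Bool => if p.2 then (z.2 p.1).1 else (z.2 p.1).2) : Fin k ⊕ L × Bool → X)) ⁻¹' (univ.pi s) =
      (univ.pi fun i => s (Sum.inl i)) ×ˢ (univ.pi fun l => s (Sum.inr (l, true)) ×ˢ s (Sum.inr (l, false))) := by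
    ext z
    simp only [mem_preimage, Set.mem_pi, mem_univ, forall_true_left, mem_prod, Sum.forall, Sum.elim_inl, Sum.elim_inr, Prod.forall, Bool.forall_bool]
    simp [and_comm]
  rw [this, Measure.prod_prod, Measure.pi_pi, Measure.pi_pi]
  simp only [Measure.prod_prod, Fintype.prod_sum_type, Fintype.prod_prod_type, Fintype.prod_bool]

/-- index of moments -/
abbrev Xi (Ω : Type) (k : ℕ) := Ω × Idx (Fin k → Ω) (Fin k → Ω)

/-- row partition -/
abbrev aU {k : ℕ} (θ : Fin k → SigmaSp Ω × ℝ) : (Fin k → Ω) → SigmaSp Ω → ℝ :=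
  SP (fun (x : ℝ) (σ : SigmaSp Ω) => e σ x) (fun i => (θ i).2)
/-- column partition -/
abbrev phT {k : ℕ} (θ : Fin k → SigmaSp Ω × ℝ) : (Fin k → Ω) → ℝ → ℝ :=
  SP (fun (σ : SigmaSp Ω) (x : ℝ) => e σ x) (fun i => (θ i).1)

lemma FP_aU {k : ℕ} (θ : Fin k → SigmaSp Ω × ℝ) : FP (aU θ) := FP_SP KW_e_swap _
lemma FP_phT {k : ℕ} (θ : Fin k → SigmaSp Ω × ℝ) : FP (phT θ) := FP_SP KW_e _

/-- all moments -/
def VV (μ : PM Ω) {k : ℕ} (θ : Fin k → SigmaSp Ω × ℝ) (ξ : Xi Ω k) : ℝ :=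
  mom (μ : Measure (SigmaSp Ω)) lam01 (aU θ) (phT θ) (fun σ x => e σ x ξ.1) ξ.2

/-- integrand -/
def Fg {k : ℕ} (ξ : Xi Ω k) (θ : Fin k → SigmaSp Ω × ℝ) (g : (SigmaSp Ω × ℝ) × (SigmaSp Ω × ℝ)) : ℝ :=
  momf (aU θ) (phT θ) (fun σ x => e σ x ξ.1) ξ.2 ((g.1.1, g.2.1), (g.1.2, g.2.2))

lemma VV_eq (μ : PM Ω) {k : ℕ} (θ : Fin k → SigmaSp Ω × ℝ) (ξ : Xi Ω k) :
    VV μ θ ξ = ∫ g, Fg ξ θ g ∂(((μ : Measure (SigmaSp Ω)).prod lam01).prod ((μ : Measure (SigmaSp Ω)).prod lam01)) := by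
  unfold VV mom Fg
  have h := mp_shuffle (μ : Measure (SigmaSp Ω)) lam01 (μ : Measure (SigmaSp Ω)) lam01
  rw [← h.map_eq, integral_map h.measurable.aemeasurable
    (measurable_momf (FP_aU θ) (FP_phT θ) (measurable_e_apply _) _).aestronglyMeasurable]

lemma measurable_Fg {k : ℕ} (ξ : Xi Ω k) :
    Measurable (fun z : (Fin k → SigmaSp Ω × ℝ) × ((SigmaSp Ω × ℝ) × (SigmaSp Ω × ℝ)) => Fg ξ z.1 z.2) := by
  unfold Fg momf
  refine Measurable.mul (Measurable.mul (Measurable.mul ?_ ?_) (Measurable.mul ?_ ?_)) (Measurable.mul (Measurable.mul ?_ ?_) (Measurable.mul ?_ ?_))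
  · exact Finset.measurable_fun_prod _ fun i _ => measurable_e_comp (by fun_prop) (by fun_prop) _
  · exact Finset.measurable_fun_prod _ fun i _ => measurable_e_comp (by fun_prop) (by fun_prop) _
  · exact Finset.measurable_fun_prod _ fun i _ => measurable_e_comp (by fun_prop) (by fun_prop) _
  · exact Finset.measurable_fun_prod _ fun i _ => measurable_e_comp (by fun_prop) (by fun_prop) _
  all_goals exact measurable_wb _ (measurable_e_comp (by fun_prop) (by fun_prop) _)

lemma Fg_bound {k : ℕ} (ξ : Xi Ω k) (θ : Fin k → SigmaSp Ω × ℝ) (g : (SigmaSp Ω × ℝ) × (SigmaSp Ω × ℝ)) : |Fg ξ θ g| ≤ 1 :=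
  momf_bound (FP_aU θ) (FP_phT θ) (fun _ _ => KW_e.abs_le _ _ _) _ _

lemma measurable_VV (μ : PM Ω) {k : ℕ} (ξ : Xi Ω k) : Measurable (fun θ : Fin k → SigmaSp Ω × ℝ => VV μ θ ξ) := by
  simp only [VV_eq]
  exact meas_int_right (D := fun θ g => Fg ξ θ g) (measurable_Fg ξ)

lemma VV_bound (μ : PM Ω) {k : ℕ} (θ : Fin k → SigmaSp Ω × ℝ) (ξ : Xi Ω k) : |VV μ θ ξ| ≤ 1 := by
  rw [VV_eq]
  exact abs_integral_le fun g => Fg_bound _ _ _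

/-- bit selection -/
def bitS (b : (Bool × Bool) × (Bool × Bool)) : Bool → Bool → Bool
  | true, true => b.1.1
  | true, false => b.1.2
  | false, true => b.2.1
  | false, false => b.2.2

open Classical in
/-- pattern of a product of moments -/
def patt {k : ℕ} {L : Type} (w : L → Xi Ω k) : Fin k ⊕ L × Bool → Fin k ⊕ L × Bool → Option Ω
  | Sum.inl _, Sum.inl _ => none
  | Sum.inr (l, b), Sum.inl j => some ((if b then (w l).2.1.1 else (w l).2.1.2) j)
  | Sum.inl i, Sum.inr (l, b) => some ((if b then (w l).2.2.1.1 else (w l).2.2.1.2) i)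
  | Sum.inr (l, b), Sum.inr (l', b') => if l = l' then (if bitS (w l).2.2.2 b b' then some (w l).1 else none) else none

lemma we_ite_wb (c : Bool) (ω : Ω) (σ : SigmaSp Ω) (x : ℝ) : we (if c then some ω else none) σ x = wb c (e σ x ω) := by
  cases c <;> simp [we, wb]

lemma patt_prod {k : ℕ} {L : Type} [Fintype L] (w : L → Xi Ω k) (z : (Fin k → SigmaSp Ω × ℝ) × (L → (SigmaSp Ω × ℝ) × (SigmaSp Ω × ℝ))) :
    (∏ i, ∏ j, we (patt w i j) 
      ((Sum.elim z.1 (fun p : L × Bool => if p.2 then (z.2 p.1).1 else (z.2 p.1).2) : Fin k ⊕ L × Bool → SigmaSp Ω × ℝ) i).1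
      ((Sum.elim z.1 (fun p : L × Bool => if p.2 then (z.2 p.1).1 else (z.2 p.1).2) : Fin k ⊕ L × Bool → SigmaSp Ω × ℝ) j).2) =
    ∏ l, Fg (w l) z.1 (z.2 l) := by
  classical
  simp only [Fintype.prod_sum_type, Fintype.prod_prod_type, Fintype.prod_bool, Sum.elim_inl, Sum.elim_inr, patt, if_true]
  simp only [Bool.false_eq_true, if_false]
  have h1 : ∀ (σ : SigmaSp Ω) (x : ℝ), we none σ x = 1 := fun _ _ => rfl
  have h2 : ∀ (ω : Ω) (σ : SigmaSp Ω) (x : ℝ), we (some ω) σ x = e σ x ω := fun _ _ _ => rfl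
  have h3 : ∀ (l l' : L) (o : Option Ω) (σ : SigmaSp Ω) (x : ℝ), we (if l = l' then o else none) σ x = if l = l' then we o σ x else 1 := by
    intro l l' o σ x; split_ifs <;> rfl
  simp only [h1, h3, h2, we_ite_wb]
  simp only [Finset.prod_const_one, one_mul]
  rw [Finset.prod_comm, ← Finset.prod_mul_distrib]
  refine Finset.prod_congr rfl fun l _ => ?_
  have h4 : ∀ F G : L → ℝ, (∏ l', (if l = l' then F l' else 1) * (if l = l' then G l' else 1)) = F l * G l := by
    intro F G
    rw [Finset.prod_mul_distrib]
    simp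
  simp only [h4]
  simp only [Finset.prod_mul_distrib, Fg, momf, SP, bitS]
  ring

lemma int_prod_VV (μ : PM Ω) {k : ℕ} {L : Type} [Fintype L] (w : L → Xi Ω k) :
    ∫ θ, ∏ l, VV μ θ (w l) ∂(Measure.pi fun _ : Fin k => (μ : Measure (SigmaSp Ω)).prod lam01) = mon μ (Fin k ⊕ L × Bool) (patt w) := by
  unfold mon
  have hmp := mp_assemble ((μ : Measure (SigmaSp Ω)).prod lam01) k L
  have hm : Measurable (fun f : Fin k ⊕ L × Bool → SigmaSp Ω × ℝ => ∏ i, ∏ j, we (patt w i j) (f i).1 (f j).2) := by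
    refine Finset.measurable_fun_prod _ fun i _ => Finset.measurable_fun_prod _ fun j _ => ?_
    rcases patt w i j with _ | ω
    · exact measurable_const
    · exact measurable_e_comp (measurable_fst.comp (measurable_pi_apply i)) (measurable_snd.comp (measurable_pi_apply j)) ω
  rw [← hmp.map_eq, integral_map hmp.measurable.aemeasurable hm.aestronglyMeasurable]
  simp only [patt_prod]
  rw [integral_prod]
  · refine integral_congr_ae (Eventually.of_forall fun θ => ?_)
    simp only [VV_eq]
    rw [integral_fintype_prod_eq_prod (fun l g => Fg (w l) θ g)]
  · refine intB (Finset.measurable_fun_prod _ fun l _ => ?_) 1 fun z => ?_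
    · have := (measurable_Fg (w l)).comp (f := fun z : (Fin k → SigmaSp Ω × ℝ) × (L → (SigmaSp Ω × ℝ) × (SigmaSp Ω × ℝ)) => (z.1, z.2 l)) (by fun_prop)
      simpa only [Function.comp_def] using this
    · rw [Finset.abs_prod]
      exact Finset.prod_le_one (fun _ _ => abs_nonneg _) fun l _ => Fg_bound _ _ _

/-- choose good samples -/
lemma exists_samples {μn : ℕ → PM Ω} {μ : PM Ω}
    (H : ∀ (k : ℕ) (a : Fin k → Fin k → Ω), Tendsto (fun n => arrayProb Ω (μn n) k a) atTop (𝓝 (arrayProb Ω μ k a)))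
    {k : ℕ} {G : Set (Fin k → SigmaSp Ω × ℝ)} (hG : (Measure.pi fun _ : Fin k => (μ : Measure (SigmaSp Ω)).prod lam01) G ≠ 0) :
    ∃ θ ∈ G, ∃ θn : ℕ → Fin k → SigmaSp Ω × ℝ, ∀ ξ, Tendsto (fun n => VV (μn n) (θn n) ξ) atTop (𝓝 (VV μ θ ξ)) := by
  refine selection (Pn := fun n => Measure.pi fun _ : Fin k => (μn n : Measure (SigmaSp Ω)).prod lam01) (Vn := fun n => VV (μn n))
    (measurable_VV μ) (fun n => measurable_VV (μn n)) (VV_bound μ) (fun n => VV_bound (μn n)) ?_ hG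
  intro L _ w
  simp only [int_prod_VV]
  exact mon_conv H _ _



/-! ### Regularisation -/

lemma var_avg {A : Type*} [MeasurableSpace A] {α : Measure A} [IsProbabilityMeasure α] {w u : A → Ω → ℝ}
    (hw : ∀ ω, Measurable fun r => w r ω) (hw0 : ∀ r ω, 0 ≤ w r ω) (hw1 : ∀ r, ∑ ω, w r ω = 1)
    (hu : ∀ ω, Measurable fun r => u r ω) {C : ℝ} (huC : ∀ r ω, |u r ω| ≤ C) (hC : 0 ≤ C)
    (hmean : ∫ r, ∑ ω, w r ω * u r ω ∂α = 0) (k : ℕ) :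
    ∫ ρ : Fin k → A, ∑ t : Fin k → Ω, (∏ l, w (ρ l) (t l)) * (∑ i, u (ρ i) (t i)) ^ 2 ∂(Measure.pi fun _ => α) ≤ k * C ^ 2 := by
  classical
  let F : Fin k → Fin k → Fin k → A → Ω → ℝ := fun i j l r ω =>
    w r ω * ((if l = i then u r ω else 1) * (if l = j then u r ω else 1))
  have h1 : ∀ ρ : Fin k → A, ∑ t : Fin k → Ω, (∏ l, w (ρ l) (t l)) * (∑ i, u (ρ i) (t i)) ^ 2
      = ∑ i, ∑ j, ∏ l, ∑ ω, F i j l (ρ l) ω := by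
    intro ρ
    have h2 : ∀ i j, ∏ l, ∑ ω, F i j l (ρ l) ω = ∑ t : Fin k → Ω, (∏ l, w (ρ l) (t l)) * (u (ρ i) (t i) * u (ρ j) (t j)) := by
      intro i j
      rw [Finset.prod_univ_sum, Fintype.piFinset_univ]
      refine Finset.sum_congr rfl fun t _ => ?_
      simp only [F, Finset.prod_mul_distrib]
      simp
    simp only [h2]
    have h4 : ∀ t : Fin k → Ω, (∑ i, u (ρ i) (t i)) ^ 2 = ∑ i, ∑ j, u (ρ i) (t i) * u (ρ j) (t j) := by
      intro t; rw [sq, Fintype.sum_mul_sum]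
    simp only [h4, Finset.mul_sum]
    rw [Finset.sum_comm]
    refine Finset.sum_congr rfl fun i _ => ?_
    rw [Finset.sum_comm]
  have hFm : ∀ i j l ω, Measurable fun r => F i j l r ω := by
    intro i j l ω
    refine (hw ω).mul (Measurable.mul ?_ ?_)
    · split_ifs
      · exact hu ω
      · exact measurable_const
    · split_ifs
      · exact hu ω
      · exact measurable_const
  have hFb : ∀ i j l r, |∑ ω, F i j l r ω| ≤ (1 + C) ^ 2 := by
    intro i j l r
    refine (Finset.abs_sum_le_sum_abs _ _).trans ?_
    calc ∑ ω, |F i j l r ω| ≤ ∑ ω, w r ω * (1 + C) ^ 2 := by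
          refine Finset.sum_le_sum fun ω _ => ?_
          simp only [F, abs_mul, abs_of_nonneg (hw0 r ω), sq]
          have hh : ∀ p : Prop, [Decidable p] → |if p then u r ω else 1| ≤ 1 + C := by
            intro p _; split_ifs
            · linarith [huC r ω]
            · simpa using hC
          exact mul_le_mul_of_nonneg_left (mul_le_mul (hh _) (hh _) (abs_nonneg _) (by linarith)) (hw0 r ω)
      _ = _ := by rw [← Finset.sum_mul, hw1, one_mul]
  simp only [h1]
  have hi : ∀ i j, Integrable (fun ρ : Fin k → A => ∏ l, ∑ ω, F i j l (ρ l) ω) (Measure.pi fun _ => α) := by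
    intro i j
    refine intB (Finset.measurable_fun_prod _ fun l _ => Finset.measurable_fun_sum _ fun ω _ => (hFm i j l ω).comp (measurable_pi_apply l))
      (((1 + C) ^ 2) ^ k) fun ρ => ?_
    rw [Finset.abs_prod]
    refine (Finset.prod_le_prod (fun _ _ => abs_nonneg _) fun l _ => hFb i j l (ρ l)).trans_eq ?_
    simp
  rw [integral_finsetSum _ fun i _ => integrable_finsetSum _ fun j _ => hi i j]
  have h3 : ∀ i j, ∫ ρ : Fin k → A, ∏ l, ∑ ω, F i j l (ρ l) ω ∂(Measure.pi fun _ => α) ≤ if i = j then C ^ 2 else 0 := by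
    intro i j
    rw [integral_fintype_prod_eq_prod (fun l r => ∑ ω, F i j l r ω)]
    split_ifs with hij
    · subst hij
      rw [Finset.prod_eq_single i]
      · have : ∀ r, ∑ ω, F i i i r ω ≤ C ^ 2 := by
          intro r
          calc ∑ ω, F i i i r ω ≤ ∑ ω, w r ω * C ^ 2 := by
                refine Finset.sum_le_sum fun ω _ => ?_
                simp only [F, if_true]
                refine mul_le_mul_of_nonneg_left ?_ (hw0 r ω)
                have := abs_le.1 (huC r ω)
                nlinarith
            _ = _ := by rw [← Finset.sum_mul, hw1, one_mul]
        calc ∫ r, ∑ ω, F i i i r ω ∂α ≤ ∫ r, C ^ 2 ∂α := by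
              refine integral_mono (intB (Finset.measurable_fun_sum _ fun ω _ => hFm i i i ω) _ (hFb i i i)) (integrable_const _) this
          _ = _ := by simp
      · intro l _ hl
        simp [F, hl, hw1]
      · simp
    · refine le_of_eq (Finset.prod_eq_zero (Finset.mem_univ i) ?_)
      simp only [F, if_true, if_neg hij, mul_one]
      exact hmean
  calc ∑ i, ∫ ρ : Fin k → A, ∑ j, ∏ l, ∑ ω, F i j l (ρ l) ω ∂(Measure.pi fun _ => α) 
      = ∑ i, ∑ j, ∫ ρ : Fin k → A, ∏ l, ∑ ω, F i j l (ρ l) ω ∂(Measure.pi fun _ => α) :=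
        Finset.sum_congr rfl fun i _ => integral_finsetSum _ fun j _ => hi i j
    _ ≤ ∑ i, ∑ j, (if i = j then C ^ 2 else 0) := Finset.sum_le_sum fun i _ => Finset.sum_le_sum fun j _ => h3 i j
    _ = _ := by simp

section
variable {A B : Type*} [MeasurableSpace A] [MeasurableSpace B] {ι : Type} [Fintype ι] [DecidableEq ι]

/-- normalised indicator -/
def hc (α : Measure A) (b : A → ι) (c : ι) (σ : A) : ℝ := if b σ = c then (α.real (b ⁻¹' {c}))⁻¹ else 0

lemma hc_nonneg (α : Measure A) (b : A → ι) (c : ι) (σ : A) : 0 ≤ hc α b c σ := by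
  unfold hc; split_ifs <;> positivity

/-- bound -/
def hC (α : Measure A) (b : A → ι) : ℝ := ∑ c, (α.real (b ⁻¹' {c}))⁻¹

lemma hC_nonneg (α : Measure A) (b : A → ι) : 0 ≤ hC α b := Finset.sum_nonneg fun _ _ => by positivity

lemma hc_le (α : Measure A) (b : A → ι) (c : ι) (σ : A) : hc α b c σ ≤ hC α b := by
  have : (α.real (b ⁻¹' {c}))⁻¹ ≤ hC α b :=
    Finset.single_le_sum (f := fun c => (α.real (b ⁻¹' {c}))⁻¹) (fun _ _ => by positivity) (Finset.mem_univ c)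
  unfold hc; split_ifs
  · exact this
  · exact hC_nonneg _ _

lemma measurable_hc (α : Measure A) {b : A → ι} (hb : ∀ c, MeasurableSet (b ⁻¹' {c})) (c : ι) : Measurable (hc α b c) :=
  Measurable.ite (hb c) measurable_const measurable_const

/-- measurable functions of a finite label -/
lemma meas_label {X : Type*} [MeasurableSpace X] {b : X → ι} (hb : ∀ c, MeasurableSet (b ⁻¹' {c})) {F : ι → X → ℝ}
    (hF : ∀ c, Measurable (F c)) : Measurable (fun x => F (b x) x) := by
  have : (fun x => F (b x) x) = fun x => ∑ c, if b x = c then F c x else 0 := by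
    funext x; simp
  rw [this]
  exact Finset.measurable_fun_sum _ fun c _ => Measurable.ite (hb c) (hF c) measurable_const

lemma cond_avg {α : Measure A} [IsProbabilityMeasure α] {b : A → ι} (hb : ∀ c, MeasurableSet (b ⁻¹' {c})) {F : A → ℝ} (hF : Measurable F)
    (hF1 : ∀ σ, |F σ| ≤ 1) (w : ι → ℝ) :
    ∫ σ, |F σ - ∫ r, hc α b (b σ) r * F r ∂α| ∂α ≤ 2 * ∫ σ, |F σ - w (b σ)| ∂α := by
  set m : ι → ℝ := fun c => ∫ r, hc α b c r * F r ∂α with hm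
  have hlab : ∀ v : ι → ℝ, Measurable fun σ => v (b σ) := fun v => meas_label hb (F := fun c _ => v c) fun c => measurable_const
  have hlabi : ∀ v : ι → ℝ, Integrable (fun σ => v (b σ)) α := fun v => intB (hlab v) (∑ c, |v c|) fun σ =>
    Finset.single_le_sum (f := fun c => |v c|) (fun _ _ => abs_nonneg _) (Finset.mem_univ (b σ))
  have hFi : Integrable F α := intB hF 1 hF1
  have key : ∫ σ, |w (b σ) - m (b σ)| ∂α ≤ ∫ σ, |F σ - w (b σ)| ∂α := by
    have dec : ∀ G : A → ℝ, Integrable G α → ∫ σ, G σ ∂α = ∑ c, ∫ σ in b ⁻¹' {c}, G σ ∂α := by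
      intro G hG
      rw [← integral_biUnion_finset (s := fun c => b ⁻¹' {c})]
      · have : (⋃ i ∈ (Finset.univ : Finset ι), b ⁻¹' {i}) = univ := by ext; simp
        rw [this, setIntegral_univ]
      · exact fun c _ => hb c
      · intro c _ c' _ hcc
        exact Disjoint.preimage _ (by simpa using hcc)
      · exact fun c _ => hG.integrableOn
    rw [dec (fun σ => |w (b σ) - m (b σ)|) ((hlabi w).sub (hlabi m)).abs, dec (fun σ => |F σ - w (b σ)|) (hFi.sub (hlabi w)).abs]
    refine Finset.sum_le_sum fun c _ => ?_
    have e1 : ∫ σ in b ⁻¹' {c}, |w (b σ) - m (b σ)| ∂α = α.real (b ⁻¹' {c}) * |w c - m c| := by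
      rw [setIntegral_congr_fun (g := fun _ => |w c - m c|) (hb c) (fun σ hσ => by
        have : b σ = c := hσ
        simp only [this])]
      simp
    have e2 : ∫ σ in b ⁻¹' {c}, |F σ - w (b σ)| ∂α = ∫ σ in b ⁻¹' {c}, |F σ - w c| ∂α := 
      setIntegral_congr_fun (hb c) (fun σ hσ => by
        have : b σ = c := hσ
        simp only [this])
    rw [e1, e2]
    by_cases h0 : α.real (b ⁻¹' {c}) = 0
    · rw [h0, zero_mul]; exact integral_nonneg fun _ => abs_nonneg _
    · have e3 : m c = (α.real (b ⁻¹' {c}))⁻¹ * ∫ σ in b ⁻¹' {c}, F σ ∂α := by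
        rw [hm, ← integral_indicator (hb c), ← integral_const_mul]
        refine integral_congr_ae (Eventually.of_forall fun σ => ?_)
        by_cases hσ : b σ = c
        · simp [hc, hσ, indicator]
        · simp [hc, hσ, indicator]
      have e4 : α.real (b ⁻¹' {c}) * (w c - m c) = - ∫ σ in b ⁻¹' {c}, (F σ - w c) ∂α := by
        rw [integral_sub hFi.integrableOn (integrable_const _), e3]
        simp
        field_simp
      calc α.real (b ⁻¹' {c}) * |w c - m c| = |α.real (b ⁻¹' {c}) * (w c - m c)| := by
            rw [abs_mul, abs_of_nonneg measureReal_nonneg]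
        _ ≤ _ := by rw [e4, abs_neg]; exact abs_integral_le_integral_abs
  calc ∫ σ, |F σ - m (b σ)| ∂α ≤ ∫ σ, (|F σ - w (b σ)| + |w (b σ) - m (b σ)|) ∂α := by
        refine integral_mono (hFi.sub (hlabi m)).abs ((hFi.sub (hlabi w)).abs.add ((hlabi w).sub (hlabi m)).abs) fun σ => ?_
        exact abs_sub_le _ _ _
    _ = ∫ σ, |F σ - w (b σ)| ∂α + ∫ σ, |w (b σ) - m (b σ)| ∂α :=
        integral_add (hFi.sub (hlabi w)).abs ((hlabi w).sub (hlabi m)).abs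
    _ ≤ _ := by linarith

end


section
variable {A B : Type*} [MeasurableSpace A] [MeasurableSpace B] {ι : Type} [Fintype ι] [DecidableEq ι]

open Classical in
/-- empirical predictor -/
def gg (α : Measure A) (b : A → ι) (ω : Ω) {k : ℕ} (ρ : Fin k → A) (c : ι) (t : Fin k → Ω) : ℝ :=
  (k:ℝ)⁻¹ * ∑ i, hc α b c (ρ i) * (if t i = ω then 1 else 0)

lemma abs_gg_le (α : Measure A) (b : A → ι) (ω : Ω) {k : ℕ} (ρ : Fin k → A) (c : ι) (t : Fin k → Ω) :
    |gg α b ω ρ c t| ≤ hC α b := by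
  classical
  unfold gg
  have h : |∑ i, hc α b c (ρ i) * (if t i = ω then 1 else 0)| ≤ k * hC α b := by
    refine (Finset.abs_sum_le_sum_abs _ _).trans ?_
    calc ∑ i, |hc α b c (ρ i) * (if t i = ω then 1 else 0)| ≤ ∑ i : Fin k, hC α b := by
          refine Finset.sum_le_sum fun i _ => ?_
          rw [abs_mul, abs_of_nonneg (hc_nonneg _ _ _ _)]
          split_ifs
          · simpa using hc_le _ _ _ _
          · simpa using hC_nonneg _ _
      _ = _ := by simp
  rw [abs_mul, abs_of_nonneg (by positivity : (0:ℝ) ≤ (k:ℝ)⁻¹)]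
  rcases Nat.eq_zero_or_pos k with rfl | hk
  · simpa using hC_nonneg α b
  · have hk' : (0:ℝ) < k := by exact_mod_cast hk
    rw [inv_mul_le_iff₀ hk']
    exact h

lemma measurable_gg (α : Measure A) {b : A → ι} (hb : ∀ c, MeasurableSet (b ⁻¹' {c})) (ω : Ω) {k : ℕ} (c : ι) (t : Fin k → Ω) :
    Measurable (fun ρ : Fin k → A => gg α b ω ρ c t) :=
  (Finset.measurable_fun_sum _ fun i _ => ((measurable_hc α hb c).comp (measurable_pi_apply i)).mul_const _).const_mul _

lemma core {W : A → B → Ω → ℝ} (hW : KW W) {α : Measure A} [IsProbabilityMeasure α] {b : A → ι} (hb : ∀ c, MeasurableSet (b ⁻¹' {c})) (ω : Ω)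
    {k : ℕ} (hk : 0 < k) {η : ℝ} (hη : 0 < η) (y : ℝ) (c : ι) (x : B) :
    ∫ ρ : Fin k → A, ∑ t, SP W ρ t x * |y - gg α b ω ρ c t| ∂(Measure.pi fun _ => α) ≤
      |y - ∫ r, hc α b c r * W r x ω ∂α| + η + (1 + 2 * hC α b) ^ 2 / (k * η) := by
  classical
  set m := ∫ r, hc α b c r * W r x ω ∂α with hm
  set C := 1 + 2 * hC α b with hCdef
  have hC0 := hC_nonneg α b
  have hk' : (0:ℝ) < k := by exact_mod_cast hk
  have hWm : ∀ ω, Measurable fun r => W r x ω := fun ω => hW.meas_comp measurable_id measurable_const ω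
  have hmC : |m| ≤ hC α b := abs_integral_le fun r => by
    rw [abs_mul, abs_of_nonneg (hc_nonneg _ _ _ _)]
    calc _ ≤ hC α b * 1 := mul_le_mul (hc_le _ _ _ _) (hW.abs_le _ _ _) (abs_nonneg _) hC0
      _ = _ := mul_one _
  let u : A → Ω → ℝ := fun r ω' => hc α b c r * (if ω' = ω then 1 else 0) - m
  have hu : ∀ ω', Measurable fun r => u r ω' := fun ω' => ((measurable_hc α hb c).mul_const _).sub_const _
  have huC : ∀ r ω', |u r ω'| ≤ C := by
    intro r ω'
    refine (abs_sub _ _).trans ?_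
    have : |hc α b c r * (if ω' = ω then 1 else 0)| ≤ hC α b := by
      rw [abs_mul, abs_of_nonneg (hc_nonneg _ _ _ _)]
      split_ifs
      · simpa using hc_le _ _ _ _
      · simpa using hC_nonneg _ _
    linarith
  have hmean : ∫ r, ∑ ω', W r x ω' * u r ω' ∂α = 0 := by
    have : ∀ r, ∑ ω', W r x ω' * u r ω' = hc α b c r * W r x ω - m := by
      intro r
      simp only [u, mul_sub, Finset.sum_sub_distrib, ← Finset.sum_mul, hW.sum_one]
      simp
      ring
    simp only [this]
    have hi : Integrable (fun r => hc α b c r * W r x ω) α := intB ((measurable_hc α hb c).mul (hWm ω)) (hC α b * 1) fun r => by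
      rw [abs_mul, abs_of_nonneg (hc_nonneg _ _ _ _)]
      exact mul_le_mul (hc_le _ _ _ _) (hW.abs_le _ _ _) (abs_nonneg _) hC0
    rw [integral_sub hi (integrable_const _)]
    simp [hm]
  have hvar := var_avg (α := α) (w := fun r ω' => W r x ω') (u := u) hWm (fun r ω' => hW.nonneg r x ω') (fun r => hW.sum_one r x)
    hu huC (by linarith) hmean k
  have hsum : ∀ ρ : Fin k → A, ∑ t, SP W ρ t x = 1 := fun ρ => (FP_SP hW ρ).sum_one x
  have hnn : ∀ (ρ : Fin k → A) t, 0 ≤ SP W ρ t x := fun ρ t => (FP_SP hW ρ).nonneg t x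
  have hSPm : ∀ t, Measurable fun ρ : Fin k → A => SP W ρ t x := fun t => 
    Finset.measurable_fun_prod _ fun i _ => (hWm _).comp (measurable_pi_apply i)
  have hgu : ∀ (ρ : Fin k → A) t, gg α b ω ρ c t - m = (k:ℝ)⁻¹ * ∑ i, u (ρ i) (t i) := by
    intro ρ t
    simp only [u, gg, Finset.sum_sub_distrib, mul_sub]
    simp
    field_simp
  have hvi : Integrable (fun ρ : Fin k → A => ∑ t : Fin k → Ω, (∏ l, W (ρ l) x (t l)) * (∑ i, u (ρ i) (t i)) ^ 2) (Measure.pi fun _ => α) := by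
    refine integrable_finsetSum _ fun t _ => ?_
    refine intB ((hSPm t).mul ((Finset.measurable_fun_sum _ fun i _ => (hu _).comp (measurable_pi_apply i)).pow_const 2)) (1 * (k * C) ^ 2) fun ρ => ?_
    rw [abs_mul, abs_pow]
    refine mul_le_mul ((FP_SP hW ρ).abs_le t x) (pow_le_pow_left₀ (abs_nonneg _) ?_ 2) (by positivity) zero_le_one
    refine (Finset.abs_sum_le_sum_abs _ _).trans ((Finset.sum_le_sum fun i _ => huC _ _).trans_eq ?_)
    simp
  have hpt : ∀ ρ : Fin k → A, ∑ t, SP W ρ t x * |y - gg α b ω ρ c t| ≤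
      (|y - m| + η) + (k:ℝ)⁻¹ ^ 2 / η * ∑ t : Fin k → Ω, (∏ l, W (ρ l) x (t l)) * (∑ i, u (ρ i) (t i)) ^ 2 := by
    intro ρ
    calc ∑ t, SP W ρ t x * |y - gg α b ω ρ c t| ≤ ∑ t, (SP W ρ t x * (|y - m| + η) + (k:ℝ)⁻¹ ^ 2 / η * ((∏ l, W (ρ l) x (t l)) * (∑ i, u (ρ i) (t i)) ^ 2)) := by
          refine Finset.sum_le_sum fun t _ => ?_
          have h1 : |y - gg α b ω ρ c t| ≤ |y - m| + |gg α b ω ρ c t - m| := by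
            have := abs_sub_le y m (gg α b ω ρ c t)
            rwa [abs_sub_comm m] at this
          have h2 : |gg α b ω ρ c t - m| ≤ η + (gg α b ω ρ c t - m) ^ 2 / η := by
            rw [← sq_abs]
            set z := |gg α b ω ρ c t - m|
            have hz : 0 ≤ z := abs_nonneg _
            rw [← sub_nonneg]
            have : η + z ^ 2 / η - z = ((η - z) ^ 2 + η * z) / η := by field_simp; ring
            rw [this]; positivity
          rw [hgu, mul_pow] at h2
          have h3 : |y - gg α b ω ρ c t| ≤ (|y - m| + η) + (k:ℝ)⁻¹ ^ 2 / η * (∑ i, u (ρ i) (t i)) ^ 2 := by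
            rw [hgu] at h1
            have : (k:ℝ)⁻¹ ^ 2 * (∑ i, u (ρ i) (t i)) ^ 2 / η = (k:ℝ)⁻¹ ^ 2 / η * (∑ i, u (ρ i) (t i)) ^ 2 := by ring
            linarith
          calc _ ≤ SP W ρ t x * ((|y - m| + η) + (k:ℝ)⁻¹ ^ 2 / η * (∑ i, u (ρ i) (t i)) ^ 2) := mul_le_mul_of_nonneg_left h3 (hnn ρ t)
            _ = _ := by rw [show (∏ l, W (ρ l) x (t l)) = SP W ρ t x from rfl]; ring
      _ = _ := by rw [Finset.sum_add_distrib, ← Finset.sum_mul, hsum, one_mul, ← Finset.mul_sum]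
  have hLi : Integrable (fun ρ : Fin k → A => ∑ t, SP W ρ t x * |y - gg α b ω ρ c t|) (Measure.pi fun _ => α) := by
    refine integrable_finsetSum _ fun t _ => ?_
    refine intB ((hSPm t).mul ((measurable_gg α hb ω c t).const_sub y).abs) (1 * (|y| + hC α b)) fun ρ => ?_
    rw [abs_mul, abs_abs]
    refine mul_le_mul ((FP_SP hW ρ).abs_le t x) ((abs_sub _ _).trans (add_le_add le_rfl (abs_gg_le _ _ _ _ _ _))) (abs_nonneg _) zero_le_one
  calc _ ≤ ∫ ρ : Fin k → A, ((|y - m| + η) + (k:ℝ)⁻¹ ^ 2 / η * ∑ t : Fin k → Ω, (∏ l, W (ρ l) x (t l)) * (∑ i, u (ρ i) (t i)) ^ 2) ∂(Measure.pi fun _ => α) :=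
        integral_mono hLi ((integrable_const _).add (hvi.const_mul _)) hpt
    _ = (|y - m| + η) + (k:ℝ)⁻¹ ^ 2 / η * ∫ ρ : Fin k → A, ∑ t : Fin k → Ω, (∏ l, W (ρ l) x (t l)) * (∑ i, u (ρ i) (t i)) ^ 2 ∂(Measure.pi fun _ => α) := by
        rw [integral_add (integrable_const _) (hvi.const_mul _), integral_const_mul]
        simp
    _ ≤ (|y - m| + η) + (k:ℝ)⁻¹ ^ 2 / η * (k * C ^ 2) := by
        gcongr
    _ = _ := by field_simp

/-- measurable approximability by finitely many types -/
def Appr (W : A → B → Ω → ℝ) (α : Measure A) (β : Measure B) (ω : Ω) : Prop :=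
  ∀ ε > 0, ∃ (n : ℕ) (b : A → Fin n) (w' : Fin n → B → ℝ), (∀ c, MeasurableSet (b ⁻¹' {c})) ∧ (∀ c, Measurable (w' c)) ∧
    (∀ c x, |w' c x| ≤ 1) ∧ ∫ x, ∫ σ, |W σ x ω - w' (b σ) x| ∂α ∂β ≤ ε

lemma reg {W : A → B → Ω → ℝ} (hW : KW W) {α : Measure A} {β : Measure B} [IsProbabilityMeasure α] [IsProbabilityMeasure β] (ω : Ω)
    (happ : Appr W α β ω) {ε : ℝ} (hε : 0 < ε) : ∃ k0 : ℕ, ∀ k ≥ k0, ∃ E : (Fin k → A) → ℝ, Measurable E ∧ (∃ C, ∀ ρ, |E ρ| ≤ C) ∧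
      ∫ ρ, E ρ ∂(Measure.pi fun _ => α) ≤ ε ∧
      ∀ ρ, ∫ σ, ∫ q, |W σ q.1 ω - W σ q.2 ω| ∂(cpH β β (SP W ρ) (SP W ρ)) ∂α ≤ E ρ := by
  obtain ⟨n, b, w', hb, hw', hw1, hIntg⟩ := happ (ε / 12) (by positivity)
  set C := 1 + 2 * hC α b with hCdef
  have hC0 := hC_nonneg α b
  set η := ε / 6 with hη
  have hη0 : 0 < η := by positivity
  obtain ⟨k0, hk0⟩ := exists_nat_gt (C ^ 2 / (η * η))
  refine ⟨k0 + 1, fun k hk => ?_⟩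
  have hkpos : 0 < k := by omega
  have hk' : (0:ℝ) < k := by exact_mod_cast hkpos
  have hkC : C ^ 2 / (k * η) ≤ η := by
    rw [div_le_iff₀ (by positivity)]
    have h1 : (k0:ℝ) ≤ k := by exact_mod_cast (by omega : k0 ≤ k)
    have h2 := (div_lt_iff₀ (by positivity)).1 (hk0.trans_le h1)
    nlinarith
  let Q : (Fin k → A) → A × B → ℝ := fun ρ p => ∑ t, SP W ρ t p.2 * |W p.1 p.2 ω - gg α b ω ρ (b p.1) t|
  have hSPm : ∀ t, Measurable fun z : (Fin k → A) × (A × B) => SP W z.1 t z.2.2 := fun t => 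
    Finset.measurable_fun_prod _ fun i _ => hW.meas_comp (by fun_prop) (by fun_prop) _
  have hggm : ∀ t, Measurable fun z : (Fin k → A) × (A × B) => gg α b ω z.1 (b z.2.1) t := fun t =>
    meas_label (b := fun z : (Fin k → A) × (A × B) => b z.2.1) (F := fun c z => gg α b ω z.1 c t)
      (fun c => (hb c).preimage (measurable_fst.comp measurable_snd)) fun c => (measurable_gg α hb ω c t).comp measurable_fst
  have hQm : Measurable fun z : (Fin k → A) × (A × B) => Q z.1 z.2 :=
    Finset.measurable_fun_sum _ fun t _ => (hSPm t).mul ((hW.meas_comp (by fun_prop) (by fun_prop) ω).sub (hggm t)).abs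
  have hdb : ∀ (ρ : Fin k → A) (p : A × B) (t : Fin k → Ω), |W p.1 p.2 ω - gg α b ω ρ (b p.1) t| ≤ 1 + hC α b := fun ρ p t =>
    (abs_sub _ _).trans (add_le_add (hW.abs_le _ _ _) (abs_gg_le _ _ _ _ _ _))
  have hQ0 : ∀ ρ p, 0 ≤ Q ρ p := fun ρ p => Finset.sum_nonneg fun t _ => mul_nonneg ((FP_SP hW ρ).nonneg _ _) (abs_nonneg _)
  have hQb : ∀ ρ p, |Q ρ p| ≤ 1 + hC α b := by
    intro ρ p
    rw [abs_of_nonneg (hQ0 ρ p)]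
    calc Q ρ p ≤ ∑ t, SP W ρ t p.2 * (1 + hC α b) := Finset.sum_le_sum fun t _ => 
          mul_le_mul_of_nonneg_left (hdb ρ p t) ((FP_SP hW ρ).nonneg _ _)
      _ = _ := by rw [← Finset.sum_mul, (FP_SP hW ρ).sum_one, one_mul]
  have hEm : Measurable fun ρ => ∫ p, Q ρ p ∂(α.prod β) := meas_int_right (D := Q) hQm
  refine ⟨fun ρ => 2 * ∫ p, Q ρ p ∂(α.prod β), hEm.const_mul 2, ⟨2 * (1 + hC α b), fun ρ => ?_⟩, ?_, ?_⟩
  · rw [abs_mul, abs_two]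
    gcongr
    exact abs_integral_le (hQb ρ)
  · rw [integral_const_mul, integral_integral_swap (f := Q) (intB hQm _ fun z => hQb _ _)]
    have hmm : ∀ c, Measurable fun x => ∫ r, hc α b c r * W r x ω ∂α := fun c =>
      meas_int_left (D := fun r x => hc α b c r * W r x ω) (((measurable_hc α hb c).comp measurable_fst).mul (hW.meas ω))
    have hmb : ∀ c x, |∫ r, hc α b c r * W r x ω ∂α| ≤ hC α b := fun c x => abs_integral_le fun r => by
      rw [abs_mul, abs_of_nonneg (hc_nonneg _ _ _ _)]
      calc _ ≤ hC α b * 1 := mul_le_mul (hc_le _ _ _ _) (hW.abs_le _ _ _) (abs_nonneg _) hC0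
        _ = _ := mul_one _
    have hdm : Measurable fun p : A × B => |W p.1 p.2 ω - ∫ r, hc α b (b p.1) r * W r p.2 ω ∂α| := by
      refine ((hW.meas ω).sub ?_).abs
      exact meas_label (b := fun p : A × B => b p.1) (F := fun c p => ∫ r, hc α b c r * W r p.2 ω ∂α)
        (fun c => (hb c).preimage measurable_fst) fun c => (hmm c).comp measurable_snd
    have hdi : Integrable (fun p : A × B => |W p.1 p.2 ω - ∫ r, hc α b (b p.1) r * W r p.2 ω ∂α|) (α.prod β) :=
      intB hdm (1 + hC α b) fun p => by
        rw [abs_abs]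
        exact (abs_sub _ _).trans (add_le_add (hW.abs_le _ _ _) (hmb _ _))
    have hmain : ∫ p, |W p.1 p.2 ω - ∫ r, hc α b (b p.1) r * W r p.2 ω ∂α| ∂(α.prod β) ≤ 2 * (ε / 12) := by
      rw [integral_prod_symm _ hdi]
      have hwm : Measurable fun p : A × B => |W p.1 p.2 ω - w' (b p.1) p.2| := by
        refine ((hW.meas ω).sub ?_).abs
        exact meas_label (b := fun p : A × B => b p.1) (F := fun c p => w' c p.2)
          (fun c => (hb c).preimage measurable_fst) fun c => (hw' c).comp measurable_snd
      calc _ ≤ ∫ x, 2 * ∫ σ, |W σ x ω - w' (b σ) x| ∂α ∂β := by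
            refine integral_mono hdi.integral_prod_right ?_ fun x => ?_
            · refine Integrable.const_mul ?_ 2
              refine intB (meas_int_left (D := fun σ x => |W σ x ω - w' (b σ) x|) hwm) 2 fun x => abs_integral_le fun σ => ?_
              rw [abs_abs]
              refine (abs_sub _ _).trans ?_
              linarith [hW.abs_le σ x ω, hw1 (b σ) x]
            · exact cond_avg hb (hW.meas_comp measurable_id measurable_const ω) (fun σ => hW.abs_le _ _ _) (fun c => w' c x)
        _ = 2 * ∫ x, ∫ σ, |W σ x ω - w' (b σ) x| ∂α ∂β := integral_const_mul _ _
        _ ≤ _ := by linarith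
    have : ∫ p, ∫ ρ, Q ρ p ∂(Measure.pi fun _ => α) ∂(α.prod β) ≤ ∫ p, (|W p.1 p.2 ω - ∫ r, hc α b (b p.1) r * W r p.2 ω ∂α| + (η + C ^ 2 / (k * η))) ∂(α.prod β) := by
      refine integral_mono ?_ (hdi.add (integrable_const _)) fun p => ?_
      · exact intB (meas_int_left (D := Q) hQm) _ fun p => abs_integral_le fun ρ => hQb ρ p
      · have := core (α := α) hW hb ω hkpos hη0 (W p.1 p.2 ω) (b p.1) p.2
        simp only [Q]
        linarith
    rw [integral_add hdi (integrable_const _)] at this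
    simp only [integral_const, probReal_univ, one_smul] at this
    linarith
  · intro ρ
    have hFP := FP_SP hW ρ
    have hcc : 0 < cc (mass β (SP W ρ)) (mass β (SP W ρ)) := by rw [cc_self]; norm_num
    have hpr : IsProbabilityMeasure (cpH β β (SP W ρ) (SP W ρ)) := cpH_prob β β hFP hFP hcc
    have hQi : Integrable (Q ρ) (α.prod β) := intB (by
      have := hQm.comp (f := fun p : A × B => (ρ, p)) (by fun_prop)
      simpa only [Function.comp_def] using this) _ (hQb ρ)
    beta_reduce
    rw [integral_prod _ hQi, ← integral_const_mul]
    refine integral_mono ?_ (hQi.integral_prod_left.const_mul 2) fun σ => ?_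
    · refine intB (meas_int_right (D := fun (σ : A) (q : B × B) => |W σ q.1 ω - W σ q.2 ω|) ?_) 1 fun σ => abs_integral_le fun q => ?_
      · exact ((hW.meas_comp (by fun_prop) (by fun_prop) ω).sub (hW.meas_comp (by fun_prop) (by fun_prop) ω)).abs
      · rw [abs_abs]; exact abs_sub_le_one (hW.nonneg _ _ _) (hW.le_one _ _ _) (hW.nonneg _ _ _) (hW.le_one _ _ _)
    · refine (self_est β hFP (hW.meas_comp measurable_const measurable_id ω) (fun x => hW.abs_le _ _ _) (fun t => gg α b ω ρ (b σ) t)).trans_eq ?_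
      simp only [Q]
      rw [integral_finsetSum]
      · rfl
      intro t _
      refine intB ((hFP.meas t).mul ((hW.meas_comp measurable_const measurable_id ω).sub_const _).abs) (1 * (1 + hC α b)) fun x => ?_
      rw [abs_mul, abs_abs]
      exact mul_le_mul (hFP.abs_le _ _) (hdb ρ (σ, x) t) (abs_nonneg _) zero_le_one

end


lemma eN_nonneg (N : ℕ) (f : SigmaSp Ω) (x : ℝ) (ω : Ω) : 0 ≤ eN N f x ω := cellAvg_nonneg _ _ _ _
lemma eN_le_one (N : ℕ) (f : SigmaSp Ω) (x : ℝ) (ω : Ω) : eN N f x ω ≤ 1 := cellAvg_le_one _ _ _ _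

lemma abs_e_sub_eN (N : ℕ) (f : SigmaSp Ω) (x : ℝ) (ω : Ω) : |e f x ω - eN N f x ω| ≤ 1 :=
  abs_sub_le_one (e_nonneg _ _ _) (e_le_one _ _ _) (eN_nonneg _ _ _ _) (eN_le_one _ _ _ _)

lemma measurable_e_sub_eN (N : ℕ) (ω : Ω) : Measurable (fun p : SigmaSp Ω × ℝ => |e p.1 p.2 ω - eN N p.1 p.2 ω|) :=
  ((measurable_e_comp measurable_fst measurable_snd ω).sub (measurable_eN N ω)).abs

lemma eN_L1_apply (f : SigmaSp Ω) (ω : Ω) :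
    Tendsto (fun N => ∫ x, |e f x ω - eN N f x ω| ∂lam01) atTop (𝓝 0) := by
  have h0 : (0:ℝ) = ∫ x, (0:ℝ) ∂lam01 := by simp
  rw [h0]
  refine tendsto_integral_of_dominated_convergence (fun _ => (1:ℝ)) (fun N => ?_) (integrable_const _) (fun N => ?_) ?_
  · have := (measurable_e_sub_eN N ω).comp (f := fun x : ℝ => (f, x)) (by fun_prop)
    exact this.aestronglyMeasurable
  · refine ae_of_all _ fun x => ?_
    rw [Real.norm_eq_abs, abs_abs]; exact abs_e_sub_eN _ _ _ _
  · filter_upwards [eN_tendsto_e f] with x hx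
    have := ((hx ω).const_sub (e f x ω)).abs
    simpa using this

lemma eN_L1 (μ : Measure (SigmaSp Ω)) [IsProbabilityMeasure μ] (ω : Ω) :
    Tendsto (fun N => ∫ σ, ∫ x, |e σ x ω - eN N σ x ω| ∂lam01 ∂μ) atTop (𝓝 0) := by
  have h0 : (0:ℝ) = ∫ σ, (0:ℝ) ∂μ := by simp
  rw [h0]
  refine tendsto_integral_of_dominated_convergence (fun _ => (1:ℝ)) (fun N => ?_) (integrable_const _) (fun N => ?_) ?_
  · exact (meas_int_right (D := fun (σ : SigmaSp Ω) (x : ℝ) => |e σ x ω - eN N σ x ω|) (measurable_e_sub_eN N ω)).aestronglyMeasurable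
  · refine ae_of_all _ fun σ => ?_
    rw [Real.norm_eq_abs]; exact abs_integral_le fun x => by rw [abs_abs]; exact abs_e_sub_eN _ _ _ _
  · exact ae_of_all _ fun σ => eN_L1_apply σ ω

lemma lam01_mem : ∀ᵐ x ∂lam01, x ∈ Ico (0:ℝ) 1 := ae_restrict_mem measurableSet_Ico

lemma cell_lt {N : ℕ} {x : ℝ} (hx : x ∈ Ico (0:ℝ) 1) : cell N x < N + 1 := by
  have h := (cell_mem (N := N) hx.1).1
  have : (cell N x : ℝ) < ((N + 1 : ℕ) : ℝ) := by
    push_cast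
    have : (0:ℝ) < N + 1 := by positivity
    nlinarith [hx.2]
  exact_mod_cast this

lemma appr_row (μ : Measure (SigmaSp Ω)) [IsProbabilityMeasure μ] (ω : Ω) : Appr (fun (x : ℝ) (σ : SigmaSp Ω) => e σ x) lam01 μ ω := by
  intro ε hε
  obtain ⟨N, hN⟩ := ((eN_L1 μ ω).eventually (gt_mem_nhds hε)).exists
  refine ⟨N + 1, fun x => ⟨min (cell N x) N, by omega⟩, fun c σ => cellAvg N σ c ω, fun c => ?_, fun c => measurable_cellAvg _ _ _, fun c σ => ?_, ?_⟩
  · have : (fun x => (⟨min (cell N x) N, by omega⟩ : Fin (N + 1))) ⁻¹' {c} = (cell N) ⁻¹' {m | min m N = c} := by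
      ext x; simp [Fin.ext_iff]
    rw [this]
    exact measurable_cell N trivial
  · rw [abs_of_nonneg (cellAvg_nonneg _ _ _ _)]; exact cellAvg_le_one _ _ _ _
  · refine le_trans (le_of_eq ?_) hN.le
    refine integral_congr_ae (ae_of_all _ fun σ => ?_)
    refine integral_congr_ae ?_
    filter_upwards [lam01_mem] with x hx
    have := cell_lt (N := N) hx
    have h2 : min (cell N x) N = cell N x := by omega
    simp only [h2, eN]

lemma appr_col (μ : Measure (SigmaSp Ω)) [IsProbabilityMeasure μ] (ω : Ω) : Appr (fun (σ : SigmaSp Ω) (x : ℝ) => e σ x) μ lam01 ω := by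
  intro ε hε
  obtain ⟨N, hN⟩ := ((eN_L1 μ ω).eventually (gt_mem_nhds (half_pos hε))).exists
  obtain ⟨m, hm⟩ := exists_nat_gt (2 / ε)
  have hm0 : (0:ℝ) < m := lt_trans (by positivity) hm
  let q := Fintype.equivFin (Fin (N + 1) → Fin (m + 1))
  let b : SigmaSp Ω → Fin (N + 1) → Fin (m + 1) := fun σ c => ⟨min ⌊(m:ℝ) * cellAvg N σ c ω⌋₊ m, by omega⟩
  have hbm : ∀ d, MeasurableSet (b ⁻¹' {d}) := by
    intro d
    have : b ⁻¹' {d} = ⋂ c : Fin (N + 1), (fun σ : SigmaSp Ω => ⌊(m:ℝ) * cellAvg N σ c ω⌋₊) ⁻¹' {l | min l m = d c} := by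
      ext σ; simp [b, funext_iff, Fin.ext_iff]
    rw [this]
    refine MeasurableSet.iInter fun c => ?_
    exact (Nat.measurable_floor.comp ((measurable_cellAvg N c ω).const_mul _)) trivial
  let w : (Fin (N + 1) → Fin (m + 1)) → ℝ → ℝ := fun d x => (d ⟨min (cell N x) N, by omega⟩ : ℕ) / m
  have hwm : ∀ d, Measurable (w d) := fun d => by
    have h : Measurable fun l : ℕ => ((d ⟨min l N, by omega⟩ : ℕ) : ℝ) / m := measurable_from_top
    exact h.comp (measurable_cell N)
  have hw1 : ∀ d x, |w d x| ≤ 1 := fun d x => by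
    rw [abs_of_nonneg (by positivity), div_le_one hm0]
    exact_mod_cast Nat.lt_succ_iff.1 (d _).2
  have hwe : ∀ σ, ∀ᵐ x ∂lam01, |e σ x ω - w (b σ) x| ≤ |e σ x ω - eN N σ x ω| + ε / 2 := by
    intro σ
    filter_upwards [lam01_mem] with x hx
    have := cell_lt (N := N) hx
    have h2 : min (cell N x) N = cell N x := by omega
    have h3 : w (b σ) x = (⌊(m:ℝ) * eN N σ x ω⌋₊ : ℝ) / m := by
      simp only [w, b, h2, eN]
      have : ⌊(m:ℝ) * cellAvg N σ (cell N x) ω⌋₊ ≤ m := Nat.floor_le_of_le (by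
        nlinarith [cellAvg_le_one N σ (cell N x) ω])
      rw [min_eq_left this]
    have h4 : |eN N σ x ω - w (b σ) x| ≤ ε / 2 := by
      rw [h3]
      have a1 := Nat.floor_le (mul_nonneg hm0.le (eN_nonneg N σ x ω))
      have a2 := Nat.lt_floor_add_one ((m:ℝ) * eN N σ x ω)
      have a3 : eN N σ x ω - (⌊(m:ℝ) * eN N σ x ω⌋₊ : ℝ) / m = ((m:ℝ) * eN N σ x ω - ⌊(m:ℝ) * eN N σ x ω⌋₊) / m := by field_simp
      rw [a3, abs_of_nonneg (by apply div_nonneg <;> linarith), div_le_iff₀ hm0]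
      rw [div_lt_iff₀ hε] at hm
      nlinarith
    have := abs_sub_le (e σ x ω) (eN N σ x ω) (w (b σ) x)
    linarith
  have hlm : Measurable fun p : SigmaSp Ω × ℝ => |e p.1 p.2 ω - w (b p.1) p.2| := by
    refine ((measurable_e_comp measurable_fst measurable_snd ω).sub ?_).abs
    have := meas_label (b := fun p : SigmaSp Ω × ℝ => q (b p.1)) (F := fun c p => w (q.symm c) p.2) (fun c => ?_) (fun c => (hwm _).comp measurable_snd)
    · simpa using this
    · have : (fun p : SigmaSp Ω × ℝ => q (b p.1)) ⁻¹' {c} = Prod.fst ⁻¹' (b ⁻¹' {q.symm c}) := by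
        ext p; simp [Equiv.eq_symm_apply]
      rw [this]; exact measurable_fst (hbm _)
  have hl2 : ∀ σ x, |(|e σ x ω - w (b σ) x|)| ≤ 2 := fun σ x => by
    rw [abs_abs]
    refine (abs_sub _ _).trans ?_
    have : |e σ x ω| ≤ 1 := by rw [abs_of_nonneg (e_nonneg _ _ _)]; exact e_le_one _ _ _
    linarith [hw1 (b σ) x]
  have hsec : ∀ σ, Integrable (fun x => |e σ x ω - w (b σ) x|) lam01 := fun σ => by
    refine intB ?_ 2 (hl2 σ)
    have := hlm.comp (f := fun x : ℝ => (σ, x)) (by fun_prop)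
    simpa only [Function.comp_def] using this
  have hsec2 : ∀ σ, Integrable (fun x => |e σ x ω - eN N σ x ω|) lam01 := fun σ => by
    refine intB ?_ 1 fun x => by rw [abs_abs]; exact abs_e_sub_eN _ _ _ _
    have := (measurable_e_sub_eN N ω).comp (f := fun x : ℝ => (σ, x)) (by fun_prop)
    simpa only [Function.comp_def] using this
  refine ⟨_, fun σ => q (b σ), fun c x => w (q.symm c) x, fun c => ?_, fun c => hwm _, fun c x => hw1 _ _, ?_⟩
  · have : (fun σ => q (b σ)) ⁻¹' {c} = b ⁻¹' {q.symm c} := by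
      ext σ; simp [Equiv.eq_symm_apply]
    rw [this]; exact hbm _
  · simp only [Equiv.symm_apply_apply]
    have hsw0 : Measurable (fun p : ℝ × SigmaSp Ω => |e p.2 p.1 ω - w (b p.2) p.1|) := by
      have := hlm.comp (f := fun p : ℝ × SigmaSp Ω => (p.2, p.1)) (by fun_prop)
      simpa only [Function.comp_def] using this
    have hsw : Integrable (Function.uncurry fun (x : ℝ) (σ : SigmaSp Ω) => |e σ x ω - w (b σ) x|) (lam01.prod μ) :=
      intB hsw0 2 fun p => hl2 p.2 p.1
    rw [integral_integral_swap (f := fun (x : ℝ) (σ : SigmaSp Ω) => |e σ x ω - w (b σ) x|) hsw]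
    calc _ ≤ ∫ σ, (∫ x, |e σ x ω - eN N σ x ω| ∂lam01 + ε / 2) ∂μ := by
          refine integral_mono ?_ ?_ fun σ => ?_
          · exact intB (meas_int_right (D := fun (σ : SigmaSp Ω) (x : ℝ) => |e σ x ω - w (b σ) x|) hlm) 2 fun σ => abs_integral_le (hl2 σ)
          · refine Integrable.add ?_ (integrable_const _)
            exact intB (meas_int_right (D := fun (σ : SigmaSp Ω) (x : ℝ) => |e σ x ω - eN N σ x ω|) (measurable_e_sub_eN N ω)) 1 
              fun σ => abs_integral_le fun x => by rw [abs_abs]; exact abs_e_sub_eN _ _ _ _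
          · calc _ ≤ ∫ x, (|e σ x ω - eN N σ x ω| + ε / 2) ∂lam01 := integral_mono_ae (hsec σ) ((hsec2 σ).add (integrable_const _)) (hwe σ)
              _ = _ := by rw [integral_add (hsec2 σ) (integrable_const _)]; simp
      _ = ∫ σ, ∫ x, |e σ x ω - eN N σ x ω| ∂lam01 ∂μ + ε / 2 := by
          rw [integral_add _ (integrable_const _)]
          · simp
          · exact intB (meas_int_right (D := fun (σ : SigmaSp Ω) (x : ℝ) => |e σ x ω - eN N σ x ω|) (measurable_e_sub_eN N ω)) 1 
              fun σ => abs_integral_le fun x => by rw [abs_abs]; exact abs_e_sub_eN _ _ _ _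
      _ ≤ ε := by linarith



lemma sum_fiber {X : Type*} [MeasurableSpace X] (μ : Measure X) {f : X → ℕ} (hf : Measurable f) :
    Measure.sum (fun a => μ.restrict (f ⁻¹' {a})) = μ := by
  rw [← Measure.restrict_iUnion]
  · have : ⋃ a, f ⁻¹' {a} = univ := by ext x; simp
    rw [this, Measure.restrict_univ]
  · intro a b hab
    rw [Function.onFun, Set.disjoint_left]
    intro x hx hy
    exact hab (hx.symm.trans hy)
  · exact fun a => hf trivial

lemma map_eq_sum {X Y : Type*} [MeasurableSpace X] [MeasurableSpace Y] (μ : Measure X) {f : X → ℕ} (hf : Measurable f)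
    {g : X → Y} (hg : Measurable g) : μ.map (fun x => (f x, g x)) =
      Measure.sum fun a => ((μ.restrict (f ⁻¹' {a})).map g).map (Prod.mk a) := by
  conv_lhs => rw [← sum_fiber μ hf]
  rw [Measure.map_sum (by fun_prop)]
  congr 1
  funext a
  rw [Measure.map_map (by fun_prop) hg]
  refine Measure.map_congr ?_
  filter_upwards [ae_restrict_mem (hf (measurableSet_singleton a))] with x hx
  have : f x = a := hx
  simp [this]

lemma gen (ν : Measure ℝ) [IsProbabilityMeasure ν] : ∃ f : ℝ → ℝ, Measurable f ∧ lam01.map f = ν := by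
  obtain ⟨f, hf, h⟩ := ν.exists_measurable_map_eq
  refine ⟨fun x => f (projIcc 0 1 zero_le_one x), hf.comp continuous_projIcc.measurable, ?_⟩
  have h2 : lam01.map (projIcc (0:ℝ) 1 zero_le_one) = volume := by
    have : lam01 = (volume : Measure (Icc (0:ℝ) 1)).map Subtype.val := by
      unfold lam01
      rw [Measure.Subtype.volume_def, map_comap_subtype_coe measurableSet_Icc]
      exact Measure.restrict_congr_set Ico_ae_eq_Icc
    rw [this, Measure.map_map continuous_projIcc.measurable measurable_subtype_coe]
    have : projIcc (0:ℝ) 1 zero_le_one ∘ Subtype.val = id := by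
      funext x; simp
    rw [this, Measure.map_id]
  rw [← h, ← h2, Measure.map_map hf continuous_projIcc.measurable]
  rfl

lemma cell_map (N a : ℕ) (ha : a < N + 1) : (lam01.restrict (cell N ⁻¹' {a})).map (fun x => ((N:ℝ) + 1) * x - a) =
    ENNReal.ofReal ((N:ℝ) + 1)⁻¹ • lam01 := by
  have hN : (0:ℝ) < N + 1 := by positivity
  have ha' : (a:ℝ) + 1 ≤ N + 1 := by exact_mod_cast ha
  have hset : cell N ⁻¹' {a} ∩ Ico (0:ℝ) 1 = (fun x => ((N:ℝ) + 1) * x - a) ⁻¹' (Ico 0 1) := by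
    ext x
    simp only [mem_inter_iff, mem_preimage, mem_singleton_iff, mem_Ico]
    constructor
    · rintro ⟨h, hx⟩
      have := cell_mem (N := N) hx.1
      rw [h] at this
      constructor <;> linarith
    · rintro ⟨h1, h2⟩
      have hx0 : 0 ≤ x := by
        by_contra hx; push Not at hx
        have : (0:ℝ) ≤ a := by positivity
        nlinarith
      refine ⟨?_, hx0, ?_⟩
      · unfold cell
        rw [Nat.floor_eq_iff (by positivity)]
        constructor <;> linarith
      · by_contra hx; push Not at hx
        nlinarith
  have hm : Measurable (fun x : ℝ => ((N:ℝ) + 1) * x - a) := by fun_prop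
  unfold lam01
  rw [Measure.restrict_restrict (measurable_cell N trivial), hset, ← Measure.restrict_map hm measurableSet_Ico, ← Measure.restrict_smul]
  congr 1
  have h1 : (fun x : ℝ => ((N:ℝ) + 1) * x - a) = (fun x => x - (a:ℝ)) ∘ (fun x => ((N:ℝ) + 1) * x) := rfl
  rw [h1, ← Measure.map_map (by fun_prop) (by fun_prop), Real.map_volume_mul_left hN.ne', Measure.map_smul,
    (measurePreserving_sub_right volume (a:ℝ)).map_eq, abs_of_pos (by positivity)]

lemma lam01_cell (N a : ℕ) (ha : a < N + 1) : lam01 (cell N ⁻¹' {a}) = ENNReal.ofReal ((N:ℝ) + 1)⁻¹ := by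
  have h := congrArg (fun m => m univ) (cell_map N a ha)
  rw [Measure.map_apply (by fun_prop) MeasurableSet.univ] at h
  simpa using h

lemma exists_s0 (N : ℕ) (π : Measure (ℝ × ℝ)) (hπ : π.map Prod.fst = lam01) :
    ∃ s : ℝ → ℝ, Measurable s ∧ lam01.map (fun x => (cell N x, s x)) = π.map (fun q => (cell N q.1, q.2)) := by
  have hN : (0:ℝ) < N + 1 := by positivity
  have key : ∀ a : ℕ, ∃ T : ℝ → ℝ, Measurable T ∧ (lam01.restrict (cell N ⁻¹' {a})).map T =
      (π.restrict ((fun q : ℝ × ℝ => cell N q.1) ⁻¹' {a})).map Prod.snd := by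
    intro a
    have hπa : π ((fun q : ℝ × ℝ => cell N q.1) ⁻¹' {a}) = lam01 (cell N ⁻¹' {a}) := by
      rw [← hπ, Measure.map_apply measurable_fst (measurable_cell N trivial)]; rfl
    by_cases ha : a < N + 1
    · set ν := ENNReal.ofReal ((N:ℝ) + 1) • (π.restrict ((fun q : ℝ × ℝ => cell N q.1) ⁻¹' {a})).map Prod.snd with hν
      have : IsProbabilityMeasure ν := by
        constructor
        rw [hν, Measure.smul_apply, Measure.map_apply measurable_snd MeasurableSet.univ, preimage_univ, Measure.restrict_apply_univ,
          hπa, lam01_cell N a ha, smul_eq_mul, ← ENNReal.ofReal_mul hN.le, mul_inv_cancel₀ hN.ne', ENNReal.ofReal_one]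
      obtain ⟨f, hf, hfν⟩ := gen ν
      refine ⟨fun x => f (((N:ℝ) + 1) * x - a), by fun_prop, ?_⟩
      have h1 : (fun x : ℝ => f (((N:ℝ) + 1) * x - a)) = f ∘ (fun x => ((N:ℝ) + 1) * x - a) := rfl
      rw [h1, ← Measure.map_map hf (by fun_prop), cell_map N a ha, Measure.map_smul, hfν, hν, smul_smul,
        ← ENNReal.ofReal_mul (by positivity), inv_mul_cancel₀ hN.ne', ENNReal.ofReal_one, one_smul]
    · refine ⟨id, measurable_id, ?_⟩
      have h0 : lam01 (cell N ⁻¹' {a}) = 0 := by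
        rw [measure_eq_zero_iff_ae_notMem]
        filter_upwards [lam01_mem] with x hx h
        have := cell_lt (N := N) hx
        have h' : cell N x = a := h
        omega
      rw [Measure.restrict_eq_zero.2 h0, Measure.restrict_eq_zero.2 (hπa.trans h0)]
      simp
  choose T hT hTe using key
  have hs : Measurable fun x => T (cell N x) x := by
    have h : Measurable (fun p : ℕ × ℝ => T p.1 p.2) := measurable_from_prod_countable_right fun a => hT a
    exact h.comp ((measurable_cell N).prodMk measurable_id)
  refine ⟨fun x => T (cell N x) x, hs, ?_⟩
  rw [map_eq_sum lam01 (measurable_cell N) hs, map_eq_sum π (f := fun q : ℝ × ℝ => cell N q.1) ((measurable_cell N).comp measurable_fst) measurable_snd]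
  congr 1
  funext a
  congr 1
  refine Eq.trans ?_ (hTe a)
  refine Measure.map_congr ?_
  filter_upwards [ae_restrict_mem (measurable_cell N (measurableSet_singleton a))] with x hx
  have : cell N x = a := hx
  simp [this]

lemma exists_s1 (N : ℕ) (π : Measure (ℝ × ℝ)) (hπ : π.map Prod.fst = lam01) (hπ2 : π.map Prod.snd = lam01) :
    ∃ s : ℝ → ℝ, IsMPS s ∧ lam01.map (fun x => (cell N x, s x)) = π.map (fun q => (cell N q.1, q.2)) := by
  classical
  obtain ⟨s, hs, h⟩ := exists_s0 N π hπ
  have hc := measurable_cell N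
  have hmp : lam01.map s = lam01 := by
    have h2 := congrArg (fun m => m.map Prod.snd) h
    rw [Measure.map_map measurable_snd (hc.prodMk hs), Measure.map_map measurable_snd (by fun_prop)] at h2
    exact Eq.trans h2 hπ2
  have hMP : MeasurePreserving s lam01 lam01 := ⟨hs, hmp⟩
  have hae : (fun x => if s x ∈ Ico (0:ℝ) 1 then s x else 0) =ᵐ[lam01] s := by
    filter_upwards [hMP.quasiMeasurePreserving.ae lam01_mem] with x hx
    rw [if_pos hx]
  have hs' : Measurable (fun x => if s x ∈ Ico (0:ℝ) 1 then s x else 0) :=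
    Measurable.ite (hs measurableSet_Ico) hs measurable_const
  refine ⟨fun x => if s x ∈ Ico (0:ℝ) 1 then s x else 0, ⟨⟨hs', ?_⟩, fun x _ => ?_⟩, ?_⟩
  · rw [Measure.map_congr hae, hmp]
  · dsimp only
    split_ifs with hx
    · exact hx
    · simp
  · rw [← h]
    refine Measure.map_congr ?_
    filter_upwards [hae] with x hx
    rw [hx]

lemma abs_prod_sub_le {a b c d : ℝ} (ha : |a| ≤ 1) (hd : |d| ≤ 1) : |a * b - c * d| ≤ |a - c| + |b - d| := by
  have : a * b - c * d = a * (b - d) + (a - c) * d := by ring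
  rw [this]
  refine (abs_add_le _ _).trans ?_
  rw [abs_mul, abs_mul]
  nlinarith [abs_nonneg (b - d), abs_nonneg (a - c)]

/-- cell version of `Dq` -/
def DN (N : ℕ) (ω : Ω) (p : SigmaSp Ω × SigmaSp Ω) (q : ℝ × ℝ) : ℝ := eN N p.1 q.1 ω - e p.2 q.2 ω

lemma abs_DN_le (N : ℕ) (ω : Ω) (p : SigmaSp Ω × SigmaSp Ω) (q : ℝ × ℝ) : |DN N ω p q| ≤ 1 :=
  abs_sub_le_one (eN_nonneg _ _ _ _) (eN_le_one _ _ _ _) (e_nonneg _ _ _) (e_le_one _ _ _)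

lemma measurable_DN (N : ℕ) (ω : Ω) (p : SigmaSp Ω × SigmaSp Ω) : Measurable (DN N ω p) := by
  unfold DN
  refine Measurable.sub ?_ (measurable_e_comp measurable_const measurable_snd ω)
  have := (measurable_eN N ω).comp (f := fun q : ℝ × ℝ => (p.1, q.1)) (by fun_prop)
  simpa only [Function.comp_def] using this

lemma Kq_near (N : ℕ) (ω : Ω) (π : Measure (ℝ × ℝ)) [IsProbabilityMeasure π] (hπ : π.map Prod.fst = lam01)
    (p : (SigmaSp Ω × SigmaSp Ω) × (SigmaSp Ω × SigmaSp Ω)) :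
    |Kq (fun σ x => e σ x ω) π p - ∫ q, DN N ω p.1 q * DN N ω p.2 q ∂π| ≤
      ∫ x, |e p.1.1 x ω - eN N p.1.1 x ω| ∂lam01 + ∫ x, |e p.2.1 x ω - eN N p.2.1 x ω| ∂lam01 := by
  have hD : ∀ p q, |Dq (fun (σ : SigmaSp Ω) x => e σ x ω) p q| ≤ 1 := abs_Dq_le (fun σ x => e_nonneg σ x ω) (fun σ x => e_le_one σ x ω)
  have hDm : ∀ p, Measurable (Dq (fun (σ : SigmaSp Ω) x => e σ x ω) p) := fun p => by
    have := meas_Dq (W := fun (σ : SigmaSp Ω) x => e σ x ω) (measurable_e_apply ω) (f := fun q : ℝ × ℝ => p) (g := id) measurable_const measurable_id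
    simpa using this
  have hem : ∀ f : SigmaSp Ω, Measurable fun x : ℝ => |e f x ω - eN N f x ω| := fun f => by
    have := (measurable_e_sub_eN N ω).comp (f := fun x : ℝ => (f, x)) (by fun_prop)
    simpa only [Function.comp_def] using this
  have h1 : Integrable (fun q => Dq (fun (σ : SigmaSp Ω) x => e σ x ω) p.1 q * Dq (fun (σ : SigmaSp Ω) x => e σ x ω) p.2 q) π :=
    intB ((hDm _).mul (hDm _)) 1 fun q => abs_mul_le_one (hD _ _) (hD _ _)
  have h2 : Integrable (fun q => DN N ω p.1 q * DN N ω p.2 q) π :=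
    intB ((measurable_DN _ _ _).mul (measurable_DN _ _ _)) 1 fun q => abs_mul_le_one (abs_DN_le _ _ _ _) (abs_DN_le _ _ _ _)
  have hI : ∀ f : SigmaSp Ω, Integrable (fun q : ℝ × ℝ => |e f q.1 ω - eN N f q.1 ω|) π := fun f =>
    intB ((hem f).comp measurable_fst) 1 fun q => by rw [abs_abs]; exact abs_e_sub_eN _ _ _ _
  have hmap : ∀ f : SigmaSp Ω, ∫ x, |e f x ω - eN N f x ω| ∂lam01 = ∫ q, |e f q.1 ω - eN N f q.1 ω| ∂π := fun f => by
    rw [← hπ, integral_map measurable_fst.aemeasurable (hem f).aestronglyMeasurable]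
  unfold Kq
  rw [← integral_sub h1 h2, hmap, hmap, ← integral_add (hI _) (hI _)]
  refine (abs_integral_le_integral_abs).trans (integral_mono (h1.sub h2).abs ((hI _).add (hI _)) fun q => ?_)
  have := abs_prod_sub_le (b := Dq (fun (σ : SigmaSp Ω) x => e σ x ω) p.2 q) (c := DN N ω p.1 q) (hD p.1 q) (abs_DN_le N ω p.2 q)
  refine this.trans_eq ?_
  simp only [Dq, DN]
  congr 2 <;> ring

lemma exists_s (γ : Measure (SigmaSp Ω × SigmaSp Ω)) [IsProbabilityMeasure γ] (π : Measure (ℝ × ℝ)) (hπ : π.map Prod.fst = lam01) (hπ2 : π.map Prod.snd = lam01)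
    {η : ℝ} (hη : 0 < η) : ∃ s : ℝ → ℝ, IsMPS s ∧ ∀ ω, Zq (fun (σ : SigmaSp Ω) x => e σ x ω) γ (lam01.map fun x => (x, s x)) ≤
      Zq (fun (σ : SigmaSp Ω) x => e σ x ω) γ π + η := by
  have hπp : IsProbabilityMeasure π := by
    constructor
    have h2 : (π.map Prod.fst) univ = 1 := by rw [hπ]; simp
    rwa [Measure.map_apply measurable_fst MeasurableSet.univ, preimage_univ] at h2
  have hμp : IsProbabilityMeasure (γ.map Prod.fst) := Measure.isProbabilityMeasure_map measurable_fst.aemeasurable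
  have hev : ∀ᶠ N in atTop, ∀ ω, ∫ σ, ∫ x, |e σ x ω - eN N σ x ω| ∂lam01 ∂(γ.map Prod.fst) < η / 8 :=
    eventually_all.2 fun ω => (eN_L1 (γ.map Prod.fst) ω).eventually (gt_mem_nhds (by positivity))
  obtain ⟨N, hN⟩ := hev.exists
  obtain ⟨s, hs, hP⟩ := exists_s1 N π hπ hπ2
  have hsm := hs.1.measurable
  refine ⟨s, hs, fun ω => ?_⟩
  set W : SigmaSp Ω → ℝ → ℝ := fun σ x => e σ x ω with hWd
  have hW : Measurable (fun z : SigmaSp Ω × ℝ => W z.1 z.2) := measurable_e_apply ω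
  have hW0 : ∀ r c, 0 ≤ W r c := fun r c => e_nonneg _ _ _
  have hW1 : ∀ r c, W r c ≤ 1 := fun r c => e_le_one _ _ _
  have hgm : Measurable fun x : ℝ => (x, s x) := by fun_prop
  set πs := lam01.map fun x => (x, s x) with hπs
  have hp : IsProbabilityMeasure πs := Measure.isProbabilityMeasure_map hgm.aemeasurable
  have hπs1 : πs.map Prod.fst = lam01 := by
    rw [hπs, Measure.map_map measurable_fst hgm]
    exact Measure.map_id
  have hc := measurable_cell N
  have hP2 : πs.map (fun q => (cell N q.1, q.2)) = π.map (fun q => (cell N q.1, q.2)) := by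
    rw [← hP, hπs, Measure.map_map (by fun_prop) hgm]; rfl
  have hcm : ∀ p : SigmaSp Ω × SigmaSp Ω, Measurable fun z : ℕ × ℝ => cellAvg N p.1 z.1 ω - e p.2 z.2 ω := fun p =>
    ((measurable_from_top (f := fun a : ℕ => cellAvg N p.1 a ω)).comp measurable_fst).sub (measurable_e_comp measurable_const measurable_snd ω)
  have hDN : ∀ p : (SigmaSp Ω × SigmaSp Ω) × (SigmaSp Ω × SigmaSp Ω), ∫ q, DN N ω p.1 q * DN N ω p.2 q ∂πs = ∫ q, DN N ω p.1 q * DN N ω p.2 q ∂π := by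
    intro p
    have h := congrArg (fun m => ∫ z, (cellAvg N p.1.1 z.1 ω - e p.1.2 z.2 ω) * (cellAvg N p.2.1 z.1 ω - e p.2.2 z.2 ω) ∂m) hP2
    have hmm : Measurable (fun z : ℕ × ℝ => (cellAvg N p.1.1 z.1 ω - e p.1.2 z.2 ω) * (cellAvg N p.2.1 z.1 ω - e p.2.2 z.2 ω)) :=
      (hcm p.1).mul (hcm p.2)
    have hcc : Measurable (fun q : ℝ × ℝ => (cell N q.1, q.2)) := by fun_prop
    rw [integral_map hcc.aemeasurable hmm.aestronglyMeasurable, integral_map hcc.aemeasurable hmm.aestronglyMeasurable] at h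
    exact h
  set δ : SigmaSp Ω → ℝ := fun f => ∫ x, |e f x ω - eN N f x ω| ∂lam01 with hδ
  have hδm : Measurable δ := meas_int_right (D := fun (σ : SigmaSp Ω) (x : ℝ) => |e σ x ω - eN N σ x ω|) (measurable_e_sub_eN N ω)
  have hδ1 : ∀ f, |δ f| ≤ 1 := fun f => abs_integral_le fun x => by rw [abs_abs]; exact abs_e_sub_eN _ _ _ _
  have hK : ∀ p, |Kq W πs p - Kq W π p| ≤ 2 * (δ p.1.1 + δ p.2.1) := by
    intro p
    have a1 := Kq_near N ω πs hπs1 p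
    have a2 := Kq_near N ω π hπ p
    rw [hDN] at a1
    rw [abs_sub_comm] at a2
    have := abs_sub_le (Kq W πs p) (∫ q, DN N ω p.1 q * DN N ω p.2 q ∂π) (Kq W π p)
    linarith
  have hD := abs_Dq_le hW0 hW1
  have hKb : ∀ (π' : Measure (ℝ × ℝ)) [IsProbabilityMeasure π'] p, |Kq W π' p| ≤ 1 := fun π' _ p =>
    abs_integral_le fun q => abs_mul_le_one (hD _ _) (hD _ _)
  have hKm : ∀ (π' : Measure (ℝ × ℝ)) [IsProbabilityMeasure π'], Measurable (Kq W π') := fun π' _ => 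
    meas_int_right (D := fun (p : (SigmaSp Ω × SigmaSp Ω) × (SigmaSp Ω × SigmaSp Ω)) (q : ℝ × ℝ) => Dq W p.1 q * Dq W p.2 q)
      ((meas_Dq hW (by fun_prop) (by fun_prop)).mul (meas_Dq hW (by fun_prop) (by fun_prop)))
  have hKi : ∀ (π' : Measure (ℝ × ℝ)) [IsProbabilityMeasure π'], Integrable (fun p => (Kq W π' p) ^ 2) (γ.prod γ) := fun π' _ =>
    intB ((hKm π').pow_const 2) 1 fun p => by
      rw [abs_pow]; exact pow_le_one₀ (abs_nonneg _) (hKb π' p)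
  have hδ1i : Integrable (fun p : (SigmaSp Ω × SigmaSp Ω) × (SigmaSp Ω × SigmaSp Ω) => δ p.1.1) (γ.prod γ) :=
    intB (hδm.comp (by fun_prop)) 1 fun p => hδ1 _
  have hδ2i : Integrable (fun p : (SigmaSp Ω × SigmaSp Ω) × (SigmaSp Ω × SigmaSp Ω) => δ p.2.1) (γ.prod γ) :=
    intB (hδm.comp (by fun_prop)) 1 fun p => hδ1 _
  have hγ1 : Integrable (fun p : SigmaSp Ω × SigmaSp Ω => δ p.1) γ := intB (hδm.comp measurable_fst) 1 fun p => hδ1 _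
  have e1 : ∫ p, δ p.1 ∂γ = ∫ σ, δ σ ∂(γ.map Prod.fst) := by
    rw [integral_map measurable_fst.aemeasurable hδm.aestronglyMeasurable]
  have e2 : ∫ p : (SigmaSp Ω × SigmaSp Ω) × (SigmaSp Ω × SigmaSp Ω), δ p.1.1 ∂(γ.prod γ) = ∫ p, δ p.1 ∂γ := by
    rw [integral_prod _ hδ1i]; simp
  have e3 : ∫ p : (SigmaSp Ω × SigmaSp Ω) × (SigmaSp Ω × SigmaSp Ω), δ p.2.1 ∂(γ.prod γ) = ∫ p, δ p.1 ∂γ := by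
    rw [integral_prod _ hδ2i]; simp
  rw [Zq_eq hW hW0 hW1, Zq_eq hW hW0 hW1]
  have hfin : ∫ p, (Kq W πs p) ^ 2 ∂(γ.prod γ) ≤ ∫ p, ((Kq W π p) ^ 2 + 4 * (δ p.1.1 + δ p.2.1)) ∂(γ.prod γ) := by
    refine integral_mono (hKi πs) ((hKi π).add ((hδ1i.add hδ2i).const_mul 4)) fun p => ?_
    have b1 := hK p
    have b2 := abs_le.1 (hKb πs p)
    have b3 := abs_le.1 (hKb π p)
    have : (Kq W πs p) ^ 2 - (Kq W π p) ^ 2 ≤ 2 * |Kq W πs p - Kq W π p| := by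
      have : (Kq W πs p) ^ 2 - (Kq W π p) ^ 2 = (Kq W πs p + Kq W π p) * (Kq W πs p - Kq W π p) := by ring
      rw [this]
      refine (le_abs_self _).trans ?_
      rw [abs_mul]
      refine mul_le_mul_of_nonneg_right ?_ (abs_nonneg _)
      rw [abs_le]; constructor <;> linarith
    linarith
  have hadd : ∫ p : (SigmaSp Ω × SigmaSp Ω) × (SigmaSp Ω × SigmaSp Ω), (δ p.1.1 + δ p.2.1) ∂(γ.prod γ) = _ := integral_add hδ1i hδ2i
  have hi4 : Integrable (fun p : (SigmaSp Ω × SigmaSp Ω) × (SigmaSp Ω × SigmaSp Ω) => 4 * (δ p.1.1 + δ p.2.1)) (γ.prod γ) :=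
    (hδ1i.add hδ2i).const_mul 4
  rw [integral_add (hKi π) hi4, integral_const_mul, hadd, e2, e3, e1] at hfin
  have := hN ω
  linarith

lemma Dk_int {s : ℝ → ℝ} (hs : Measurable s) (ω : Ω) (γ : Measure (SigmaSp Ω × SigmaSp Ω)) (B : Set (SigmaSp Ω × SigmaSp Ω)) {U : Set ℝ} (hU : MeasurableSet U) :
    ∫ p in B, (∫ x in U, Dk s ω p x ∂lam01) ∂γ =
      ∫ p in B, ∫ q in Prod.fst ⁻¹' U, Dq (fun (σ : SigmaSp Ω) x => e σ x ω) p q ∂(lam01.map fun x => (x, s x)) ∂γ := by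
  congr 1
  funext p
  have hm : Measurable fun x : ℝ => (x, s x) := by fun_prop
  have hDm : Measurable (Dq (fun (σ : SigmaSp Ω) x => e σ x ω) p) := by
    have := meas_Dq (W := fun (σ : SigmaSp Ω) x => e σ x ω) (measurable_e_apply ω) (f := fun q : ℝ × ℝ => p) (g := id) measurable_const measurable_id
    simpa using this
  rw [setIntegral_map (measurable_fst hU) hDm.aestronglyMeasurable hm.aemeasurable]
  rfl



section
variable {R C U T : Type*} [MeasurableSpace R] [MeasurableSpace C] [Fintype U] [Fintype T]
  {ρ : Measure R} {κ : Measure C} [IsProbabilityMeasure ρ] [IsProbabilityMeasure κ]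

lemma mom_sum_row {a : U → R → ℝ} {φ : T → C → ℝ} (ha : FP a) (hφ : FP φ)
    {W : R → C → ℝ} (hW : Measurable (fun z : R × C => W z.1 z.2)) (hWb : ∀ r c, |W r c| ≤ 1) (u : U) :
    ∑ i : U × (T × T), mom ρ κ a φ W ((u, i.1), i.2, ((false, false), (false, false))) = mass ρ a u := by
  unfold mom
  rw [← integral_finsetSum _ fun i _ => intB (measurable_momf ha hφ hW _) 1 (momf_bound ha hφ hWb _)]
  have : ∀ z : (R × R) × (C × C), ∑ i : U × (T × T), momf a φ W ((u, i.1), i.2, ((false, false), (false, false))) z = a u z.1.1 := by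
    intro z
    rw [Fintype.sum_prod_type]
    simp only [Fintype.sum_prod_type, momf, wb, mul_one, Bool.false_eq_true, if_false]
    simp only [← Finset.mul_sum, ← Finset.sum_mul, hφ.sum_one, ha.sum_one, mul_one]
  simp only [this]
  unfold mass
  have h1 := integral_fun_fst (μ := ρ.prod ρ) (ν := κ.prod κ) (fun w : R × R => a u w.1)
  have h2 := integral_fun_fst (μ := ρ) (ν := ρ) (fun w : R => a u w)
  rw [h1, h2]
  simp

lemma mom_sum_col {a : U → R → ℝ} {φ : T → C → ℝ} (ha : FP a) (hφ : FP φ)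
    {W : R → C → ℝ} (hW : Measurable (fun z : R × C => W z.1 z.2)) (hWb : ∀ r c, |W r c| ≤ 1) (t : T) :
    ∑ i : (U × U) × T, mom ρ κ a φ W (i.1, (t, i.2), ((false, false), (false, false))) = mass κ φ t := by
  unfold mom
  rw [← integral_finsetSum _ fun i _ => intB (measurable_momf ha hφ hW _) 1 (momf_bound ha hφ hWb _)]
  have : ∀ z : (R × R) × (C × C), ∑ i : (U × U) × T, momf a φ W (i.1, (t, i.2), ((false, false), (false, false))) z = φ t z.2.1 := by
    intro z
    rw [Fintype.sum_prod_type]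
    simp only [Fintype.sum_prod_type, momf, wb, mul_one, Bool.false_eq_true, if_false]
    simp only [← Finset.mul_sum, ← Finset.sum_mul, hφ.sum_one, ha.sum_one, mul_one, one_mul]
  simp only [this]
  unfold mass
  have h1 := integral_fun_snd (μ := ρ.prod ρ) (ν := κ.prod κ) (fun w : C × C => φ t w.1)
  have h2 := integral_fun_fst (μ := κ) (ν := κ) (fun w : C => φ t w)
  rw [h1, h2]
  simp

lemma Z_triangle {W : R → C → ℝ} (hW : Measurable (fun z : R × C => W z.1 z.2))
    (hW0 : ∀ r c, 0 ≤ W r c) (hW1 : ∀ r c, W r c ≤ 1)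
    (γ : Measure (R × R)) (π : Measure (C × C)) [IsProbabilityMeasure γ] [IsProbabilityMeasure π]
    (hγ : γ.map Prod.fst = ρ) (hπ : π.map Prod.snd = κ) :
    Zq W γ π ≤ ∫ σ, ∫ q, |W σ q.1 - W σ q.2| ∂π ∂ρ + ∫ x, ∫ p, |W p.1 x - W p.2 x| ∂γ ∂κ := by
  refine (Zq_le_L1 hW hW0 hW1 γ π).trans ?_
  have hb : ∀ r c r' c', |(|W r c - W r' c'|)| ≤ 1 := fun r c r' c' => by
    rw [abs_abs]; exact abs_sub_le_one (hW0 _ _) (hW1 _ _) (hW0 _ _) (hW1 _ _)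
  have m1 : Measurable fun z : R × (C × C) => |W z.1 z.2.1 - W z.1 z.2.2| :=
    ((meas_W hW (by fun_prop) (by fun_prop)).sub (meas_W hW (by fun_prop) (by fun_prop))).abs
  have m2 : Measurable fun z : C × (R × R) => |W z.2.1 z.1 - W z.2.2 z.1| :=
    ((meas_W hW (by fun_prop) (by fun_prop)).sub (meas_W hW (by fun_prop) (by fun_prop))).abs
  have n1 : Measurable fun r => ∫ q, |W r q.1 - W r q.2| ∂π :=
    meas_int_right (D := fun (r : R) (q : C × C) => |W r q.1 - W r q.2|) m1
  have n2 : Measurable fun x => ∫ p, |W p.1 x - W p.2 x| ∂γ :=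
    meas_int_right (D := fun (x : C) (p : R × R) => |W p.1 x - W p.2 x|) m2
  have k1 : Measurable fun z : (R × R) × (C × C) => |W z.1.1 z.2.1 - W z.1.1 z.2.2| :=
    ((meas_W hW (by fun_prop) (by fun_prop)).sub (meas_W hW (by fun_prop) (by fun_prop))).abs
  have k2 : Measurable fun z : (R × R) × (C × C) => |W z.1.1 z.2.2 - W z.1.2 z.2.2| :=
    ((meas_W hW (by fun_prop) (by fun_prop)).sub (meas_W hW (by fun_prop) (by fun_prop))).abs
  have k3 : Measurable fun z : (R × R) × (C × C) => |Dq W z.1 z.2| := (measurable_Dq hW).abs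
  have i1 : Integrable (fun z : (R × R) × (C × C) => |W z.1.1 z.2.1 - W z.1.1 z.2.2|) (γ.prod π) := intB k1 1 fun z => hb _ _ _ _
  have i2 : Integrable (fun z : (R × R) × (C × C) => |W z.1.1 z.2.2 - W z.1.2 z.2.2|) (γ.prod π) := intB k2 1 fun z => hb _ _ _ _
  have i3 : Integrable (fun z : (R × R) × (C × C) => |Dq W z.1 z.2|) (γ.prod π) := intB k3 1 fun z => hb _ _ _ _
  have e1 : ∫ σ, ∫ q, |W σ q.1 - W σ q.2| ∂π ∂ρ = ∫ z, |W z.1.1 z.2.1 - W z.1.1 z.2.2| ∂(γ.prod π) := by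
    rw [integral_prod _ i1, ← hγ, integral_map measurable_fst.aemeasurable n1.aestronglyMeasurable]
  have e2 : ∫ x, ∫ p, |W p.1 x - W p.2 x| ∂γ ∂κ = ∫ z, |W z.1.1 z.2.2 - W z.1.2 z.2.2| ∂(γ.prod π) := by
    rw [integral_prod_symm _ i2, ← hπ, integral_map measurable_snd.aemeasurable n2.aestronglyMeasurable]
  have e3 : ∫ p, ∫ q, |Dq W p q| ∂π ∂γ = ∫ z, |Dq W z.1 z.2| ∂(γ.prod π) := by
    rw [integral_prod _ i3]
  rw [e1, e2, e3, ← integral_add i1 i2]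
  refine integral_mono i3 (i1.add i2) fun z => ?_
  exact abs_sub_le _ _ _

end

lemma good_k (μ : PM Ω) {δ : ℝ} (hδ : 0 < δ) : ∃ (k : ℕ) (G : Set (Fin k → SigmaSp Ω × ℝ)),
    (Measure.pi fun _ : Fin k => (μ : Measure (SigmaSp Ω)).prod lam01) G ≠ 0 ∧
    ∀ θ ∈ G, ∀ ω, Zq (fun (σ : SigmaSp Ω) x => e σ x ω) (cpH (μ : Measure (SigmaSp Ω)) μ (aU θ) (aU θ)) (cpH lam01 lam01 (phT θ) (phT θ)) ≤ δ := by
  classical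
  set ε := δ / (2 * (Fintype.card Ω + 1)) with hε
  have hε0 : 0 < ε := by positivity
  choose kc hkc using fun ω => reg KW_e ω (appr_col (μ : Measure (SigmaSp Ω)) ω) hε0
  choose kr hkr using fun ω => reg KW_e_swap ω (appr_row (μ : Measure (SigmaSp Ω)) ω) hε0
  set k := ∑ ω, (kc ω + kr ω) with hk
  have hle : ∀ ω, kc ω + kr ω ≤ k := fun ω => Finset.single_le_sum (f := fun ω => kc ω + kr ω) (fun _ _ => Nat.zero_le _) (Finset.mem_univ ω)
  choose Ec hEcm hEcb hEci hEc using fun ω => hkc ω k (by have := hle ω; omega)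
  choose Er hErm hErb hEri hEr using fun ω => hkr ω k (by have := hle ω; omega)
  have mp1 : MeasurePreserving (fun (θ : Fin k → SigmaSp Ω × ℝ) i => (θ i).1)
      (Measure.pi fun _ : Fin k => (μ : Measure (SigmaSp Ω)).prod lam01) (Measure.pi fun _ => (μ : Measure (SigmaSp Ω))) :=
    measurePreserving_pi _ _ fun _ => measurePreserving_fst
  have mp2 : MeasurePreserving (fun (θ : Fin k → SigmaSp Ω × ℝ) i => (θ i).2)
      (Measure.pi fun _ : Fin k => (μ : Measure (SigmaSp Ω)).prod lam01) (Measure.pi fun _ => lam01) :=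
    measurePreserving_pi _ _ fun _ => measurePreserving_snd
  set P := Measure.pi fun _ : Fin k => (μ : Measure (SigmaSp Ω)).prod lam01 with hP
  have ic : ∀ ω, Integrable (fun θ : Fin k → SigmaSp Ω × ℝ => Ec ω (fun i => (θ i).1)) P := fun ω => by
    obtain ⟨C, hC⟩ := hEcb ω
    exact intB ((hEcm ω).comp mp1.measurable) C fun θ => hC _
  have ir : ∀ ω, Integrable (fun θ : Fin k → SigmaSp Ω × ℝ => Er ω (fun i => (θ i).2)) P := fun ω => by
    obtain ⟨C, hC⟩ := hErb ω
    exact intB ((hErm ω).comp mp2.measurable) C fun θ => hC _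
  have jc : ∀ ω, ∫ θ, Ec ω (fun i => (θ i).1) ∂P ≤ ε := fun ω => by
    refine le_trans (le_of_eq ?_) (hEci ω)
    rw [← mp1.map_eq, integral_map mp1.measurable.aemeasurable (hEcm ω).aestronglyMeasurable]
  have jr : ∀ ω, ∫ θ, Er ω (fun i => (θ i).2) ∂P ≤ ε := fun ω => by
    refine le_trans (le_of_eq ?_) (hEri ω)
    rw [← mp2.map_eq, integral_map mp2.measurable.aemeasurable (hErm ω).aestronglyMeasurable]
  have ic0 : ∀ ω ρ, 0 ≤ Ec ω ρ := fun ω ρ => le_trans (integral_nonneg fun _ => integral_nonneg fun _ => abs_nonneg _) (hEc ω ρ)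
  have ir0 : ∀ ω ρ, 0 ≤ Er ω ρ := fun ω ρ => le_trans (integral_nonneg fun _ => integral_nonneg fun _ => abs_nonneg _) (hEr ω ρ)
  set Tt : (Fin k → SigmaSp Ω × ℝ) → ℝ := fun θ => ∑ ω, (Ec ω (fun i => (θ i).1) + Er ω (fun i => (θ i).2)) with hT
  have hTi : Integrable Tt P := integrable_finsetSum _ fun ω _ => (ic ω).add (ir ω)
  have hTint : ∫ θ, Tt θ ∂P ≤ δ := by
    have hadd : ∀ ω, Integrable (fun θ : Fin k → SigmaSp Ω × ℝ => Ec ω (fun i => (θ i).1) + Er ω (fun i => (θ i).2)) P :=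
      fun ω => (ic ω).add (ir ω)
    rw [hT]
    beta_reduce
    rw [integral_finsetSum _ fun ω _ => hadd ω]
    calc _ ≤ ∑ ω : Ω, (ε + ε) := Finset.sum_le_sum fun ω _ => by
          have := integral_add (ic ω) (ir ω)
          rw [this]; exact add_le_add (jc ω) (jr ω)
      _ = Fintype.card Ω * (ε + ε) := by simp; ring
      _ ≤ (Fintype.card Ω + 1) * (ε + ε) := by nlinarith
      _ = δ := by
          have hne : (Fintype.card Ω : ℝ) + 1 ≠ 0 := by positivity
          rw [hε]; field_simp; ring
  refine ⟨k, {θ | Tt θ ≤ ∫ θ, Tt θ ∂P}, (measure_le_integral_pos hTi).ne', fun θ hθ ω => ?_⟩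
  have hcr : 0 < cc (mass (μ : Measure (SigmaSp Ω)) (aU θ)) (mass (μ : Measure (SigmaSp Ω)) (aU θ)) := by rw [cc_self]; norm_num
  have hcc : 0 < cc (mass lam01 (phT θ)) (mass lam01 (phT θ)) := by rw [cc_self]; norm_num
  have pr := cpH_prob (μ : Measure (SigmaSp Ω)) μ (FP_aU θ) (FP_aU θ) hcr
  have pc := cpH_prob lam01 lam01 (FP_phT θ) (FP_phT θ) hcc
  have hz := Z_triangle (W := fun (σ : SigmaSp Ω) x => e σ x ω) (measurable_e_apply ω) (fun σ x => e_nonneg σ x ω) (fun σ x => e_le_one σ x ω)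
    _ _ (cpH_fst (μ : Measure (SigmaSp Ω)) μ (FP_aU θ) (FP_aU θ) hcr) (cpH_snd lam01 lam01 (FP_phT θ) (FP_phT θ) hcc)
  have h1 := hEc ω (fun i => (θ i).1)
  have h2 := hEr ω (fun i => (θ i).2)
  have h3 : Ec ω (fun i => (θ i).1) + Er ω (fun i => (θ i).2) ≤ Tt θ :=
    Finset.single_le_sum (f := fun ω => Ec ω (fun i => (θ i).1) + Er ω (fun i => (θ i).2)) (fun ω _ => add_nonneg (ic0 _ _) (ir0 _ _)) (Finset.mem_univ ω)
  have h4 : Tt θ ≤ ∫ θ, Tt θ ∂P := hθ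
  calc _ ≤ _ := hz
    _ ≤ Ec ω (fun i => (θ i).1) + Er ω (fun i => (θ i).2) := add_le_add h1 h2
    _ ≤ δ := by linarith

lemma abs_le_of_pow4 {y c : ℝ} (hc : 0 ≤ c) (h : y ^ 4 ≤ c ^ 4) : |y| ≤ c := by
  have h2 : |y| ^ 4 ≤ c ^ 4 := by
    rwa [← abs_pow, abs_of_nonneg (by positivity : (0:ℝ) ≤ y ^ 4)]
  exact le_of_pow_le_pow_left₀ (by norm_num) hc h2

lemma backward {μn : ℕ → PM Ω} {μ : PM Ω}
    (H : ∀ (k : ℕ) (a : Fin k → Fin k → Ω), Tendsto (fun n => arrayProb Ω (μn n) k a) atTop (𝓝 (arrayProb Ω μ k a))) :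
    Tendsto (fun n => cutd Ω (μn n) μ) atTop (𝓝 0) := by
  classical
  have hne : Nonempty (SigmaSp Ω) := by
    by_contra h
    rw [not_nonempty_iff] at h
    have h1 : (μ : Measure (SigmaSp Ω)) univ = 1 := measure_univ
    rw [univ_eq_empty_iff.2 h, measure_empty] at h1
    exact zero_ne_one h1
  obtain ⟨f0⟩ := hne
  obtain ⟨ω0⟩ := nonempty_of_SigmaSp f0
  rw [Metric.tendsto_nhds]
  intro ε hε
  set c := ε / (Fintype.card Ω + 1) with hc
  have hc0 : 0 < c := by positivity
  set δ := c ^ 4 with hδ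
  have hδ0 : 0 < δ := by positivity
  obtain ⟨k, G, hG, hGZ⟩ := good_k μ (δ := δ / 4) (by positivity)
  obtain ⟨θ, hθ, θn, hV⟩ := exists_samples H hG
  have hZself := hGZ θ hθ
  have hem : ∀ ω, Measurable (fun z : SigmaSp Ω × ℝ => e z.1 z.2 ω) := measurable_e_apply
  have heb : ∀ (ω : Ω) (σ : SigmaSp Ω) (x : ℝ), |e σ x ω| ≤ 1 := fun ω σ x => KW_e.abs_le σ x ω
  have hmr : ∀ u, Tendsto (fun n => mass (μn n : Measure (SigmaSp Ω)) (aU (θn n)) u) atTop (𝓝 (mass (μ : Measure (SigmaSp Ω)) (aU θ) u)) := by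
    intro u
    have h := tendsto_finsetSum (Finset.univ : Finset ((Fin k → Ω) × ((Fin k → Ω) × (Fin k → Ω))))
      fun i _ => hV (ω0, ((u, i.1), i.2, ((false, false), (false, false))))
    simp only [VV] at h
    simp only [mom_sum_row (FP_aU _) (FP_phT _) (hem ω0) (heb ω0)] at h
    exact h
  have hmc : ∀ t, Tendsto (fun n => mass lam01 (phT (θn n)) t) atTop (𝓝 (mass lam01 (phT θ) t)) := by
    intro t
    have h := tendsto_finsetSum (Finset.univ : Finset (((Fin k → Ω) × (Fin k → Ω)) × (Fin k → Ω)))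
      fun i _ => hV (ω0, (i.1, (t, i.2), ((false, false), (false, false))))
    simp only [VV] at h
    simp only [mom_sum_col (FP_aU _) (FP_phT _) (hem ω0) (heb ω0)] at h
    exact h
  have hcr : ∀ᶠ n in atTop, 0 < cc (mass (μn n : Measure (SigmaSp Ω)) (aU (θn n))) (mass (μ : Measure (SigmaSp Ω)) (aU θ)) := by
    have := cc_tendsto hmr
    rw [cc_self] at this
    exact this.eventually (lt_mem_nhds one_pos)
  have hcc : ∀ᶠ n in atTop, 0 < cc (mass lam01 (phT (θn n))) (mass lam01 (phT θ)) := by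
    have := cc_tendsto hmc
    rw [cc_self] at this
    exact this.eventually (lt_mem_nhds one_pos)
  have hcr0 : 0 < cc (mass (μ : Measure (SigmaSp Ω)) (aU θ)) (mass (μ : Measure (SigmaSp Ω)) (aU θ)) := by rw [cc_self]; norm_num
  have hcc0 : 0 < cc (mass lam01 (phT θ)) (mass lam01 (phT θ)) := by rw [cc_self]; norm_num
  have hZ : ∀ ω, ∀ᶠ n in atTop, Zq (fun (σ : SigmaSp Ω) x => e σ x ω) (cpH (μn n : Measure (SigmaSp Ω)) μ (aU (θn n)) (aU θ))
      (cpH lam01 lam01 (phT (θn n)) (phT θ)) < δ / 2 := by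
    intro ω
    have hlim : Tendsto (fun n => ∑ j : JIdx (Fin k → Ω) (Fin k → Ω),
        coef (HH (mass (μn n : Measure (SigmaSp Ω)) (aU (θn n))) (mass (μ : Measure (SigmaSp Ω)) (aU θ)))
          (HH (mass lam01 (phT (θn n))) (mass lam01 (phT θ))) j * (VV (μn n) (θn n) (ω, pk1 j) * VV μ θ (ω, pk2 j))) atTop
        (𝓝 (Zq (fun (σ : SigmaSp Ω) x => e σ x ω) (cpH (μ : Measure (SigmaSp Ω)) μ (aU θ) (aU θ)) (cpH lam01 lam01 (phT θ) (phT θ)))) := by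
      unfold cpH
      rw [Zq_expand (FP_aU θ) (FP_aU θ) (FP_phT θ) (FP_phT θ) (hem ω) (heb ω) (HH_nonneg hcr0) (HH_nonneg hcc0)]
      refine tendsto_finsetSum _ fun j _ => Tendsto.mul ?_ ((hV (ω, pk1 j)).mul_const _)
      unfold coef
      refine Tendsto.mul_const _ ?_
      exact ((HH_tendsto hmr _ _).mul (HH_tendsto hmr _ _)).mul ((HH_tendsto hmc _ _).mul (HH_tendsto hmc _ _))
    have hlt := hlim.eventually (gt_mem_nhds (lt_of_le_of_lt (hZself ω) (by linarith : δ / 4 < δ / 2)))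
    filter_upwards [hlt, hcr, hcc] with n h1 h2 h3
    unfold cpH
    rw [Zq_expand (FP_aU (θn n)) (FP_aU θ) (FP_phT (θn n)) (FP_phT θ) (hem ω) (heb ω) (HH_nonneg h2) (HH_nonneg h3)]
    exact h1
  filter_upwards [eventually_all.2 hZ, hcr, hcc] with n h1 h2 h3
  set γ := cpH (μn n : Measure (SigmaSp Ω)) μ (aU (θn n)) (aU θ) with hγ
  set π := cpH lam01 lam01 (phT (θn n)) (phT θ) with hπ
  have pγ : IsProbabilityMeasure γ := cpH_prob _ _ (FP_aU (θn n)) (FP_aU θ) h2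
  have cγ : IsCoupling Ω (μn n) μ γ := ⟨cpH_fst _ _ (FP_aU (θn n)) (FP_aU θ) h2, cpH_snd _ _ (FP_aU (θn n)) (FP_aU θ) h2⟩
  obtain ⟨s, hs, hsZ⟩ := exists_s γ π (cpH_fst _ _ (FP_phT (θn n)) (FP_phT θ) h3) (cpH_snd _ _ (FP_phT (θn n)) (FP_phT θ) h3)
    (η := δ / 2) (by positivity)
  have hsm := hs.1.measurable
  have hgm : Measurable fun x : ℝ => (x, s x) := by fun_prop
  have pπ : IsProbabilityMeasure (lam01.map fun x => (x, s x)) := Measure.isProbabilityMeasure_map hgm.aemeasurable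
  rw [Real.dist_eq, sub_zero, abs_of_nonneg (cutd_nonneg _ _)]
  refine (cutd_le cγ hs).trans_lt ?_
  have hle : cutPair Ω γ s ≤ Fintype.card Ω * c / 2 := by
    refine cutPair_le hs.1 γ (by positivity) fun B V hB hV' => ?_
    unfold tv
    gcongr
    calc _ ≤ ∑ ω : Ω, c := Finset.sum_le_sum fun ω _ => ?_
      _ = _ := by simp
    beta_reduce
    rw [Dk_int hsm ω γ B hV']
    have h4 := cut_le_Z (W := fun (σ : SigmaSp Ω) x => e σ x ω) (hem ω) (fun σ x => e_nonneg σ x ω) (fun σ x => e_le_one σ x ω) γ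
      (lam01.map fun x => (x, s x)) hB (measurable_fst hV' : MeasurableSet (Prod.fst ⁻¹' V))
    have h5 := hsZ ω
    have h6 := h1 ω
    refine abs_le_of_pow4 hc0.le ?_
    linarith
  have : Fintype.card Ω * c / 2 < ε := by
    have h7 : (Fintype.card Ω + 1) * c = ε := by rw [hc]; field_simp
    have : (0:ℝ) ≤ Fintype.card Ω := by positivity
    nlinarith
  linarith


/-- Corollary: Aldous–Hoover correspondence. A sequence `(μ̄_n)` converges to
`μ̄` in `𝓜_Ω` (i.e. the representatives converge in the weak cut metric `cut□`) iff the
associated random arrays converge in distribution, i.e. all finite-dimensional cylinder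
probabilities converge. -/
theorem tendsto_weak_cut_iff_arrays_converge
    (μn : ℕ → PM Ω) (μ : PM Ω) :
    Tendsto (fun n => cutd Ω (μn n) μ) atTop (nhds 0) ↔
      (∀ (kk : ℕ) (a : Fin kk → Fin kk → Ω),
        Tendsto (fun n => arrayProb Ω (μn n) kk a) atTop (nhds (arrayProb Ω μ kk a))) := by
  exact ⟨fun h kk a => forward μn μ h kk a, fun H => backward H⟩

end Paper
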